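/- arXiv:2408.11034 — 6 statements merged into one kernel-verified Lean document; each statement's English description precedes it below -/
import Mathlib

section
/- There exists an absolute constant c > 0 such that for every n ≥ 1 and all unit vectors v_1, …, v_n ∈ ℝ², the probability over independent Rademacher random variables ε_1, …, ε_n that ‖ε_1 v_1 + ⋯ + ε_n v_n‖ ≤ √2 is at least c/n. -/
/-!
Two facts drive the proof.

*Collisions.* Let `x i`, `y i` (`i < m`) be unit vectors with `∑ ‖x i - y i‖ ≤ D`. The sum
`X = ∑ ε i • x i` has second moment `m`, hence lies with probability at least `1 / 2` in a disc
covered by `O(m)` grid cells; two independent copies share a cell with probability of order at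
least `1 / m`, and replacing the `x i` of the second copy by the `y i` costs at most `D`
(`collision`). An even number of vectors on a curve of length `D` can be paired in this way by
sorting them along the curve (`exists_pairing`, `cluster`). So their signed sum has norm at most
`D + 1 / 100` with probability of order at least `1 / n`.

*Rounding.* If `z` lies in the zonotope `{∑ l i • v i : |l i| ≤ 1}` of unit vectors in the plane,
then some choice of signs gives `‖z + ∑ ε i • v i‖ ≤ √2`: at most two of the coefficients need to
be fractional, and independent rounding of those has variance at most `2`
(`exists_sign_of_ball`). Hence a bounded set `S` of vectors whose zonotope contains the ball of
radius `D + 1 / 100` can steer every such sum of the other vectors into the disc of radius `√2`,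
losing only the constant factor `2 ^ S.card` (`card_ge_of_ball`).

It remains to find `S` (`card_ge`). If there are 800 disjoint pairs of vectors with
`|cross a b| > 1 / 100`, their zonotope contains a ball of radius `8 > 2 π + 1 / 100`, and all other
vectors lie on the unit circle. Otherwise, all but at most 1600 vectors are, up to sign, on a short
arc around one of them, `u` (if there are no such vectors, `n` is bounded and a single good choice
of signs is enough). If some vector is transversal to `u`, the parallelogram of
these two is large enough for that arc. If none is, the whole family is on a short arc up to sign,
and pairing all vectors but at most one gives norm at most `1 + 21 / 100 < √2` directly.
-/

/-- The real sign `+1` or `-1` associated to a Boolean. -/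
noncomputable def rsign (b : Bool) : ℝ := if b then 1 else -1

/-- The signed sum `ε₁ v₁ + ⋯ + εₙ vₙ` determined by a vector of Booleans. -/
noncomputable def signedSum {d n : ℕ} (V : Fin n → EuclideanSpace ℝ (Fin d))
    (ε : Fin n → Bool) : EuclideanSpace ℝ (Fin d) :=
  ∑ i, rsign (ε i) • V i

/-- `probLe V r` is the probability, over independent uniform signs
`ε ∈ {−1,+1}ⁿ`, that `‖ε₁ v₁ + ⋯ + εₙ vₙ‖ ≤ r`. -/
noncomputable def probLe {d n : ℕ} (V : Fin n → EuclideanSpace ℝ (Fin d)) (r : ℝ) : ℝ :=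
  (Nat.card {ε : Fin n → Bool // ‖signedSum V ε‖ ≤ r} : ℝ) / 2 ^ n

/-! ### Signs and plane vectors -/

/-- The Euclidean plane. -/
abbrev E2 := EuclideanSpace ℝ (Fin 2)

lemma rsign_not (b : Bool) : rsign (!b) = -rsign b := by
  cases b <;> simp [rsign]

lemma rsign_beq (a b : Bool) : rsign (a == b) = rsign a * rsign b := by
  cases a <;> cases b <;> simp [rsign]

lemma beq_right_cancel : ∀ a b t : Bool, (a == t) = (b == t) → a = b := by decide

lemma abs_coord_le (z : E2) (j : Fin 2) : |z j| ≤ ‖z‖ := by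
  simpa using PiLp.norm_apply_le z j

lemma norm_sq_E2 (z : E2) : ‖z‖ ^ 2 = z 0 ^ 2 + z 1 ^ 2 := by
  simp [EuclideanSpace.norm_sq_eq, Fin.sum_univ_two]

/-- The signed area spanned by two plane vectors. -/
noncomputable def cross (a b : E2) : ℝ := a 0 * b 1 - a 1 * b 0

lemma inner_E2 (a b : E2) : inner ℝ a b = a 0 * b 0 + a 1 * b 1 := by
  simp [PiLp.inner_apply, Fin.sum_univ_two, mul_comm]

/-! ### Rounding points of a zonotope -/

/-- Coefficients in `[-1, 1]` can be rounded to signs at a squared cost of at most the variance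
`∑ (1 - l i ^ 2)` of the independent rounding with mean `l`. -/
lemma exists_round {κ : Type*} [DecidableEq κ] (v : κ → E2) (hv : ∀ i, ‖v i‖ = 1)
    (l : κ → ℝ) (hl : ∀ i, l i ∈ Set.Icc (-1 : ℝ) 1) (S : Finset κ) :
    ∃ ε : κ → Bool, ‖∑ i ∈ S, (rsign (ε i) - l i) • v i‖ ^ 2 ≤ ∑ i ∈ S, (1 - l i ^ 2) := by
  induction S using Finset.induction_on with
  | empty => exact ⟨fun _ => true, by simp⟩
  | insert a S ha ih =>
    obtain ⟨ε, hε⟩ := ih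
    set y := ∑ i ∈ S, (rsign (ε i) - l i) • v i with hy
    have key : ∀ b : Bool, ∑ i ∈ insert a S, (rsign (Function.update ε a b i) - l i) • v i
        = (rsign b - l a) • v a + y := by
      intro b
      rw [Finset.sum_insert ha, Function.update_self, hy]
      congr 1
      refine Finset.sum_congr rfl fun i hi => ?_
      rw [Function.update_of_ne (ne_of_mem_of_not_mem hi ha)]
    have hn : ∀ b : Bool, ‖(rsign b - l a) • v a + y‖ ^ 2
        = (rsign b - l a) ^ 2 + 2 * (rsign b - l a) * inner ℝ (v a) y + ‖y‖ ^ 2 := by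
      intro b
      rw [norm_add_sq_real, norm_smul, hv a, real_inner_smul_left, Real.norm_eq_abs, mul_one,
        sq_abs]
      ring
    obtain ⟨h1, h2⟩ := hl a
    rw [Finset.sum_insert ha]
    by_contra! hcon
    have ht := hcon (Function.update ε a true)
    have hf := hcon (Function.update ε a false)
    rw [key, hn] at ht hf
    simp only [rsign, if_true, Bool.false_eq_true, if_false] at ht hf
    -- averaging with weights `(1 ± l a) / 2` kills the linear term
    nlinarith [mul_nonneg (sub_nonneg.2 h2) (sub_nonneg.2 hf.le),
      mul_nonneg (sub_nonneg.2 h1) (sub_nonneg.2 ht.le)]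

/-- Every point of the zonotope spanned by `v` has coefficients of total variance at most `2`:
minimise the variance over all representations of the point. If three coefficients of the minimiser
were in the open interval, a linear relation between the three plane vectors would give a direction
along which the strictly concave variance still decreases. -/
lemma exists_few_fractional {κ : Type*} [Fintype κ] [DecidableEq κ] (v : κ → E2)
    (l : κ → ℝ) (hl : ∀ i, l i ∈ Set.Icc (-1 : ℝ) 1) :
    ∃ l' : κ → ℝ, (∀ i, l' i ∈ Set.Icc (-1 : ℝ) 1) ∧ ∑ i, l' i • v i = ∑ i, l i • v i ∧
      ∑ i, (1 - l' i ^ 2) ≤ 2 := by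
  set z := ∑ i, l i • v i with hz
  let P : Set (κ → ℝ) := (Set.univ.pi fun _ => Set.Icc (-1 : ℝ) 1) ∩ {l' | ∑ i, l' i • v i = z}
  have hP : IsCompact P := by
    refine (isCompact_univ_pi fun _ => isCompact_Icc).inter_right ?_
    exact isClosed_eq (by fun_prop) continuous_const
  obtain ⟨p, hpP, hmin⟩ := hP.exists_isMinOn (f := fun l' : κ → ℝ => ∑ i, (1 - l' i ^ 2))
    ⟨l, fun i _ => hl i, rfl⟩ (by fun_prop)
  have hpI : ∀ i, p i ∈ Set.Icc (-1 : ℝ) 1 := fun i => hpP.1 i trivial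
  refine ⟨p, hpI, hpP.2, ?_⟩
  let F : Finset κ := Finset.univ.filter fun i => p i ^ 2 < 1
  have hsq : ∀ i, p i ^ 2 ≤ 1 := fun i => by
    obtain ⟨h1, h2⟩ := hpI i; nlinarith
  have hF : F.card ≤ 2 := by
    by_contra! hcard
    have hdep : ¬ LinearIndepOn ℝ v (F : Set κ) := fun h => by
      have := h.encard_le_toENat_rank
      rw [Set.encard_coe_eq_coe_finsetCard, ← Module.finrank_eq_rank, finrank_euclideanSpace_fin]
        at this
      have h2 : F.card ≤ 2 := by simpa using this
      omega
    obtain ⟨g, hg0, i0, hi0, hne⟩ := not_linearIndepOn_finset_iff.1 hdep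
    let c : κ → ℝ := fun i => if i ∈ F then g i else 0
    have hc0 : ∑ i, c i • v i = 0 := by
      simp only [c, ite_smul, zero_smul]
      rw [Finset.sum_ite_mem, Finset.univ_inter]
      exact hg0
    have hcpos : 0 < ∑ i, c i ^ 2 := by
      refine Finset.sum_pos' (fun i _ => sq_nonneg _) ⟨i0, Finset.mem_univ _, ?_⟩
      simp only [c, if_pos hi0]
      positivity
    have hev : ∀ᶠ t : ℝ in nhds 0, ∀ i, p i + t * c i ∈ Set.Icc (-1 : ℝ) 1 := by
      refine Filter.eventually_all.2 fun i => ?_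
      by_cases hi : i ∈ F
      · have hlt : p i ^ 2 < 1 := (Finset.mem_filter.1 hi).2
        have hcont : ContinuousAt (fun t : ℝ => p i + t * c i) 0 := by fun_prop
        refine (hcont.eventually_mem (Ioo_mem_nhds (a := -1) (b := 1) ?_ ?_)).mono
          fun t ht => Set.Ioo_subset_Icc_self ht
        · simp only [zero_mul, add_zero]; nlinarith
        · simp only [zero_mul, add_zero]; nlinarith
      · simp only [c, if_neg hi, mul_zero, add_zero]
        exact Filter.Eventually.of_forall fun _ => hpI i
    have hdec : ∀ t : ℝ, (∀ i, p i + t * c i ∈ Set.Icc (-1 : ℝ) 1) →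
        2 * t * ∑ i, p i * c i + t ^ 2 * ∑ i, c i ^ 2 ≤ 0 := by
      intro t ht
      have hmem : (fun i => p i + t * c i) ∈ P := by
        refine ⟨fun i _ => ht i, ?_⟩
        change ∑ i, (p i + t * c i) • v i = z
        simp only [add_smul, mul_smul, Finset.sum_add_distrib, ← Finset.smul_sum, hc0, smul_zero,
          add_zero]
        exact hpP.2
      have hle : ∑ i, (1 - p i ^ 2) ≤ ∑ i, (1 - (p i + t * c i) ^ 2) := hmin hmem
      have hexp : ∑ i, (1 - (p i + t * c i) ^ 2) = ∑ i, (1 - p i ^ 2)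
          - (2 * t * ∑ i, p i * c i + t ^ 2 * ∑ i, c i ^ 2) := by
        simp only [Finset.mul_sum, ← Finset.sum_add_distrib, ← Finset.sum_sub_distrib]
        exact Finset.sum_congr rfl fun i _ => by ring
      linarith
    have hneg : ∀ᶠ t : ℝ in nhds 0, ∀ i, p i + (-t) * c i ∈ Set.Icc (-1 : ℝ) 1 := by
      have : Filter.Tendsto (fun t : ℝ => -t) (nhds 0) (nhds 0) := by
        simpa using (continuous_neg (G := ℝ)).tendsto 0
      exact this.eventually hev
    obtain ⟨t, ⟨ht1, ht2⟩, ht0⟩ :=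
      (((hev.and hneg).filter_mono nhdsWithin_le_nhds).and
        (self_mem_nhdsWithin : Set.Ioi (0 : ℝ) ∈ nhdsWithin 0 (Set.Ioi 0))).exists
    have ht0 : 0 < t := ht0
    have e1 := hdec t ht1
    have e2 := hdec (-t) ht2
    -- the linear terms of `e1` and `e2` cancel
    nlinarith [mul_pos (pow_pos ht0 2) hcpos]
  calc ∑ i, (1 - p i ^ 2) = ∑ i ∈ F, (1 - p i ^ 2) := by
        symm
        refine Finset.sum_subset (Finset.subset_univ _) fun i _ hi => ?_
        have : ¬ p i ^ 2 < 1 := fun h => hi (Finset.mem_filter.2 ⟨Finset.mem_univ _, h⟩)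
        linarith [hsq i]
    _ ≤ ∑ i ∈ F, 1 := Finset.sum_le_sum fun i _ => by nlinarith [sq_nonneg (p i)]
    _ ≤ 2 := by simpa using (by exact_mod_cast hF)

/-- The hypothesis `hρ` says that the support function of the zonotope of `v` is at least `ρ` in
every direction, so that the zonotope contains the ball of radius `ρ`. -/
lemma exists_sign_of_ball {κ : Type*} [Fintype κ] [DecidableEq κ] (v : κ → E2)
    (hv : ∀ i, ‖v i‖ = 1) (ρ : ℝ) (hρ : ∀ w : E2, ρ * ‖w‖ ≤ ∑ i, |inner ℝ w (v i)|)
    (z : E2) (hz : ‖z‖ ≤ ρ) : ∃ ε : κ → Bool, ‖z + ∑ i, rsign (ε i) • v i‖ ≤ Real.sqrt 2 := by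
  let C : Set (κ → ℝ) := Set.univ.pi fun _ => Set.Icc (-1 : ℝ) 1
  let L : (κ → ℝ) →ₗ[ℝ] E2 := Fintype.linearCombination ℝ v
  have hL : ∀ l, L l = ∑ i, l i • v i := fun l => Fintype.linearCombination_apply ℝ v l
  have hC : IsCompact C := isCompact_univ_pi fun _ => isCompact_Icc
  have hZc : IsClosed (L '' C) := (hC.image (LinearMap.continuous_of_finiteDimensional L)).isClosed
  have hZv : Convex ℝ (L '' C) :=
    (convex_pi fun _ _ => convex_Icc _ _).linear_image L
  have hmem : -z ∈ L '' C := by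
    by_contra hnot
    obtain ⟨f, u, hfu, hu⟩ := geometric_hahn_banach_closed_point hZv hZc hnot
    set w := (InnerProductSpace.toDual ℝ E2).symm f with hw
    have hf : ∀ y, f y = inner ℝ w y := fun y => by
      rw [hw, InnerProductSpace.toDual_symm_apply]
    -- the vertex of the cube maximising `f`
    let l : κ → ℝ := fun i => if 0 ≤ inner ℝ w (v i) then 1 else -1
    have hl : l ∈ C := fun i _ => by
      simp only [l]; split_ifs <;> simp
    have h1 := hfu _ ⟨l, hl, rfl⟩
    have h2 : f (L l) = ∑ i, |inner ℝ w (v i)| := by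
      rw [hL, map_sum]
      refine Finset.sum_congr rfl fun i _ => ?_
      rw [map_smul, hf, smul_eq_mul]
      simp only [l]
      split_ifs with h
      · rw [abs_of_nonneg h, one_mul]
      · rw [abs_of_neg (not_le.1 h)]; ring
    have h3 : f (-z) ≤ ρ * ‖w‖ := by
      rw [hf]
      calc inner ℝ w (-z) ≤ ‖w‖ * ‖-z‖ := real_inner_le_norm _ _
        _ ≤ ρ * ‖w‖ := by rw [norm_neg, mul_comm]; gcongr
    linarith [hρ w]
  obtain ⟨l, hl, hlz⟩ := hmem
  obtain ⟨p, hp, hpz, hp2⟩ := exists_few_fractional v l fun i => hl i trivial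
  obtain ⟨ε, hε⟩ := exists_round v hv p hp Finset.univ
  refine ⟨ε, Real.le_sqrt_of_sq_le (le_trans (le_of_eq ?_) (hε.trans hp2))⟩
  have : z = -∑ i, p i • v i := by rw [hpz, ← hL, hlz, neg_neg]
  rw [this]
  simp only [sub_smul, Finset.sum_sub_distrib]
  congr 2
  abel

/-! ### Collisions of signed sums -/

lemma sum_norm_sq (m : ℕ) (x : Fin m → E2) (hx : ∀ i, ‖x i‖ = 1) :
    ∑ ε : Fin m → Bool, ‖∑ i, rsign (ε i) • x i‖ ^ 2 = 2 ^ m * m := by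
  induction m with
  | zero => simp
  | succ m ih =>
    rw [← (Fin.consEquiv fun _ : Fin (m + 1) => Bool).sum_comp, Fintype.sum_prod_type_right]
    have : ∀ ε : Fin m → Bool,
        ∑ b : Bool, ‖∑ i, rsign ((Fin.consEquiv fun _ : Fin (m + 1) => Bool) (b, ε) i) • x i‖ ^ 2
          = 2 + 2 * ‖∑ i, rsign (ε i) • x i.succ‖ ^ 2 := by
      intro ε
      simp only [Fintype.sum_bool, Fin.consEquiv_apply, Fin.sum_univ_succ, Fin.cons_zero,
        Fin.cons_succ]
      simp only [rsign, if_true, Bool.false_eq_true, if_false, one_smul, neg_smul]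
      rw [norm_add_sq_real, norm_add_sq_real, norm_neg, inner_neg_left, hx]
      ring
    simp only [this]
    rw [Finset.sum_add_distrib, ← Finset.mul_sum, ih _ fun i => hx _]
    simp
    ring

/-- If the `y i` are a perturbation of the `x i` of total size `D`, a proportion of order at least
`1 / m` of the pairs of sign vectors makes the sum of all the signed `x i` and `y i` have norm at
most `D + 1 / 100`: two independent signed sums of the `x i` fall with such probability into the
same cell of a grid of mesh `1 / 200`. -/
lemma collision (m : ℕ) (x y : Fin m → E2) (hx : ∀ i, ‖x i‖ = 1) (D : ℝ)
    (hD : ∑ i, ‖x i - y i‖ ≤ D) :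
    (4 : ℝ) ^ m ≤ 4 * 10 ^ 6 * (m + 1) *
      ((Finset.univ.filter fun q : (Fin m → Bool) × (Fin m → Bool) =>
        ‖∑ i, rsign (q.1 i) • x i + ∑ i, rsign (q.2 i) • y i‖ ≤ D + 1 / 100).card : ℝ) := by
  classical
  set X : (Fin m → Bool) → E2 := fun ε => ∑ i, rsign (ε i) • x i with hX
  set A := Finset.univ.filter fun q : (Fin m → Bool) × (Fin m → Bool) =>
        ‖∑ i, rsign (q.1 i) • x i + ∑ i, rsign (q.2 i) • y i‖ ≤ D + 1 / 100 with hA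
  set s : ℝ := Real.sqrt (m + 1) with hs
  have hs2 : s ^ 2 = m + 1 := Real.sq_sqrt (by positivity)
  have hs1 : 1 ≤ s := Real.one_le_sqrt.2 (by linarith [(Nat.cast_nonneg m : (0 : ℝ) ≤ m)])
  -- Chebyshev: at least half of the sign vectors give a sum of norm `O(√m)`
  set G := Finset.univ.filter fun ε : Fin m → Bool => ‖X ε‖ ^ 2 ≤ 2 * (m + 1) with hG
  have hGcard : (2 : ℝ) ^ m / 2 ≤ G.card := by
    have h1 : (G.card : ℝ) + (Finset.univ.filter fun ε => ¬ ‖X ε‖ ^ 2 ≤ 2 * (m + 1)).card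
        = 2 ^ m := by
      have := Finset.card_filter_add_card_filter_not (s := (Finset.univ : Finset (Fin m → Bool)))
        (fun ε => ‖X ε‖ ^ 2 ≤ 2 * (m + 1))
      rw [Finset.card_univ, Fintype.card_fun, Fintype.card_bool, Fintype.card_fin] at this
      rw [← Nat.cast_add, hG, this]
      push_cast
      rfl
    have h2 : ((Finset.univ.filter fun ε => ¬ ‖X ε‖ ^ 2 ≤ 2 * (m + 1)).card : ℝ) * (2 * (m + 1))
        ≤ 2 ^ m * m := by
      rw [← sum_norm_sq m x hx, ← nsmul_eq_mul]
      refine (Finset.card_nsmul_le_sum _ (fun ε => ‖X ε‖ ^ 2) _ fun ε hε => ?_).trans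
        (Finset.sum_le_sum_of_subset_of_nonneg (Finset.subset_univ _) fun _ _ _ => sq_nonneg _)
      exact (not_le.1 (Finset.mem_filter.1 hε).2).le
    have h3 : (0 : ℝ) < 2 ^ m := by positivity
    have h4 : (0 : ℝ) < 2 * (m + 1) := by positivity
    by_contra! hcon
    nlinarith
  let cell : (Fin m → Bool) → ℤ × ℤ := fun ε => (⌊200 * X ε 0⌋, ⌊200 * X ε 1⌋)
  set L : ℤ := ⌈300 * s⌉ with hLdef
  have hL0 : 300 * s ≤ L := Int.le_ceil _
  have hL1 : (L : ℝ) < 300 * s + 1 := Int.ceil_lt_add_one _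
  have hLpos : 0 ≤ L := by
    have : (0 : ℝ) ≤ L := by linarith
    exact_mod_cast this
  let cells : Finset (ℤ × ℤ) := Finset.Icc (-L) L ×ˢ Finset.Icc (-L) L
  have hcells : (cells.card : ℝ) ≤ 10 ^ 6 * (m + 1) := by
    have h1 : ((Finset.Icc (-L) L).card : ℝ) = 2 * L + 1 := by
      rw [Int.card_Icc]
      have : (((L + 1 - -L).toNat : ℤ) : ℝ) = 2 * L + 1 := by
        rw [Int.toNat_of_nonneg (by omega)]; push_cast; ring
      exact_mod_cast this
    rw [Finset.card_product, Nat.cast_mul, h1, ← hs2]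
    have h2 : (0 : ℝ) ≤ L := by exact_mod_cast hLpos
    have h3 : 2 * (L : ℝ) + 1 ≤ 603 * s := by linarith
    nlinarith
  have hcoord : ∀ ε ∈ G, ∀ j, ⌊200 * X ε j⌋ ∈ Finset.Icc (-L) L := by
    intro ε hε j
    have h1 : ‖X ε‖ ^ 2 ≤ 2 * (m + 1) := (Finset.mem_filter.1 hε).2
    have h2 : ‖X ε‖ ≤ 3 / 2 * s := by
      rw [← hs2] at h1
      refine abs_le_of_sq_le_sq' ?_ (by positivity) |>.2
      nlinarith [sq_nonneg s]
    obtain ⟨h3, h4⟩ := abs_le.1 ((abs_coord_le (X ε) j).trans h2)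
    rw [Finset.mem_Icc]
    constructor
    · rw [Int.le_floor]; push_cast; linarith
    · have : (⌊200 * X ε j⌋ : ℝ) ≤ L := (Int.floor_le _).trans (by linarith)
      exact_mod_cast this
  have hmaps : ∀ ε ∈ G, cell ε ∈ cells := fun ε hε =>
    Finset.mem_product.2 ⟨hcoord ε hε 0, hcoord ε hε 1⟩
  set B := (G ×ˢ G).filter fun q => cell q.1 = cell q.2 with hB
  -- Cauchy–Schwarz over the cells
  have hcs : (G.card : ℝ) ^ 2 ≤ cells.card * B.card := by
    have h1 : G.card = ∑ c ∈ cells, (G.filter fun ε => cell ε = c).card :=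
      Finset.card_eq_sum_card_fiberwise hmaps
    have h2 : B.card = ∑ c ∈ cells, (G.filter fun ε => cell ε = c).card ^ 2 := by
      rw [Finset.card_eq_sum_card_fiberwise (f := fun q => cell q.1) (t := cells)]
      · refine Finset.sum_congr rfl fun c _ => ?_
        rw [sq, ← Finset.card_product]
        congr 1
        ext q
        simp only [hB, Finset.mem_filter, Finset.mem_product]
        constructor
        · rintro ⟨⟨⟨a, b⟩, c⟩, d⟩
          exact ⟨⟨a, d⟩, b, c ▸ d⟩
        · rintro ⟨⟨a, d⟩, b, e⟩
          exact ⟨⟨⟨a, b⟩, d.trans e.symm⟩, d⟩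
      · intro q hq
        exact hmaps _ (Finset.mem_product.1 (Finset.mem_filter.1 hq).1).1
    have h3 := sq_sum_le_card_mul_sum_sq (s := cells)
      (f := fun c => (G.filter fun ε => cell ε = c).card)
    rw [← h1, ← h2] at h3
    exact_mod_cast h3
  have hBA : B.card ≤ A.card := by
    refine Finset.card_le_card_of_injOn (fun q => (q.1, fun i => !(q.2 i))) ?_ ?_
    · intro q hq
      have hq2 : cell q.1 = cell q.2 := (Finset.mem_filter.1 hq).2
      have hc : ∀ j, ⌊200 * X q.1 j⌋ = ⌊200 * X q.2 j⌋ → |(X q.1 - X q.2) j| ≤ 1 / 200 := by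
        intro j hj
        have := Int.abs_sub_lt_one_of_floor_eq_floor hj
        rw [← mul_sub, abs_mul] at this
        rw [PiLp.sub_apply]
        norm_num at this
        linarith
      have h0 := hc 0 (congrArg Prod.fst hq2)
      have h1 := hc 1 (congrArg Prod.snd hq2)
      have hclose : ‖X q.1 - X q.2‖ ≤ 1 / 100 := by
        refine abs_le_of_sq_le_sq' ?_ (by norm_num) |>.2
        rw [norm_sq_E2]
        have e0 := sq_le_sq' (abs_le.1 h0).1 (abs_le.1 h0).2
        have e1 := sq_le_sq' (abs_le.1 h1).1 (abs_le.1 h1).2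
        norm_num at e0 e1 ⊢
        linarith
      have hsum : X q.1 + ∑ i, rsign (!(q.2 i)) • y i
          = (X q.1 - X q.2) + ∑ i, rsign (q.2 i) • (x i - y i) := by
        simp only [hX, rsign_not, neg_smul, smul_sub, Finset.sum_sub_distrib,
          Finset.sum_neg_distrib]
        abel
      have hrest : ‖∑ i, rsign (q.2 i) • (x i - y i)‖ ≤ D := by
        refine (norm_sum_le _ _).trans (le_trans (le_of_eq ?_) hD)
        refine Finset.sum_congr rfl fun i _ => ?_
        rw [norm_smul]
        cases q.2 i <;> simp [rsign]
      simp only [hA, Finset.coe_filter, Finset.mem_univ, true_and, Set.mem_ofPred_eq]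
      change ‖X q.1 + ∑ i, rsign (!(q.2 i)) • y i‖ ≤ _
      rw [hsum]
      exact (norm_add_le _ _).trans (by linarith)
    · rintro ⟨a, b⟩ _ ⟨a', b'⟩ _ h
      simp only [Prod.mk.injEq] at h
      refine Prod.ext h.1 (funext fun i => ?_)
      simpa using congrFun h.2 i
  have hBA' : (B.card : ℝ) ≤ A.card := by exact_mod_cast hBA
  have h4 : (4 : ℝ) ^ m = (2 ^ m) ^ 2 := by rw [← pow_mul, mul_comm, pow_mul]; norm_num
  have h5 : (2 : ℝ) ^ m ≤ 2 * G.card := by linarith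
  have h6 : ((2 : ℝ) ^ m) ^ 2 ≤ (2 * G.card) ^ 2 := by gcongr
  calc (4 : ℝ) ^ m ≤ 4 * (G.card : ℝ) ^ 2 := by rw [h4]; linarith
    _ ≤ 4 * ((10 ^ 6 * (m + 1)) * A.card) := by
        gcongr
        exact hcs.trans (by gcongr)
    _ = _ := by ring

/-- Pairing neighbours in sorted order makes the total gap at most the length of the interval. -/
lemma exists_pairing {κ : Type*} [Fintype κ] (m : ℕ) (hκ : Fintype.card κ = m * 2) (θ : κ → ℝ)
    (a : ℝ) (ha : 0 ≤ a) (hθ : ∀ i, |θ i| ≤ a) :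
    ∃ e : Fin m × Fin 2 ≃ κ, ∑ i, |θ (e (i, 0)) - θ (e (i, 1))| ≤ 2 * a := by
  let e0 : Fin (m * 2) ≃ κ := (Fintype.equivFinOfCardEq hκ).symm
  let σ := Tuple.sort (θ ∘ e0)
  have hmono : Monotone ((θ ∘ e0) ∘ σ) := Tuple.monotone_sort _
  set f := (θ ∘ e0) ∘ σ with hf
  refine ⟨finProdFinEquiv.trans (σ.trans e0), ?_⟩
  -- extend `f` to a monotone function on `ℕ`, constant beyond the last index
  let g : ℕ → ℝ := fun k => if h : k < m * 2 then f ⟨k, h⟩ else a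
  have hga : ∀ k, |g k| ≤ a := fun k => by
    simp only [g]; split_ifs
    · exact hθ _
    · rw [abs_of_nonneg ha]
  have hg : Monotone g := by
    intro k l hkl
    simp only [g]
    split_ifs with h1 h2 h2
    · exact hmono hkl
    · exact (abs_le.1 (hθ _)).2
    · omega
    · exact le_rfl
  have h1 : ∀ i : Fin m, |θ ((finProdFinEquiv.trans (σ.trans e0)) (i, 0))
      - θ ((finProdFinEquiv.trans (σ.trans e0)) (i, 1))| ≤ g (2 * (i + 1)) - g (2 * i) := by
    intro i
    have e1 : θ ((finProdFinEquiv.trans (σ.trans e0)) (i, 0)) = g (2 * i) := by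
      have : 2 * (i : ℕ) < m * 2 := by omega
      simp only [g, dif_pos this, hf]
      simp [finProdFinEquiv]
    have e2 : θ ((finProdFinEquiv.trans (σ.trans e0)) (i, 1)) = g (2 * i + 1) := by
      have : 2 * (i : ℕ) + 1 < m * 2 := by omega
      simp only [g, dif_pos this, hf]
      simp [finProdFinEquiv, add_comm]
    rw [e1, e2, abs_sub_comm, abs_of_nonneg (sub_nonneg.2 (hg (by omega)))]
    linarith [hg (show 2 * (i : ℕ) + 1 ≤ 2 * (i + 1) by omega)]
  calc _ ≤ ∑ i : Fin m, (g (2 * (i + 1)) - g (2 * i)) := Finset.sum_le_sum fun i _ => h1 i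
    _ = g (2 * m) - g (2 * 0) := by
        rw [Fin.sum_univ_eq_sum_range (fun i => g (2 * (i + 1)) - g (2 * i)),
          Finset.sum_range_sub fun i => g (2 * i)]
    _ ≤ 2 * a := by
        linarith [(abs_le.1 (hga (2 * m))).2, (abs_le.1 (hga (2 * 0))).1]

/-- Small-ball bound for an even number of unit vectors which, after flipping by the signs `τ`, lie on
a curve of length `2 * a`: the numbers `θ i` stand for their arc-length parameters. -/
lemma cluster {κ : Type*} [Fintype κ] [DecidableEq κ] (m : ℕ) (hκ : Fintype.card κ = m * 2)
    (v : κ → E2) (hv : ∀ i, ‖v i‖ = 1) (τ : κ → Bool) (θ : κ → ℝ) (a : ℝ) (ha : 0 ≤ a)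
    (hθ : ∀ i, |θ i| ≤ a)
    (hlip : ∀ i j, ‖rsign (τ i) • v i - rsign (τ j) • v j‖ ≤ |θ i - θ j|) :
    (2 : ℝ) ^ (m * 2) ≤ 4 * 10 ^ 6 * (m + 1) *
      ((Finset.univ.filter fun ε : κ → Bool =>
        ‖∑ i, rsign (ε i) • v i‖ ≤ 2 * a + 1 / 100).card : ℝ) := by
  obtain ⟨e, he⟩ := exists_pairing m hκ θ a ha hθ
  have hu : ∀ i, ‖rsign (τ i) • v i‖ = 1 := fun i => by
    rw [norm_smul, hv]; cases τ i <;> simp [rsign]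
  have hcol := collision m (fun i => rsign (τ (e (i, 0))) • v (e (i, 0)))
    (fun i => rsign (τ (e (i, 1))) • v (e (i, 1))) (fun i => hu _) (2 * a)
    ((Finset.sum_le_sum fun i _ => hlip _ _).trans he)
  rw [mul_comm m 2, pow_mul, show (2 : ℝ) ^ 2 = 4 by norm_num]
  refine hcol.trans ?_
  gcongr
  refine Finset.card_le_card_of_injOn
    (fun q k => (if (e.symm k).2 = 0 then q.1 (e.symm k).1 else q.2 (e.symm k).1) == τ k) ?_ ?_
  · intro q hq
    simp only [Finset.coe_filter, Finset.mem_univ, true_and, Set.mem_ofPred_eq] at hq ⊢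
    convert hq using 2
    rw [← e.sum_comp, Fintype.sum_prod_type, ← Finset.sum_add_distrib]
    refine Finset.sum_congr rfl fun i _ => ?_
    simp [Fin.sum_univ_two, rsign_beq, mul_smul]
  · rintro ⟨p, q⟩ _ ⟨p', q'⟩ _ h
    refine Prod.ext (funext fun i => ?_) (funext fun i => ?_)
    · have := congrFun h (e (i, 0))
      simp only [Equiv.symm_apply_apply, if_true] at this
      exact beq_right_cancel _ _ _ this
    · have := congrFun h (e (i, 1))
      simp only [Equiv.symm_apply_apply, one_ne_zero, if_false] at this
      exact beq_right_cancel _ _ _ this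

/-! ### Steering with a bounded number of vectors -/

/-- If any vector of norm at most `2 * a + 1 / 100` can be brought into the ball of radius `R` by
adding a suitable signed sum over `S`, then the small-ball bound for the signed sum over the
complement of `S` passes to the whole family, at the cost of a factor `2 ^ S.card`. -/
lemma card_ge_of_steer {n : ℕ} (V : Fin n → E2) (hV : ∀ i, ‖V i‖ = 1) (S : Finset (Fin n))
    (K : ℕ) (hSK : S.card ≤ K) (hev : Even Sᶜ.card) (τ : Fin n → Bool) (θ : Fin n → ℝ) (a : ℝ)
    (ha : 0 ≤ a) (hθ : ∀ i ∉ S, |θ i| ≤ a)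
    (hlip : ∀ i ∉ S, ∀ j ∉ S, ‖rsign (τ i) • V i - rsign (τ j) • V j‖ ≤ |θ i - θ j|)
    (R : ℝ) (hsteer : ∀ z : E2, ‖z‖ ≤ 2 * a + 1 / 100 →
      ∃ η : {i // i ∈ S} → Bool, ‖z + ∑ i, rsign (η i) • V i‖ ≤ R) :
    (2 : ℝ) ^ n ≤ 2 ^ K * (4 * 10 ^ 6) * (n + 1) *
      (Nat.card {ε : Fin n → Bool // ‖signedSum V ε‖ ≤ R} : ℝ) := by
  classical
  obtain ⟨m, hm⟩ := hev
  have hcardT : Fintype.card {i // i ∉ S} = m * 2 := by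
    rw [Fintype.card_subtype_compl, Fintype.card_coe, ← Finset.card_compl, hm]; ring
  have hn : m * 2 + S.card = n := by
    have := Finset.card_compl_add_card S
    rw [Fintype.card_fin] at this
    omega
  have hcl := cluster m hcardT (fun i => V i) (fun i => hV i) (fun i => τ i) (fun i => θ i) a ha
    (fun i => hθ i i.2) (fun i j => hlip i i.2 j j.2)
  choose η hη using hsteer
  rw [Nat.card_eq_fintype_card, Fintype.card_subtype]
  set A := Finset.univ.filter fun ε : {i // i ∉ S} → Bool =>
    ‖∑ i, rsign (ε i) • V i‖ ≤ 2 * a + 1 / 100 with hA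
  set B := Finset.univ.filter fun ε : Fin n → Bool => ‖signedSum V ε‖ ≤ R with hB
  have hAB : A.card ≤ B.card := by
    refine Finset.card_le_card_of_injOn
      (fun ε i => if h : i ∈ S then
        (if hz : ‖∑ j, rsign (ε j) • V j‖ ≤ 2 * a + 1 / 100 then η _ hz ⟨i, h⟩ else true)
        else ε ⟨i, h⟩) ?_ ?_
    · intro ε hε
      simp only [hA, hB, Finset.coe_filter, Finset.mem_univ, true_and, Set.mem_ofPred_eq]
        at hε ⊢
      refine le_trans (le_of_eq ?_) (hη _ hε)
      rw [signedSum, ← Fintype.sum_subtype_add_sum_subtype (fun i => i ∈ S), add_comm]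
      congr 2
      · refine Fintype.sum_congr _ _ fun i => ?_
        rw [dif_neg i.2]
      · refine Finset.sum_congr (by congr!) fun i _ => ?_
        rw [dif_pos i.2, dif_pos hε]
    · intro ε _ ε' _ h
      funext i
      have := congrFun h i
      simpa only [dif_neg i.2] using this
  have hAB' : (A.card : ℝ) ≤ B.card := by exact_mod_cast hAB
  have hmn : (m : ℝ) ≤ n := by
    have : m ≤ n := by omega
    exact_mod_cast this
  have h2K : (2 : ℝ) ^ S.card ≤ 2 ^ K := pow_le_pow_right₀ (by norm_num) hSK
  calc (2 : ℝ) ^ n = 2 ^ S.card * 2 ^ (m * 2) := by rw [← pow_add, add_comm, hn]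
    _ ≤ 2 ^ K * (4 * 10 ^ 6 * (n + 1) * B.card) := by
        gcongr
        refine hcl.trans ?_
        gcongr
    _ = _ := by ring

lemma exists_even_superset {n : ℕ} (S : Finset (Fin n)) :
    ∃ S', S ⊆ S' ∧ S'.card ≤ S.card + 1 ∧ Even S'ᶜ.card := by
  rcases Nat.even_or_odd Sᶜ.card with h | h
  · exact ⟨S, subset_rfl, by omega, h⟩
  · obtain ⟨i, hi⟩ := Finset.card_pos.1 h.pos
    have hiS : i ∉ S := Finset.mem_compl.1 hi
    refine ⟨insert i S, Finset.subset_insert _ _, Finset.card_insert_le _ _, ?_⟩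
    have h1 := Finset.card_compl_add_card S
    have h2 := Finset.card_compl_add_card (insert i S)
    rw [Finset.card_insert_of_notMem hiS] at h2
    have h3 : Sᶜ.card = (insert i S)ᶜ.card + 1 := by omega
    rw [h3] at h
    exact (Nat.odd_add_one.1 h) |> Nat.not_odd_iff_even.1

/-- Steering is possible when the zonotope of `S` contains the ball of radius `2 * a + 1 / 100`.
An element is moved into `S` if needed to make the complement even, whence the `+ 1`. -/
lemma card_ge_of_ball {n : ℕ} (V : Fin n → E2) (hV : ∀ i, ‖V i‖ = 1) (S : Finset (Fin n))
    (K : ℕ) (hSK : S.card + 1 ≤ K) (τ : Fin n → Bool) (θ : Fin n → ℝ) (a : ℝ)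
    (ha : 0 ≤ a) (hθ : ∀ i ∉ S, |θ i| ≤ a)
    (hlip : ∀ i ∉ S, ∀ j ∉ S, ‖rsign (τ i) • V i - rsign (τ j) • V j‖ ≤ |θ i - θ j|)
    (hball : ∀ w : E2, (2 * a + 1 / 100) * ‖w‖ ≤ ∑ i ∈ S, |inner ℝ w (V i)|) :
    (2 : ℝ) ^ n ≤ 2 ^ K * (4 * 10 ^ 6) * (n + 1) *
      (Nat.card {ε : Fin n → Bool // ‖signedSum V ε‖ ≤ Real.sqrt 2} : ℝ) := by
  obtain ⟨S', hSS, hcard, hev⟩ := exists_even_superset S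
  refine card_ge_of_steer V hV S' K (hcard.trans hSK) hev τ θ a ha
    (fun i hi => hθ i fun h => hi (hSS h))
    (fun i hi j hj => hlip i (fun h => hi (hSS h)) j fun h => hj (hSS h)) _ fun z hz => ?_
  refine exists_sign_of_ball (fun i : {i // i ∈ S'} => V i) (fun i => hV i) (2 * a + 1 / 100)
    (fun w => ?_) z hz
  rw [Finset.sum_coe_sort S' fun i => |inner ℝ w (V i)|]
  exact (hball w).trans (Finset.sum_le_sum_of_subset_of_nonneg hSS fun _ _ _ => abs_nonneg _)

/-! ### Spread and clustered directions -/

/-- The support function of the parallelogram with sides `2 a` and `2 b` is at least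
`|cross a b|` in every direction. -/
lemma cross_mul_norm_le (a b w : E2) (ha : ‖a‖ = 1) (hb : ‖b‖ = 1) :
    |cross a b| * ‖w‖ ≤ |inner ℝ w a| + |inner ℝ w b| := by
  -- up to a quarter turn, `cross a b • w` is a combination of `a` and `b`
  have h : ‖cross a b • w‖ = ‖inner ℝ w a • b - inner ℝ w b • a‖ := by
    rw [← sq_eq_sq₀ (norm_nonneg _) (norm_nonneg _), norm_sq_E2, norm_sq_E2]
    simp only [PiLp.smul_apply, PiLp.sub_apply, smul_eq_mul, inner_E2, cross]
    ring
  calc |cross a b| * ‖w‖ = ‖cross a b • w‖ := by rw [norm_smul, Real.norm_eq_abs]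
    _ ≤ ‖inner ℝ w a • b‖ + ‖inner ℝ w b • a‖ := by rw [h]; exact norm_sub_le _ _
    _ = _ := by rw [norm_smul, norm_smul, ha, hb]; simp

lemma exists_angle (v : E2) (hv : ‖v‖ = 1) :
    ∃ t : ℝ, |t| ≤ Real.pi ∧ v 0 = Real.cos t ∧ v 1 = Real.sin t := by
  have hn : ‖(⟨v 0, v 1⟩ : ℂ)‖ = 1 := by
    rw [← sq_eq_sq₀ (norm_nonneg _) (by norm_num), ← Complex.normSq_eq_norm_sq,
      Complex.normSq_mk, ← hv, norm_sq_E2]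
    ring
  have hne : (⟨v 0, v 1⟩ : ℂ) ≠ 0 := by
    intro h; rw [h] at hn; simp at hn
  refine ⟨Complex.arg ⟨v 0, v 1⟩, Complex.abs_arg_le_pi _, ?_, ?_⟩
  · rw [Complex.cos_arg hne, hn]; simp
  · rw [Complex.sin_arg, hn]; simp

lemma norm_sub_le_angle (v w : E2) (s t : ℝ) (hv0 : v 0 = Real.cos s) (hv1 : v 1 = Real.sin s)
    (hw0 : w 0 = Real.cos t) (hw1 : w 1 = Real.sin t) : ‖v - w‖ ≤ |s - t| := by
  refine abs_le_of_sq_le_sq' ?_ (abs_nonneg _) |>.2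
  rw [norm_sq_E2, sq_abs]
  simp only [PiLp.sub_apply, hv0, hv1, hw0, hw1]
  have h1 := Real.one_sub_sq_div_two_le_cos (x := s - t)
  rw [Real.cos_sub] at h1
  nlinarith [Real.sin_sq_add_cos_sq s, Real.sin_sq_add_cos_sq t]

/-- Near `u`, the unit circle is a graph over the tangent at `u` with Lipschitz constant at most
`1`. -/
lemma norm_sub_le_cross (u p q : E2) (hu : ‖u‖ = 1) (hp : ‖p‖ = 1) (hq : ‖q‖ = 1)
    (hup : 0 ≤ inner ℝ u p) (huq : 0 ≤ inner ℝ u q) (hcp : |cross u p| ≤ 1 / 2)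
    (hcq : |cross u q| ≤ 1 / 2) : ‖p - q‖ ≤ |2 * cross u p - 2 * cross u q| := by
  have hid : ∀ z : E2, inner ℝ u z ^ 2 + cross u z ^ 2 = ‖z‖ ^ 2 := by
    intro z
    have := norm_sq_E2 u
    rw [hu] at this
    rw [norm_sq_E2, inner_E2, cross]
    linear_combination -(z 0 ^ 2 + z 1 ^ 2) * this
  have h1 := hid p
  have h2 := hid q
  have h3 := hid (p - q)
  rw [hp] at h1
  rw [hq] at h2
  have hc : cross u (p - q) = cross u p - cross u q := by simp [cross]; ring
  rw [hc, inner_sub_right] at h3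
  set x := inner ℝ u p
  set x' := inner ℝ u q
  set y := cross u p
  set y' := cross u q
  refine abs_le_of_sq_le_sq' ?_ (abs_nonneg _) |>.2
  rw [sq_abs, ← h3]
  obtain ⟨a1, a2⟩ := abs_le.1 hcp
  obtain ⟨b1, b2⟩ := abs_le.1 hcq
  have hy : y ^ 2 ≤ (1 / 2) ^ 2 := sq_le_sq' a1 a2
  have hy' : y' ^ 2 ≤ (1 / 2) ^ 2 := sq_le_sq' b1 b2
  have hx : 1 / 2 ≤ x := abs_le_of_sq_le_sq' (by linarith) hup |>.2
  have hx' : 1 / 2 ≤ x' := abs_le_of_sq_le_sq' (by linarith) huq |>.2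
  have e : (x - x') * (x + x') = -((y - y') * (y + y')) := by linear_combination h1 - h2
  have e3 : (y + y') ^ 2 ≤ 1 ^ 2 := sq_le_sq' (by linarith) (by linarith)
  have e4 : 1 ≤ (x + x') ^ 2 := one_le_pow₀ (by linarith)
  have e5 : (x - x') ^ 2 ≤ (y - y') ^ 2 := by
    calc (x - x') ^ 2 ≤ (x - x') ^ 2 * (x + x') ^ 2 := le_mul_of_one_le_right (sq_nonneg _) e4
      _ = (y - y') ^ 2 * (y + y') ^ 2 := by rw [← mul_pow, e]; ring
      _ ≤ (y - y') ^ 2 := mul_le_of_le_one_right (sq_nonneg _) (by linarith)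
  have e6 := sq_nonneg (y - y')
  nlinarith [e5, e6]

/-- Unit vectors nearly parallel to `u` can be flipped so as to lie on a short arc around `u`. -/
lemma exists_align {n : ℕ} (V : Fin n → E2) (hV : ∀ i, ‖V i‖ = 1) (u : E2) (hu : ‖u‖ = 1)
    (T : Set (Fin n)) (b : ℝ) (hb : b ≤ 1 / 2) (hT : ∀ i ∈ T, |cross u (V i)| ≤ b) :
    ∃ (τ : Fin n → Bool) (θ : Fin n → ℝ), (∀ i ∈ T, |θ i| ≤ 2 * b) ∧
      ∀ i ∈ T, ∀ j ∈ T, ‖rsign (τ i) • V i - rsign (τ j) • V j‖ ≤ |θ i - θ j| := by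
  classical
  let τ : Fin n → Bool := fun i => decide (0 ≤ inner ℝ u (V i))
  have hinner : ∀ i, 0 ≤ inner ℝ u (rsign (τ i) • V i) := by
    intro i
    rw [real_inner_smul_right]
    simp only [τ, rsign, decide_eq_true_eq]
    split_ifs with h <;> linarith
  have hnorm : ∀ i, ‖rsign (τ i) • V i‖ = 1 := fun i => by
    rw [norm_smul, hV]; cases τ i <;> simp [rsign]
  have hcross : ∀ i, |cross u (rsign (τ i) • V i)| = |cross u (V i)| := by
    intro i
    have : cross u (rsign (τ i) • V i) = rsign (τ i) * cross u (V i) := by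
      simp [cross]; ring
    rw [this, abs_mul]
    cases τ i <;> simp [rsign]
  refine ⟨τ, fun i => 2 * cross u (rsign (τ i) • V i), fun i hi => ?_, fun i hi j hj => ?_⟩
  · rw [abs_mul, hcross, abs_two]
    linarith [hT i hi]
  · exact norm_sub_le_cross u _ _ hu (hnorm i) (hnorm j) (hinner i) (hinner j)
      (by rw [hcross]; exact (hT i hi).trans hb) (by rw [hcross]; exact (hT j hj).trans hb)

/-- Greedy extraction of disjoint pairs of vectors at a definite angle: either `k` pairs are found,
and their zonotope contains a ball of radius `k * δ`, or the remaining vectors are pairwise nearly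
parallel. -/
lemma spread_or_cluster {n : ℕ} (V : Fin n → E2) (hV : ∀ i, ‖V i‖ = 1) (δ : ℝ) (k : ℕ) :
    ∃ S : Finset (Fin n), S.card ≤ 2 * k ∧
      ((∀ w : E2, k * δ * ‖w‖ ≤ ∑ i ∈ S, |inner ℝ w (V i)|) ∨
        ∀ i ∉ S, ∀ j ∉ S, |cross (V i) (V j)| ≤ δ) := by
  induction k with
  | zero => exact ⟨∅, by simp, Or.inl fun w => by simp⟩
  | succ k ih =>
    obtain ⟨S, hS, h | h⟩ := ih
    · by_cases hex : ∀ i ∉ S, ∀ j ∉ S, |cross (V i) (V j)| ≤ δ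
      · exact ⟨S, by omega, Or.inr hex⟩
      push Not at hex
      obtain ⟨i, hi, j, hj, hij⟩ := hex
      by_cases hne : i = j
      · -- then `δ < 0`, and the required lower bound only decreases
        subst hne
        have hδ : δ < 0 := by
          have : cross (V i) (V i) = 0 := by simp [cross]; ring
          rwa [this, abs_zero] at hij
        refine ⟨S, by omega, Or.inl fun w => le_trans ?_ (h w)⟩
        push_cast
        nlinarith [norm_nonneg w]
      · have hj' : j ∉ insert i S := by
          simp only [Finset.mem_insert, not_or]; exact ⟨fun h => hne h.symm, hj⟩
        refine ⟨insert j (insert i S), ?_, Or.inl fun w => ?_⟩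
        · rw [Finset.card_insert_of_notMem hj', Finset.card_insert_of_notMem hi]; omega
        · rw [Finset.sum_insert hj', Finset.sum_insert hi]
          have h1 := cross_mul_norm_le (V i) (V j) w (hV i) (hV j)
          have h2 := h w
          have h3 := mul_le_mul_of_nonneg_right hij.le (norm_nonneg w)
          push_cast
          nlinarith
    · exact ⟨S, by omega, Or.inr h⟩

/-! ### The case distinction -/

lemma card_ge {n : ℕ} (V : Fin n → E2) (hV : ∀ i, ‖V i‖ = 1) :
    (2 : ℝ) ^ n ≤ 2 ^ 1610 * (4 * 10 ^ 6) * (n + 1) *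
      (Nat.card {ε : Fin n → Bool // ‖signedSum V ε‖ ≤ Real.sqrt 2} : ℝ) := by
  obtain ⟨S, hS, hspread | hclose⟩ := spread_or_cluster V hV (1 / 100) 800
  -- a ball of radius `8 > 2 π + 1 / 100` is available, so the full circle of directions is allowed
  · choose t ht ht0 ht1 using fun i => exists_angle (V i) (hV i)
    refine card_ge_of_ball V hV S 1610 (by omega) (fun _ => true) t Real.pi Real.pi_pos.le
      (fun i _ => ht i) (fun i _ j _ => ?_) fun w => le_trans ?_ (hspread w)
    · simpa [rsign] using norm_sub_le_angle _ _ _ _ (ht0 i) (ht1 i) (ht0 j) (ht1 j)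
    · gcongr
      norm_num
      linarith [Real.pi_lt_d2]
  · by_cases hT : ∃ t, t ∉ S
    · obtain ⟨t, ht⟩ := hT
      by_cases hout : ∃ i, 5 / 100 < |cross (V t) (V i)|
      -- one transversal vector is enough to correct sums of the clustered ones
      · obtain ⟨i, hi⟩ := hout
        obtain ⟨τ, θ, hθ, hlip⟩ := exists_align V hV (V t) (hV t) {j | j ∉ S} (1 / 100)
          (by norm_num) fun j hj => hclose t ht j hj
        have hti : t ≠ i := by
          rintro rfl
          have : cross (V t) (V t) = 0 := by simp [cross]; ring
          rw [this, abs_zero] at hi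
          norm_num at hi
        refine card_ge_of_ball V hV (S ∪ {t, i}) 1610 ?_ τ θ (2 * (1 / 100)) (by norm_num)
          (fun j hj => hθ j fun h => hj (Finset.mem_union_left _ h))
          (fun j hj k hk => hlip j (fun h => hj (Finset.mem_union_left _ h)) k
            fun h => hk (Finset.mem_union_left _ h)) fun w => ?_
        · have := Finset.card_union_le S {t, i}
          have := Finset.card_le_two (a := t) (b := i)
          omega
        · calc (2 * (2 * (1 / 100)) + 1 / 100) * ‖w‖ ≤ |cross (V t) (V i)| * ‖w‖ := by
                gcongr
                linarith
            _ ≤ |inner ℝ w (V t)| + |inner ℝ w (V i)| := cross_mul_norm_le _ _ _ (hV t) (hV i)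
            _ = ∑ j ∈ ({t, i} : Finset (Fin n)), |inner ℝ w (V j)| := by
                rw [Finset.sum_pair hti]
            _ ≤ _ := Finset.sum_le_sum_of_subset_of_nonneg Finset.subset_union_right
                fun _ _ _ => abs_nonneg _
      -- all vectors are nearly parallel to `V t`: at most one is left over by the pairing, and
      -- `1 + 21 / 100 < √2`
      · push Not at hout
        obtain ⟨τ, θ, hθ, hlip⟩ := exists_align V hV (V t) (hV t) Set.univ (5 / 100)
          (by norm_num) fun j _ => hout j
        obtain ⟨S', -, hcard, hev⟩ := exists_even_superset (∅ : Finset (Fin n))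
        rw [Finset.card_empty, zero_add] at hcard
        refine card_ge_of_steer V hV S' 1610 (by omega) hev τ θ (2 * (5 / 100)) (by norm_num)
          (fun j _ => hθ j trivial) (fun j _ k _ => hlip j trivial k trivial) _ fun z hz => ?_
        refine ⟨fun _ => true, Real.le_sqrt_of_sq_le ?_⟩
        have hsum : ‖∑ i : {i // i ∈ S'}, rsign true • V i‖ ≤ 1 := by
          refine (norm_sum_le _ _).trans ?_
          simp only [rsign, if_true, one_smul, hV]
          simpa using hcard
        have h1 := (norm_add_le z (∑ i : {i // i ∈ S'}, rsign true • V i)).trans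
          (add_le_add hz hsum)
        have h0 := norm_nonneg (z + ∑ i : {i // i ∈ S'}, rsign true • V i)
        calc ‖z + ∑ i : {i // i ∈ S'}, rsign true • V i‖ ^ 2
            ≤ (2 * (2 * (5 / 100)) + 1 / 100 + 1) ^ 2 := by gcongr
          _ ≤ 2 := by norm_num
    · push Not at hT
      -- `n ≤ 1600`: a single good sign vector is enough
      have hn : n ≤ 1600 := by
        rw [Finset.eq_univ_of_forall hT, Finset.card_univ, Fintype.card_fin] at hS
        omega
      obtain ⟨ε, hε⟩ := exists_sign_of_ball V hV 0
        (fun w => by rw [zero_mul]; exact Finset.sum_nonneg fun _ _ => abs_nonneg _) 0 (by simp)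
      rw [zero_add] at hε
      have : Nonempty {ε : Fin n → Bool // ‖signedSum V ε‖ ≤ Real.sqrt 2} := ⟨⟨ε, hε⟩⟩
      have hN : (1 : ℝ) ≤ Nat.card {ε : Fin n → Bool // ‖signedSum V ε‖ ≤ Real.sqrt 2} := by
        exact_mod_cast Nat.card_pos
      have hn0 : (1 : ℝ) ≤ n + 1 := by linarith [(Nat.cast_nonneg n : (0 : ℝ) ≤ n)]
      have hpow : (2 : ℝ) ^ n ≤ 2 ^ 1610 := pow_le_pow_right₀ (by norm_num) (by omega)
      calc (2 : ℝ) ^ n ≤ 2 ^ 1610 := hpow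
        _ = 2 ^ 1610 * 1 * 1 * 1 := by simp only [mul_one]
        _ ≤ _ := by gcongr; norm_num

/-- There exists an absolute constant `c > 0` such that for every `n ≥ 1` and all
unit vectors `v₁, …, vₙ ∈ ℝ²`, the probability over independent Rademacher signs
that `‖ε₁ v₁ + ⋯ + εₙ vₙ‖ ≤ √2` is at least `c / n`. -/
theorem stmt_0 :
    ∃ c : ℝ, 0 < c ∧
      ∀ n : ℕ, 1 ≤ n → ∀ V : Fin n → EuclideanSpace ℝ (Fin 2),
        (∀ i, ‖V i‖ = 1) →
        c / (n : ℝ) ≤ probLe V (Real.sqrt 2) := by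
  refine ⟨1 / (2 * (2 ^ 1610 * (4 * 10 ^ 6))), by positivity, fun n hn V hV => ?_⟩
  have h := card_ge V hV
  have hn' : (1 : ℝ) ≤ n := by exact_mod_cast hn
  rw [probLe]
  have hN : (0 : ℝ) ≤ Nat.card {ε : Fin n → Bool // ‖signedSum V ε‖ ≤ Real.sqrt 2} :=
    Nat.cast_nonneg _
  have hP : (0 : ℝ) < 2 ^ 1610 := by positivity
  generalize (Nat.card {ε : Fin n → Bool // ‖signedSum V ε‖ ≤ Real.sqrt 2} : ℝ) = N at *
  generalize (2 : ℝ) ^ 1610 = P at *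
  rw [div_div, div_le_div_iff₀ (by positivity) (by positivity), one_mul]
  calc (2 : ℝ) ^ n ≤ P * (4 * 10 ^ 6) * (n + 1) * N := h
    _ ≤ P * (4 * 10 ^ 6) * (n + n) * N := by gcongr
    _ = N * (2 * (P * (4 * 10 ^ 6)) * n) := by ring
end

section
/- For every integer d ≥ 2 there exists a constant c_d > 0 such that for every n ≥ 1 and all unit vectors v_1, …, v_n ∈ ℝ^d, the probability over independent Rademacher random variables ε_1, …, ε_n that ‖ε_1 v_1 + ⋯ + ε_n v_n‖ ≤ √d is at least c_d / n^{d/2}. -/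
/-! ### Rounding in zonotopes and absorbing sets -/

section Geometry
variable {E : Type*} [NormedAddCommGroup E] [InnerProductSpace ℝ E]

/-- The sign that is `+1` with probability `(1 + x) / 2` has mean `x` and variance `1 - x ^ 2 ≤ 1`,
so one of its two values increases the squared norm by at most `1`. -/
lemma exists_sign_step (y v : E) (x : ℝ) (hv : ‖v‖ ≤ 1) (hx : |x| ≤ 1) :
    ∃ b : Bool, ‖y + (rsign b - x) • v‖ ^ 2 ≤ ‖y‖ ^ 2 + 1 := by
  obtain ⟨h1, h2⟩ := abs_le.1 hx
  have key : ∀ s : ℝ, ‖y + s • v‖ ^ 2 = ‖y‖ ^ 2 + 2 * s * inner ℝ y v + s ^ 2 * ‖v‖ ^ 2 := by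
    intro s
    rw [norm_add_sq_real, inner_smul_right, norm_smul, mul_pow, Real.norm_eq_abs, sq_abs]
    ring
  by_contra! hcon
  have ht := hcon true
  have hf := hcon false
  rw [key] at ht hf
  simp only [rsign, if_true, Bool.false_eq_true, if_false] at ht hf
  have hv2 : ‖v‖ ^ 2 ≤ 1 := pow_le_one₀ (norm_nonneg _) hv
  -- average the two inequalities with weights `(1 + x) / 2` and `(1 - x) / 2`
  have havg : (1 + x) / 2 * (2 * (1 - x) * inner ℝ y v + (1 - x) ^ 2 * ‖v‖ ^ 2 - 1)
      + (1 - x) / 2 * (2 * (-1 - x) * inner ℝ y v + (-1 - x) ^ 2 * ‖v‖ ^ 2 - 1)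
      = (1 - x ^ 2) * ‖v‖ ^ 2 - 1 := by ring
  have hpos : 0 < (1 + x) / 2 * (2 * (1 - x) * inner ℝ y v + (1 - x) ^ 2 * ‖v‖ ^ 2 - 1)
      + (1 - x) / 2 * (2 * (-1 - x) * inner ℝ y v + (-1 - x) ^ 2 * ‖v‖ ^ 2 - 1) := by
    rcases h1.eq_or_lt with h | h
    · subst h
      nlinarith
    · have p1 := mul_pos (show 0 < (1 + x) / 2 by linarith)
        (show 0 < 2 * (1 - x) * inner ℝ y v + (1 - x) ^ 2 * ‖v‖ ^ 2 - 1 by linarith)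
      have p2 := mul_nonneg (show 0 ≤ (1 - x) / 2 by linarith)
        (show 0 ≤ 2 * (-1 - x) * inner ℝ y v + (-1 - x) ^ 2 * ‖v‖ ^ 2 - 1 by linarith)
      linarith
  rw [havg] at hpos
  nlinarith [sq_nonneg ‖v‖, mul_nonneg (sq_nonneg x) (sq_nonneg ‖v‖)]

lemma exists_signs_card {ι : Type*} [DecidableEq ι] (v : ι → E) (x : ι → ℝ) (hv : ∀ i, ‖v i‖ ≤ 1)
    (hx : ∀ i, |x i| ≤ 1) (T : Finset ι) :
    ∃ ε : ι → Bool, ‖∑ i ∈ T, (rsign (ε i) - x i) • v i‖ ^ 2 ≤ T.card := by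
  induction T using Finset.induction_on with
  | empty => exact ⟨fun _ => true, by simp⟩
  | insert k T hk ih =>
    obtain ⟨ε, hε⟩ := ih
    obtain ⟨b, hb⟩ := exists_sign_step (∑ i ∈ T, (rsign (ε i) - x i) • v i) (v k) (x k) (hv k) (hx k)
    refine ⟨Function.update ε k b, ?_⟩
    rw [Finset.sum_insert hk, Finset.card_insert_of_notMem hk]
    have : ∑ i ∈ T, (rsign (Function.update ε k b i) - x i) • v i
        = ∑ i ∈ T, (rsign (ε i) - x i) • v i := by
      refine Finset.sum_congr rfl fun i hi => ?_
      rw [Function.update_of_ne (by rintro rfl; exact hk hi)]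
    rw [this, Function.update_self, add_comm]
    push_cast
    linarith

variable [FiniteDimensional ℝ E]

/-- A point of the zonotope of `J` has a representation with at most `dim E` coefficients different
from `±1`: while there are more, moving along a linear dependency among the corresponding vectors
brings one of them to `±1`. -/
lemma exists_few_fractional_s1 {ι : Type*} [DecidableEq ι] (v : ι → E) (J : Finset ι) (x : ι → ℝ)
    (hx : ∀ i, |x i| ≤ 1) :
    ∃ x' : ι → ℝ, (∀ i, |x' i| ≤ 1) ∧ ∑ i ∈ J, x' i • v i = ∑ i ∈ J, x i • v i ∧
      (J.filter fun i => |x' i| ≠ 1).card ≤ Module.finrank ℝ E := by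
  induction hN : (J.filter fun i => |x i| ≠ 1).card using Nat.strong_induction_on generalizing x with
  | _ N ih =>
  by_cases hcard : N ≤ Module.finrank ℝ E
  · exact ⟨x, hx, rfl, hN ▸ hcard⟩
  set T := J.filter fun i => |x i| ≠ 1 with hT
  have hdep : ¬ LinearIndepOn ℝ v (T : Set ι) := by
    intro h
    have := LinearIndependent.fintype_card_le_finrank h
    simp at this
    omega
  rw [linearIndepOn_finset_iff] at hdep
  push Not at hdep
  obtain ⟨g, hg0, k, hkT, hgk⟩ := hdep
  -- `(|g i| - x i * g i) / g i ^ 2` is the time at which `x i + t * g i` leaves `[-1, 1]`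
  obtain ⟨m, hm, hmin⟩ := Finset.exists_min_image (T.filter fun i => g i ≠ 0)
    (fun i => (|g i| - x i * g i) / g i ^ 2) ⟨k, by simp [hkT, hgk]⟩
  obtain ⟨hmT, hgm⟩ := Finset.mem_filter.1 hm
  set t := (|g m| - x m * g m) / g m ^ 2 with ht
  have hxg : ∀ i, x i * g i ≤ |g i| := fun i => by
    calc x i * g i ≤ |x i * g i| := le_abs_self _
      _ = |x i| * |g i| := abs_mul _ _
      _ ≤ 1 * |g i| := by gcongr; exact hx i
      _ = |g i| := one_mul _
  have ht0 : 0 ≤ t := div_nonneg (by linarith [hxg m]) (sq_nonneg _)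
  set x' : ι → ℝ := fun i => if i ∈ T then x i + t * g i else x i with hx'
  have hx'1 : ∀ i, |x' i| ≤ 1 := by
    intro i
    simp only [hx']
    split_ifs with hi
    · by_cases hgi : g i = 0
      · simpa [hgi] using hx i
      have hti := hmin i (by simp [hi, hgi])
      rw [le_div_iff₀ (by positivity)] at hti
      obtain ⟨h1, h2⟩ := abs_le.1 (hx i)
      rw [abs_le]
      rcases lt_or_gt_of_ne hgi with h | h
      · rw [abs_of_neg h] at hti
        have : t * g i ≥ -1 - x i := by nlinarith
        constructor <;> nlinarith
      · rw [abs_of_pos h] at hti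
        have : t * g i ≤ 1 - x i := by nlinarith
        constructor <;> nlinarith
    · exact hx i
  have hsum : ∑ i ∈ J, x' i • v i = ∑ i ∈ J, x i • v i := by
    have : ∀ i ∈ J, x' i • v i = x i • v i + if i ∈ T then t • g i • v i else 0 := by
      intro i _
      simp only [hx']
      split_ifs <;> simp [add_smul, mul_smul]
    rw [Finset.sum_congr rfl this, Finset.sum_add_distrib, Finset.sum_ite_mem,
      Finset.inter_eq_right.2 (Finset.filter_subset _ _), ← Finset.smul_sum, hg0]
    simp
  have hm1 : |x' m| = 1 := by
    have : x' m = |g m| / g m := by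
      simp only [hx', hmT, if_true, ht]
      field_simp
      ring
    rw [this, abs_div, abs_abs, div_self (by simpa using hgm)]
  have hlt : (J.filter fun i => |x' i| ≠ 1).card < N := by
    rw [← hN]
    apply Finset.card_lt_card
    refine ⟨?_, fun h => ?_⟩
    · intro i hi
      rw [Finset.mem_filter] at hi
      by_contra hiT
      have : x' i = x i := by simp [hx', hiT]
      rw [this] at hi
      exact hiT (Finset.mem_filter.2 hi)
    · have := h hmT
      simp [hm1] at this
  obtain ⟨x'', h1, h2, h3⟩ := ih _ hlt x' hx'1 rfl
  exact ⟨x'', h1, h2.trans hsum, h3⟩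

/-- Every point `∑ x i • v i` of the zonotope of `J` lies within `√(dim E)` of a vertex. -/
lemma exists_rounding {ι : Type*} [DecidableEq ι] (v : ι → E) (hv : ∀ i, ‖v i‖ ≤ 1) (J : Finset ι)
    (x : ι → ℝ) (hx : ∀ i, |x i| ≤ 1) :
    ∃ ε : ι → Bool, ‖∑ i ∈ J, rsign (ε i) • v i - ∑ i ∈ J, x i • v i‖ ^ 2
      ≤ Module.finrank ℝ E := by
  obtain ⟨x', h1, h2, h3⟩ := exists_few_fractional_s1 v J x hx
  set T := J.filter fun i => |x' i| ≠ 1 with hT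
  obtain ⟨ε, hε⟩ := exists_signs_card v x' hv h1 T
  refine ⟨fun i => if i ∈ T then ε i else decide (x' i = 1), ?_⟩
  refine le_trans (le_of_eq ?_) (hε.trans (by exact_mod_cast h3))
  congr 2
  rw [← h2, ← Finset.sum_sub_distrib]
  symm
  refine Finset.sum_subset_zero_on_sdiff (Finset.filter_subset _ _) ?_ ?_
  · intro i hi
    rw [Finset.mem_sdiff] at hi
    have : |x' i| = 1 := by
      by_contra h
      exact hi.2 (Finset.mem_filter.2 ⟨hi.1, h⟩)
    simp only [if_neg hi.2, ← sub_smul]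
    rcases eq_or_eq_neg_of_abs_eq this with h | h
    · simp [h, rsign]
    · have h' : ¬ ((-1 : ℝ) = 1) := by norm_num
      simp [h, rsign, h']
  · intro i hi
    simp only [if_pos hi, sub_smul]

/-- Every finite family contains a basis of its span in which all its members have coordinates in
`[-1, 1]`, namely a subfamily of maximal volume (the coordinates are ratios of volumes, by Cramer's
rule). -/
lemma exists_bounded_frame {ι : Type*} (v : ι → E) (T : Finset ι) :
    ∃ r ≤ Module.finrank ℝ E, ∃ f : Fin r → ι,
      Function.Injective f ∧ (∀ l, f l ∈ T) ∧ ∃ a : ι → Fin r → ℝ,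
      ∀ i ∈ T, (∀ l, |a i l| ≤ 1) ∧ v i = ∑ l, a i l • v (f l) := by
  set s : Set E := v '' T with hs
  set W := Submodule.span ℝ s with hW
  set r := Module.finrank ℝ W with hr
  obtain ⟨f₀, hf₀s, -, hf₀li⟩ : ∃ f : Fin r → E, (∀ i, f i ∈ s) ∧
      Submodule.span ℝ (Set.range f) = W ∧ LinearIndependent ℝ f :=
    Submodule.exists_fun_fin_finrank_span_eq ℝ s
  let u : T → W := fun i => ⟨v i, Submodule.subset_span ⟨i, i.2, rfl⟩⟩
  choose g₀ hg₀T hg₀ using hf₀s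
  let f₁ : Fin r → T := fun l => ⟨g₀ l, hg₀T l⟩
  have hli : LinearIndependent ℝ (u ∘ f₁) := by
    apply LinearIndependent.of_comp W.subtype
    have : W.subtype ∘ (u ∘ f₁) = f₀ := funext hg₀
    rwa [this]
  let b : Module.Basis (Fin r) ℝ W := basisOfLinearIndependentOfCardEqFinrank' (u ∘ f₁) hli (by simp [hr])
  have hb : ⇑b = u ∘ f₁ := by simp [b]
  obtain ⟨f, -, hmax⟩ := Finset.exists_max_image (Finset.univ : Finset (Fin r → T))
    (fun f => |b.det (u ∘ f)|) ⟨f₁, Finset.mem_univ _⟩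
  have hdet : 1 ≤ |b.det (u ∘ f)| := by
    have := hmax f₁ (Finset.mem_univ _)
    rwa [← hb, b.det_self, abs_one] at this
  have hdet0 : b.det (u ∘ f) ≠ 0 := by
    intro h
    rw [h] at hdet
    norm_num at hdet
  have hbas := (Module.Basis.is_basis_iff_det b (v := u ∘ f)).2 (isUnit_iff_ne_zero.2 hdet0)
  let c := Module.Basis.mk hbas.1 hbas.2.ge
  classical
  refine ⟨r, Submodule.finrank_le _, fun l => f l,
    Subtype.val_injective.comp hbas.1.injective.of_comp, fun l => (f l).2,
    fun i l => if h : i ∈ T then c.repr (u ⟨i, h⟩) l else 0, fun i hi => ⟨fun l => ?_, ?_⟩⟩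
  · simp only [hi, dif_pos]
    have h1 := b.det_smul_mk_coord_eq_det_update hbas.1 hbas.2.ge l
    have h2 := LinearMap.congr_fun h1 (u ⟨i, hi⟩)
    simp only [LinearMap.smul_apply, smul_eq_mul, Module.Basis.coord_apply] at h2
    have h3 := hmax (Function.update f l ⟨i, hi⟩) (Finset.mem_univ _)
    have h4 : u ∘ Function.update f l ⟨i, hi⟩ = Function.update (u ∘ f) l (u ⟨i, hi⟩) := by
      rw [Function.comp_update]
    rw [h4] at h3
    have h5 : |b.det (u ∘ f)| * |c.repr (u ⟨i, hi⟩) l| ≤ |b.det (u ∘ f)| := by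
      rw [← abs_mul, h2]
      exact h3
    nlinarith
  · have := congrArg (Subtype.val) (c.sum_repr (u ⟨i, hi⟩))
    simp only [hi, dif_pos]
    rw [Submodule.coe_sum] at this
    simpa [c, u] using this.symm

/-- The zonotope `{∑ i ∈ J, x i • v i : x i ∈ [-1, 1]}` of the family `v` restricted to `J`. -/
def zonotope {ι : Type*} (v : ι → E) (J : Finset ι) : Set E :=
  {y | ∃ x : ι → ℝ, (∀ i, |x i| ≤ 1) ∧ y = ∑ i ∈ J, x i • v i}

/-- Removing a bounded frame `k` times gives a set `J` of at most `k * dim E` indices whose zonotope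
contains `k • v i` for every `i` outside `J`. -/
lemma exists_absorbing {ι : Type*} [DecidableEq ι] (v : ι → E) (T : Finset ι) (k : ℕ) :
    ∃ J ⊆ T, J.card ≤ k * Module.finrank ℝ E ∧ ∀ i ∈ T \ J, (k : ℝ) • v i ∈ zonotope v J := by
  induction k with
  | zero => exact ⟨∅, by simp, by simp, fun i _ => ⟨0, by simp, by simp⟩⟩
  | succ k ih =>
    obtain ⟨J, hJT, hJc, hJ⟩ := ih
    obtain ⟨r, hr, f, hfi, hf, a, ha⟩ := exists_bounded_frame v (T \ J)
    have hfJ : ∀ l, f l ∉ J := fun l => (Finset.mem_sdiff.1 (hf l)).2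
    refine ⟨J ∪ Finset.univ.image f, ?_, ?_, ?_⟩
    · refine Finset.union_subset hJT (Finset.image_subset_iff.2 fun l _ => ?_)
      exact (Finset.mem_sdiff.1 (hf l)).1
    · refine (Finset.card_union_le _ _).trans ?_
      have : (Finset.univ.image f).card ≤ r := by
        simpa using Finset.card_image_le (s := (Finset.univ : Finset (Fin r))) (f := f)
      linarith
    · intro i hi
      have hi' : i ∈ T \ J := by
        simp only [Finset.mem_sdiff, Finset.mem_union, not_or] at hi ⊢
        exact ⟨hi.1, hi.2.1⟩
      obtain ⟨x, hx, hxi⟩ := hJ i hi'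
      obtain ⟨ha1, ha2⟩ := ha i hi'
      refine ⟨Function.extend f (a i) x, fun j => ?_, ?_⟩
      · by_cases h : ∃ l, f l = j
        · obtain ⟨l, rfl⟩ := h
          rw [hfi.extend_apply]
          exact ha1 l
        · rw [Function.extend_apply' _ _ _ h]
          exact hx j
      · rw [Finset.sum_union, Finset.sum_image hfi.injOn]
        · have h1 : ∑ j ∈ J, Function.extend f (a i) x j • v j = ∑ j ∈ J, x j • v j := by
            refine Finset.sum_congr rfl fun j hj => ?_
            rw [Function.extend_apply']
            rintro ⟨l, rfl⟩
            exact hfJ l hj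
          simp only [hfi.extend_apply]
          rw [h1, ← hxi, ← ha2]
          push_cast
          rw [add_smul, one_smul]
        · rw [Finset.disjoint_right]
          intro j hj
          obtain ⟨l, -, rfl⟩ := Finset.mem_image.1 hj
          exact hfJ l

/-- There is a bounded set `J` of indices and a frame `b` such that the vectors outside `J` have
`b`-coordinates in `[-1, 1]`, while the zonotope of `J` contains everything with `b`-coordinates in
`[-R, R]`. -/
lemma exists_absorbing_frame {ι : Type*} [DecidableEq ι] (v : ι → E) (T : Finset ι) (R k : ℕ)
    (hk : Module.finrank ℝ E * R ≤ k) :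
    ∃ J ⊆ T, J.card ≤ k * Module.finrank ℝ E ∧ ∃ r ≤ Module.finrank ℝ E,
      ∃ (b : Fin r → E) (a : ι → Fin r → ℝ),
      (∀ i ∈ T \ J, (∀ l, |a i l| ≤ 1) ∧ v i = ∑ l, a i l • b l) ∧
      ∀ y : Fin r → ℝ, (∀ l, |y l| ≤ R) → ∑ l, y l • b l ∈ zonotope v J := by
  obtain ⟨J, hJT, hJc, hJ⟩ := exists_absorbing v T k
  obtain ⟨r, hr, f, hfi, hf, a, ha⟩ := exists_bounded_frame v (T \ J)
  refine ⟨J, hJT, hJc, r, hr, fun l => v (f l), a, ha, fun y hy => ?_⟩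
  choose x hx1 hx using fun l => hJ (f l) (hf l)
  have hsum : ∑ l, |y l| ≤ k := by
    calc ∑ l, |y l| ≤ ∑ _l : Fin r, (R : ℝ) := Finset.sum_le_sum fun l _ => hy l
      _ = r * R := by simp
      _ ≤ Module.finrank ℝ E * R := by gcongr
      _ ≤ k := by exact_mod_cast hk
  rcases Nat.eq_zero_or_pos k with rfl | hk0
  · have hy0 : ∀ l, y l = 0 := by
      intro l
      have := (Finset.single_le_sum (fun l _ => abs_nonneg (y l)) (Finset.mem_univ l)).trans hsum
      simpa using this
    exact ⟨0, by simp, by simp [hy0]⟩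
  have hk0' : (0 : ℝ) < k := by exact_mod_cast hk0
  refine ⟨fun j => ∑ l, y l / k * x l j, fun j => ?_, ?_⟩
  · calc |∑ l, y l / k * x l j| ≤ ∑ l, |y l / k * x l j| := Finset.abs_sum_le_sum_abs _ _
      _ ≤ ∑ l, |y l| / k := by
        refine Finset.sum_le_sum fun l _ => ?_
        rw [abs_mul, abs_div, abs_of_pos hk0']
        exact mul_le_of_le_one_right (by positivity) (hx1 l j)
      _ = (∑ l, |y l|) / k := by rw [Finset.sum_div]
      _ ≤ 1 := by rwa [div_le_one hk0']
  · simp only [Finset.sum_smul]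
    rw [Finset.sum_comm]
    refine Finset.sum_congr rfl fun l _ => ?_
    simp only [mul_smul]
    rw [← Finset.smul_sum, ← hx l, smul_smul, div_mul_cancel₀ _ hk0'.ne']

end Geometry

/-! ### The small ball estimate -/

section Fourier
open Complex

lemma sum_exp_signs {n : ℕ} (t : Fin n → ℝ) :
    ∑ ε : Fin n → Bool, exp (I * ((∑ i, rsign (ε i) * t i : ℝ) : ℂ))
      = ((2 ^ n * ∏ i, Real.cos (t i) : ℝ) : ℂ) := by
  have h1 : ∀ ε : Fin n → Bool, exp (I * ((∑ i, rsign (ε i) * t i : ℝ) : ℂ))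
      = ∏ i, exp (I * ((rsign (ε i) * t i : ℝ) : ℂ)) := by
    intro ε
    rw [← Complex.exp_sum]
    push_cast
    rw [Finset.mul_sum]
  have h2 : ∀ i, ∑ b : Bool, exp (I * ((rsign b * t i : ℝ) : ℂ)) = 2 * (Real.cos (t i) : ℂ) := by
    intro i
    rw [Fintype.sum_bool, Complex.ofReal_cos, Complex.two_cos]
    simp [rsign, mul_comm]
  have h3 := Finset.prod_univ_sum (fun _ : Fin n => (Finset.univ : Finset Bool))
    (fun i b => exp (I * ((rsign b * t i : ℝ) : ℂ)))
  rw [Fintype.piFinset_univ] at h3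
  simp only [h1]
  rw [← h3]
  simp only [h2]
  rw [Finset.prod_mul_distrib]
  push_cast
  simp

/-- Average over the signs of a product of trigonometric polynomials in the coordinates of
`∑ i, rsign (ε i) • w i`: each frequency contributes a product of cosines. -/
lemma sum_prod_trig {n r : ℕ} {A : Type*} [Fintype A] [DecidableEq A] (w : Fin n → Fin r → ℝ)
    (c : Fin r → A → ℝ) (ξ : A → ℝ) :
    ∑ ε : Fin n → Bool, ∏ l, ∑ a,
        (c l a : ℂ) * exp (I * ((ξ a * ∑ i, rsign (ε i) * w i l : ℝ) : ℂ))
      = ((2 ^ n * ∑ p : Fin r → A, (∏ l, c l (p l)) *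
          ∏ i, Real.cos (∑ l, ξ (p l) * w i l) : ℝ) : ℂ) := by
  have h1 : ∀ ε : Fin n → Bool, ∏ l, ∑ a,
        (c l a : ℂ) * exp (I * ((ξ a * ∑ i, rsign (ε i) * w i l : ℝ) : ℂ))
      = ∑ p : Fin r → A, (∏ l, (c l (p l) : ℂ)) *
        exp (I * ((∑ i, rsign (ε i) * ∑ l, ξ (p l) * w i l : ℝ) : ℂ)) := by
    intro ε
    rw [Finset.prod_univ_sum, Fintype.piFinset_univ]
    refine Finset.sum_congr rfl fun p _ => ?_
    rw [Finset.prod_mul_distrib, ← Complex.exp_sum, ← Finset.mul_sum, ← Complex.ofReal_sum]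
    congr 4
    simp only [Finset.mul_sum]
    rw [Finset.sum_comm]
    refine Finset.sum_congr rfl fun i _ => Finset.sum_congr rfl fun l _ => by ring
  simp only [h1]
  rw [Finset.sum_comm]
  simp only [← Finset.mul_sum, sum_exp_signs]
  push_cast
  rw [Finset.mul_sum]
  refine Finset.sum_congr rfl fun p _ => by ring

lemma sum_sin_pow (φ : ℝ) (z : ℂ) (hz : z ≠ 0) (N : ℕ) :
    (∑ m ∈ Finset.range (N + 1), (Real.sin (φ * m) : ℂ) * z ^ m) * (z + z⁻¹ - 2 * Real.cos φ)
      = Real.sin φ + (Real.sin (φ * N) * z ^ (N + 1) - Real.sin (φ * (N + 1)) * z ^ N) := by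
  induction N with
  | zero => simp
  | succ N ih =>
    rw [Finset.sum_range_succ, add_mul, ih]
    have e : Real.sin (φ * ((N + 1 : ℕ) + 1)) = 2 * Real.cos φ * Real.sin (φ * (N + 1))
        - Real.sin (φ * N) := by
      have e1 : φ * ((N + 1 : ℕ) + 1) = φ * (N + 1) + φ := by push_cast; ring
      have e2 : φ * (N : ℝ) = φ * (N + 1) - φ := by ring
      rw [e1, e2, Real.sin_add, Real.sin_sub]
      ring
    rw [e]
    push_cast
    field_simp
    ring

/-- The trigonometric polynomial `∑ sin (π m / M) exp (i m t)`, `0 ≤ m ≤ M`. -/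
noncomputable def sinePoly (M : ℕ) (t : ℝ) : ℂ :=
  ∑ m : Fin (M + 1), (Real.sin (Real.pi / M * m) : ℂ) * exp (I * ((t * m : ℝ) : ℂ))

/-- The profile `sin (π m / M)` is an eigenvector of the discrete Laplacian on `{0, …, M}` with
Dirichlet conditions, so multiplying by `2 cos t` is scaling by the eigenvalue up to a boundary
term, whose coefficients are nonnegative. -/
lemma two_cos_mul_sinePoly (M : ℕ) (hM : 2 ≤ M) (t : ℝ) :
    2 * (Real.cos t : ℂ) * sinePoly M t = 2 * Real.cos (Real.pi / M) * sinePoly M t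
      + Real.sin (Real.pi / M) * (1 + exp (I * ((t * M : ℝ) : ℂ))) := by
  have hM0 : (M : ℝ) ≠ 0 := by positivity
  set φ := Real.pi / M with hφ
  set z := exp (I * t) with hz
  have hzp : ∀ m : ℕ, exp (I * ((t * m : ℝ) : ℂ)) = z ^ m := by
    intro m
    rw [hz, ← Complex.exp_nat_mul]
    congr 1
    push_cast
    ring
  have h := sum_sin_pow φ z (Complex.exp_ne_zero _) M
  have hφM : φ * M = Real.pi := by rw [hφ]; field_simp
  rw [mul_add, hφM, mul_one, Real.sin_pi, add_comm Real.pi, Real.sin_add_pi,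
    Finset.sum_range] at h
  have hc : 2 * (Real.cos t : ℂ) = z + z⁻¹ := by
    rw [hz, ← Complex.exp_neg, Complex.ofReal_cos, Complex.two_cos]
    congr 2 <;> ring
  have hD : sinePoly M t = ∑ m : Fin (M + 1), (Real.sin (φ * (m : ℕ)) : ℂ) * z ^ (m : ℕ) := by
    unfold sinePoly
    simp only [hzp, hφ]
  rw [hD, hc, hzp]
  push_cast at h ⊢
  linear_combination h

lemma sinePoly_mul_conj (M : ℕ) (θ x : ℝ) :
    ((‖sinePoly M (θ * x)‖ ^ 2 : ℝ) : ℂ) = ∑ a : Fin (M + 1) × Fin (M + 1),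
      ((Real.sin (Real.pi / M * a.1) * Real.sin (Real.pi / M * a.2) : ℝ) : ℂ) *
        exp (I * ((θ * ((a.1 : ℕ) - (a.2 : ℕ) : ℝ) * x : ℝ) : ℂ)) := by
  rw [Complex.ofReal_pow, ← Complex.mul_conj', sinePoly, map_sum, Finset.sum_mul_sum,
    Fintype.sum_prod_type]
  refine Finset.sum_congr rfl fun m _ => Finset.sum_congr rfl fun m' _ => ?_
  rw [map_mul, Complex.conj_ofReal, ← Complex.exp_conj, map_mul, Complex.conj_I,
    Complex.conj_ofReal, mul_mul_mul_comm, ← Complex.exp_add]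
  push_cast
  congr 2
  ring

lemma endpoint_mul_conj (M : ℕ) (hM : 2 ≤ M) (θ x : ℝ) :
    (1 + exp (I * ((θ * x * M : ℝ) : ℂ))) * (starRingEnd ℂ) (sinePoly M (θ * x))
      = ∑ a : Fin (M + 1) × Fin (M + 1),
      (((if (a.1 : ℕ) = 0 ∨ (a.1 : ℕ) = M then 1 else 0) * Real.sin (Real.pi / M * a.2) : ℝ) : ℂ) *
        exp (I * ((θ * ((a.1 : ℕ) - (a.2 : ℕ) : ℝ) * x : ℝ) : ℂ)) := by
  have h1 : 1 + exp (I * ((θ * x * M : ℝ) : ℂ)) = ∑ m : Fin (M + 1),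
      ((if (m : ℕ) = 0 ∨ (m : ℕ) = M then 1 else 0 : ℝ) : ℂ)
        * exp (I * ((θ * x * m : ℝ) : ℂ)) := by
    obtain ⟨N, rfl⟩ : ∃ N, M = N + 1 := ⟨M - 1, by omega⟩
    rw [Fin.sum_univ_succ, Fin.sum_univ_castSucc]
    have : ∀ x : Fin N, ¬ ((x : ℕ) = N) := fun x => by omega
    simp [this]
  rw [h1, sinePoly, map_sum, Finset.sum_mul_sum, Fintype.sum_prod_type]
  refine Finset.sum_congr rfl fun m _ => Finset.sum_congr rfl fun m' _ => ?_
  rw [map_mul, Complex.conj_ofReal, ← Complex.exp_conj, map_mul, Complex.conj_I,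
    Complex.conj_ofReal, mul_mul_mul_comm, ← Complex.exp_add]
  push_cast
  congr 2
  ring

lemma sin_profile_nonneg (M m : ℕ) (hm : m ≤ M) :
    0 ≤ Real.sin (Real.pi / M * m) := by
  rcases Nat.eq_zero_or_pos M with rfl | hM
  · simp
  have hM' : (0 : ℝ) < M := by exact_mod_cast hM
  apply Real.sin_nonneg_of_nonneg_of_le_pi
  · positivity
  · have : (m : ℝ) ≤ M := by exact_mod_cast hm
    rw [div_mul_eq_mul_div, div_le_iff₀ hM']
    gcongr

/-- The value `∑ sin (π m / M)` of `sinePoly M` at `0`, which is its maximum modulus. -/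
noncomputable def profileMass (M : ℕ) : ℝ := ∑ m : Fin (M + 1), Real.sin (Real.pi / M * m)

lemma profileMass_pos (M : ℕ) (hM : 2 ≤ M) : 0 < profileMass M := by
  refine Finset.sum_pos' (fun m _ => sin_profile_nonneg M m (by omega))
    ⟨⟨1, by omega⟩, Finset.mem_univ _, ?_⟩
  have hM' : (2 : ℝ) ≤ M := by exact_mod_cast hM
  simp only [Nat.cast_one, mul_one]
  apply Real.sin_pos_of_pos_of_lt_pi
  · have := Real.pi_pos; positivity
  · exact div_lt_self Real.pi_pos (by linarith)

lemma norm_sinePoly_le (M : ℕ) (t : ℝ) : ‖sinePoly M t‖ ≤ profileMass M := by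
  refine (norm_sum_le _ _).trans (Finset.sum_le_sum fun m _ => ?_)
  rw [norm_mul, mul_comm I, Complex.norm_exp_ofReal_mul_I, mul_one, Complex.norm_real,
    Real.norm_eq_abs, abs_of_nonneg (sin_profile_nonneg M m (by omega))]

/-- Cauchy–Schwarz over the cells of a partition of the frequencies into `K + 1` cells. -/
lemma profileMass_sq_le (M K : ℕ) (cell : Fin (M + 1) → Fin (K + 1)) :
    profileMass M ^ 2 ≤ (K + 1) * ∑ a : Fin (M + 1) × Fin (M + 1),
      if cell a.1 = cell a.2 then
        Real.sin (Real.pi / M * a.1) * Real.sin (Real.pi / M * a.2) else 0 := by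
  set h : Fin (M + 1) → ℝ := fun m => Real.sin (Real.pi / M * m) with hh
  have h1 : profileMass M = ∑ c : Fin (K + 1), ∑ m, if cell m = c then h m else 0 := by
    rw [Finset.sum_comm]
    simp [profileMass, hh]
  have h2 : ∑ a : Fin (M + 1) × Fin (M + 1), (if cell a.1 = cell a.2 then h a.1 * h a.2 else 0)
      = ∑ c : Fin (K + 1), (∑ m, if cell m = c then h m else 0) ^ 2 := by
    simp only [sq, Finset.sum_mul_sum]
    rw [Finset.sum_comm, Fintype.sum_prod_type]
    refine Finset.sum_congr rfl fun m _ => ?_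
    rw [Finset.sum_comm]
    refine Finset.sum_congr rfl fun m' _ => ?_
    simp only [ite_mul, zero_mul, mul_ite, mul_zero]
    simp [eq_comm]
  change _ ≤ (K + 1 : ℝ) * ∑ a : Fin (M + 1) × Fin (M + 1),
    (if cell a.1 = cell a.2 then h a.1 * h a.2 else 0)
  rw [h2, h1]
  have := sq_sum_le_card_mul_sum_sq (s := (Finset.univ : Finset (Fin (K + 1))))
    (f := fun c => ∑ m, if cell m = c then h m else 0)
  simpa using this


lemma abs_freq_le {d r : ℕ} (hr : r ≤ d) {q : Fin r → ℝ} {ω : Fin r → ℝ} {B : ℝ}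
    (hB : 0 ≤ B) (hq : ∀ l, |q l| ≤ B) (hω : ∀ l, |ω l| ≤ 1) :
    |∑ l, q l * ω l| ≤ d * B := by
  calc |∑ l, q l * ω l| ≤ ∑ l, |q l * ω l| := Finset.abs_sum_le_sum_abs _ _
    _ ≤ ∑ _l : Fin r, B := by
      refine Finset.sum_le_sum fun l _ => ?_
      rw [abs_mul]
      exact (mul_le_mul (hq l) (hω l) (abs_nonneg _) hB).trans (mul_one B).le
    _ = r * B := by simp
    _ ≤ d * B := by gcongr

lemma abs_freq_pair {d M : ℕ} (hd : 1 ≤ d) (hM : 1 ≤ M) (a : Fin (M + 1) × Fin (M + 1)) :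
    |1 / ((d : ℝ) * M) * (((a.1 : ℕ) : ℝ) - ((a.2 : ℕ) : ℝ))| ≤ 1 / d := by
  have hd' : (0 : ℝ) < d := by exact_mod_cast hd
  have hM' : (0 : ℝ) < M := by exact_mod_cast hM
  have h1 : ((a.1 : ℕ) : ℝ) ≤ M := by exact_mod_cast Nat.lt_succ_iff.1 a.1.2
  have h2 : ((a.2 : ℕ) : ℝ) ≤ M := by exact_mod_cast Nat.lt_succ_iff.1 a.2.2
  have h3 : |((a.1 : ℕ) : ℝ) - ((a.2 : ℕ) : ℝ)| ≤ M := by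
    rw [abs_le]
    constructor <;> linarith [Nat.cast_nonneg (α := ℝ) (a.1 : ℕ), Nat.cast_nonneg (α := ℝ) (a.2 : ℕ)]
  rw [abs_mul, abs_of_pos (by positivity)]
  calc 1 / ((d : ℝ) * M) * |((a.1 : ℕ) : ℝ) - ((a.2 : ℕ) : ℝ)| ≤ 1 / ((d : ℝ) * M) * M := by gcongr
    _ = 1 / d := by field_simp

lemma prod_cos_nonneg {d n r M : ℕ} (hd : 1 ≤ d) (hr : r ≤ d) (hM : 1 ≤ M)
    (w : Fin n → Fin r → ℝ) (hw : ∀ i l, |w i l| ≤ 1)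
    (p : Fin r → Fin (M + 1) × Fin (M + 1)) :
    0 ≤ ∏ i, Real.cos (∑ l, 1 / ((d : ℝ) * M) * (((p l).1 : ℕ) - ((p l).2 : ℕ) : ℝ) * w i l) := by
  refine Finset.prod_nonneg fun i _ => ?_
  have hd' : (0 : ℝ) < d := by exact_mod_cast hd
  have h := abs_freq_le hr (B := 1 / d) (by positivity) (fun l => abs_freq_pair hd hM (p l)) (hw i)
  rw [mul_one_div_cancel hd'.ne'] at h
  have h2 := abs_le.1 h
  apply Real.cos_nonneg_of_neg_pi_div_two_le_of_le <;> linarith [Real.pi_gt_three]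

lemma half_le_prod_cos {n K : ℕ} (hn : 1 ≤ n) (hK : n ≤ K ^ 2) (t : Fin n → ℝ)
    (ht : ∀ i, |t i| ≤ 1 / K) : 1 / 2 ≤ ∏ i, Real.cos (t i) := by
  have hn' : (1 : ℝ) ≤ n := by exact_mod_cast hn
  have hK' : (n : ℝ) ≤ (K : ℝ) ^ 2 := by exact_mod_cast hK
  have hcos : ∀ i, 1 - 1 / (2 * n : ℝ) ≤ Real.cos (t i) := by
    intro i
    have h1 : t i ^ 2 ≤ 1 / n := by
      calc t i ^ 2 = |t i| ^ 2 := (sq_abs _).symm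
        _ ≤ (1 / K) ^ 2 := by gcongr; exact ht i
        _ = 1 / (K : ℝ) ^ 2 := by rw [div_pow, one_pow]
        _ ≤ 1 / n := by gcongr
    have h2 := Real.one_sub_sq_div_two_le_cos (x := t i)
    have h3 : 1 / (2 * n : ℝ) = 1 / n / 2 := by field_simp
    linarith
  have h0 : 1 / (2 * n : ℝ) ≤ 1 / 2 := by
    gcongr
    linarith
  calc (1 / 2 : ℝ) = 1 + n * (-(1 / (2 * n : ℝ))) := by field_simp; norm_num
    _ ≤ (1 + -(1 / (2 * n : ℝ))) ^ n := one_add_mul_le_pow (by linarith) n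
    _ = ∏ _i : Fin n, (1 - 1 / (2 * n : ℝ)) := by simp [sub_eq_add_neg]
    _ ≤ ∏ i, Real.cos (t i) := Finset.prod_le_prod (fun i _ => by linarith) fun i _ => hcos i

/-- The partition of `{0, …, M}` into `K + 1` intervals of length at most `M / K`. -/
lemma exists_cell {M K : ℕ} (hM : 1 ≤ M) : ∃ cell : Fin (M + 1) → Fin (K + 1),
    ∀ m m', cell m = cell m' → |((m : ℕ) : ℝ) - ((m' : ℕ) : ℝ)| * K ≤ M := by
  refine ⟨fun m => ⟨m * K / M, ?_⟩, fun m m' h => ?_⟩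
  · rw [Nat.lt_succ_iff]
    refine Nat.div_le_of_le_mul ?_
    exact Nat.mul_le_mul_right _ (Nat.lt_succ_iff.1 m.2)
  · simp only [Fin.mk.injEq] at h
    have e1 := Nat.div_add_mod (m * K) M
    have e2 := Nat.div_add_mod (m' * K) M
    have l1 := Nat.mod_lt (m * K) hM
    have l2 := Nat.mod_lt (m' * K) hM
    rw [h] at e1
    have a1 : (m : ℕ) * K ≤ m' * K + M := by omega
    have a2 : (m' : ℕ) * K ≤ m * K + M := by omega
    have a1' : ((m : ℕ) : ℝ) * K ≤ (m' : ℕ) * K + M := by exact_mod_cast a1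
    have a2' : ((m' : ℕ) : ℝ) * K ≤ (m : ℕ) * K + M := by exact_mod_cast a2
    rw [← abs_of_nonneg (Nat.cast_nonneg (α := ℝ) K), ← abs_mul, abs_le]
    constructor <;> linarith

/-- Pairs of frequencies in a common cell of side about `1 / (d √n)` contribute at least half their
weight to the average of `∏ ‖sinePoly‖ ^ 2`; the remaining pairs contribute nonnegative amounts. -/
lemma energy_lower {d n r M K : ℕ} (hd : 1 ≤ d) (hn : 1 ≤ n) (hr : r ≤ d) (hM : 2 ≤ M)
    (hK : n ≤ K ^ 2) (w : Fin n → Fin r → ℝ) (hw : ∀ i l, |w i l| ≤ 1) :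
    2 ^ n * (1 / 2 * (profileMass M ^ 2 / (K + 1)) ^ r) ≤
      ∑ ε : Fin n → Bool, ∏ l,
        ‖sinePoly M (1 / ((d : ℝ) * M) * ∑ i, rsign (ε i) * w i l)‖ ^ 2 := by
  have hd' : (0 : ℝ) < d := by exact_mod_cast hd
  have hM' : (0 : ℝ) < M := by exact_mod_cast (by omega : 0 < M)
  have hK0 : 0 < K := by
    rcases Nat.eq_zero_or_pos K with rfl | h
    · simp at hK; omega
    · exact h
  have hK0' : (0 : ℝ) < K := by exact_mod_cast hK0
  obtain ⟨cell, hcell⟩ := exists_cell (M := M) (K := K) (by omega)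
  set h : Fin (M + 1) × Fin (M + 1) → ℝ := fun a =>
    Real.sin (Real.pi / M * a.1) * Real.sin (Real.pi / M * a.2) with hh
  have hh0 : ∀ a, 0 ≤ h a := fun a => mul_nonneg (sin_profile_nonneg M _ (by omega))
    (sin_profile_nonneg M _ (by omega))
  have key := sum_prod_trig w (fun _ => h)
    (fun a => 1 / ((d : ℝ) * M) * (((a.1 : ℕ) : ℝ) - ((a.2 : ℕ) : ℝ)))
  simp only [hh, ← sinePoly_mul_conj] at key
  simp only [← Complex.ofReal_prod, ← Complex.ofReal_sum] at key
  rw [Complex.ofReal_injective key]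
  gcongr
  calc 1 / 2 * (profileMass M ^ 2 / (K + 1)) ^ r
      ≤ 1 / 2 * (∑ a, if cell a.1 = cell a.2 then h a else 0) ^ r := by
        gcongr
        rw [div_le_iff₀ (by positivity), mul_comm]
        exact profileMass_sq_le M K cell
    _ = 1 / 2 * ∑ p : Fin r → Fin (M + 1) × Fin (M + 1),
          ∏ l, if cell (p l).1 = cell (p l).2 then h (p l) else 0 := by
        congr 1
        rw [← Fin.prod_const, Finset.prod_univ_sum, Fintype.piFinset_univ]
    _ ≤ _ := by
        rw [Finset.mul_sum]
        refine Finset.sum_le_sum fun p _ => ?_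
        by_cases hp : ∀ l, cell (p l).1 = cell (p l).2
        · simp only [hp, if_true]
          rw [mul_comm]
          refine mul_le_mul_of_nonneg_left ?_ (Finset.prod_nonneg fun l _ => hh0 _)
          refine half_le_prod_cos hn hK _ fun i => ?_
          have hq : ∀ l, |1 / ((d : ℝ) * M) * ((((p l).1 : ℕ) : ℝ) - (((p l).2 : ℕ) : ℝ))|
              ≤ 1 / (d * K) := by
            intro l
            rw [abs_mul, abs_of_pos (by positivity)]
            have := hcell _ _ (hp l)
            rw [← le_div_iff₀ hK0'] at this
            calc _ ≤ 1 / ((d : ℝ) * M) * (M / K) := by gcongr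
              _ = _ := by field_simp
          refine (abs_freq_le hr (by positivity) hq (hw i)).trans (le_of_eq ?_)
          field_simp
        · push Not at hp
          obtain ⟨l, hl⟩ := hp
          rw [Finset.prod_eq_zero (Finset.mem_univ l) (by simp [hl]), mul_zero]
          exact mul_nonneg (Finset.prod_nonneg fun l _ => hh0 _)
            (prod_cos_nonneg hd hr (by omega) w hw p)

/-- The function `(2 cos (θ x_j) - 2 cos (π / M)) ∏ ‖sinePoly (θ x_l)‖ ^ 2` with `θ = 1 / (d M)` has
nonnegative Fourier coefficients, and its frequencies are so small that all the cosines arising in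
its average over the signs are nonnegative. -/
lemma energy_weighted {d n r M : ℕ} (hd : 1 ≤ d) (hr : r ≤ d) (hM : 2 ≤ M)
    (w : Fin n → Fin r → ℝ) (hw : ∀ i l, |w i l| ≤ 1) (j : Fin r) :
    0 ≤ ∑ ε : Fin n → Bool,
      (2 * Real.cos (1 / ((d : ℝ) * M) * ∑ i, rsign (ε i) * w i j) - 2 * Real.cos (Real.pi / M)) *
      ∏ l, ‖sinePoly M (1 / ((d : ℝ) * M) * ∑ i, rsign (ε i) * w i l)‖ ^ 2 := by
  set θ := 1 / ((d : ℝ) * M) with hθ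
  set h : Fin (M + 1) × Fin (M + 1) → ℝ := fun a =>
    Real.sin (Real.pi / M * a.1) * Real.sin (Real.pi / M * a.2) with hh
  set g : Fin (M + 1) × Fin (M + 1) → ℝ := fun a =>
    (if (a.1 : ℕ) = 0 ∨ (a.1 : ℕ) = M then 1 else 0) * Real.sin (Real.pi / M * a.2) with hg
  have hh0 : ∀ a, 0 ≤ h a := fun a => mul_nonneg (sin_profile_nonneg M _ (by omega))
    (sin_profile_nonneg M _ (by omega))
  have hg0 : ∀ a, 0 ≤ g a := fun a => mul_nonneg (by split_ifs <;> norm_num)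
    (sin_profile_nonneg M _ (by omega))
  have key := sum_prod_trig w (fun l => if l = j then g else h)
    (fun a => θ * (((a.1 : ℕ) : ℝ) - ((a.2 : ℕ) : ℝ)))
  set P : ℝ := 2 ^ n * ∑ p : Fin r → Fin (M + 1) × Fin (M + 1),
    (∏ l, (if l = j then g else h) (p l)) *
      ∏ i, Real.cos (∑ l, θ * ((((p l).1 : ℕ) : ℝ) - (((p l).2 : ℕ) : ℝ)) * w i l) with hP
  have hP0 : 0 ≤ P := by
    refine mul_nonneg (by positivity) (Finset.sum_nonneg fun p _ => mul_nonneg ?_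
      (prod_cos_nonneg hd hr (by omega) w hw p))
    refine Finset.prod_nonneg fun l _ => ?_
    split_ifs
    · exact hg0 _
    · exact hh0 _
  have hterm : ∀ ε : Fin n → Bool,
      (((2 * Real.cos (θ * ∑ i, rsign (ε i) * w i j) - 2 * Real.cos (Real.pi / M)) *
        ∏ l, ‖sinePoly M (θ * ∑ i, rsign (ε i) * w i l)‖ ^ 2 : ℝ) : ℂ)
      = Real.sin (Real.pi / M) * ∏ l, ∑ a, (((if l = j then g else h) a : ℝ) : ℂ) *
        exp (I * ((θ * (((a.1 : ℕ) : ℝ) - ((a.2 : ℕ) : ℝ)) * ∑ i, rsign (ε i) * w i l : ℝ) : ℂ)) := by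
    intro ε
    rw [← Finset.mul_prod_erase _ _ (Finset.mem_univ j),
      ← Finset.mul_prod_erase _ _ (Finset.mem_univ j)]
    have e1 : ∏ l ∈ Finset.univ.erase j, ∑ a, (((if l = j then g else h) a : ℝ) : ℂ) *
        exp (I * ((θ * (((a.1 : ℕ) : ℝ) - ((a.2 : ℕ) : ℝ)) * ∑ i, rsign (ε i) * w i l : ℝ) : ℂ))
        = ∏ l ∈ Finset.univ.erase j,
          ((‖sinePoly M (θ * ∑ i, rsign (ε i) * w i l)‖ ^ 2 : ℝ) : ℂ) := by
      refine Finset.prod_congr rfl fun l hl => ?_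
      rw [if_neg (Finset.ne_of_mem_erase hl), sinePoly_mul_conj]
    rw [e1, if_pos rfl, ← endpoint_mul_conj M hM]
    have e2 := two_cos_mul_sinePoly M hM (θ * ∑ i, rsign (ε i) * w i j)
    have e3 : ((‖sinePoly M (θ * ∑ i, rsign (ε i) * w i j)‖ ^ 2 : ℝ) : ℂ)
        = sinePoly M (θ * ∑ i, rsign (ε i) * w i j) *
          (starRingEnd ℂ) (sinePoly M (θ * ∑ i, rsign (ε i) * w i j)) := by
      rw [Complex.mul_conj', Complex.ofReal_pow]
    rw [Complex.ofReal_mul, Complex.ofReal_mul, e3, Complex.ofReal_prod]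
    generalize sinePoly M (θ * ∑ i, rsign (ε i) * w i j) = D at e2 ⊢
    generalize ∏ l ∈ Finset.univ.erase j,
          ((‖sinePoly M (θ * ∑ i, rsign (ε i) * w i l)‖ ^ 2 : ℝ) : ℂ) = Q
    generalize exp (I * ((θ * (∑ i, rsign (ε i) * w i j) * M : ℝ) : ℂ)) = ex at e2 ⊢
    rw [Complex.ofReal_sub, Complex.ofReal_mul, Complex.ofReal_mul, Complex.ofReal_ofNat]
    linear_combination (starRingEnd ℂ) D * Q * e2
  have htot : ∑ ε : Fin n → Bool,
      (2 * Real.cos (θ * ∑ i, rsign (ε i) * w i j) - 2 * Real.cos (Real.pi / M)) *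
      ∏ l, ‖sinePoly M (θ * ∑ i, rsign (ε i) * w i l)‖ ^ 2 = Real.sin (Real.pi / M) * P := by
    apply Complex.ofReal_injective
    rw [Complex.ofReal_sum, Complex.ofReal_mul, ← key, Finset.mul_sum]
    exact Finset.sum_congr rfl fun ε _ => hterm ε
  rw [htot]
  have := sin_profile_nonneg M 1 (by omega)
  rw [Nat.cast_one, mul_one] at this
  exact mul_nonneg this hP0

/-- By `energy_weighted`, the weight `∑ j, (2 cos (θ x_j) - 2 cos (π / M)) + 1 / M ^ 2` averaged
against `∏ ‖sinePoly‖ ^ 2` is at least `1 / M ^ 2` times the average of the latter. The weight is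
at most `(10 d + 1) / M ^ 2`, and is nonpositive as soon as some `|x_j| > 6 d ^ 2`. -/
lemma energy_upper {d n r M : ℕ} (hd : 1 ≤ d) (hr : r ≤ d) (hM : 2 ≤ M) (hnM : n ≤ M)
    (w : Fin n → Fin r → ℝ) (hw : ∀ i l, |w i l| ≤ 1) :
    ∑ ε : Fin n → Bool, ∏ l,
        ‖sinePoly M (1 / ((d : ℝ) * M) * ∑ i, rsign (ε i) * w i l)‖ ^ 2 ≤
      (Finset.univ.filter fun ε : Fin n → Bool =>
        ∀ l, |∑ i, rsign (ε i) * w i l| ≤ 6 * (d : ℝ) ^ 2).card *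
        ((10 * d + 1) * (profileMass M ^ 2) ^ r) := by
  have hd' : (1 : ℝ) ≤ d := by exact_mod_cast hd
  have hM' : (0 : ℝ) < M := by exact_mod_cast (by omega : 0 < M)
  set θ := 1 / ((d : ℝ) * M) with hθ
  set F : (Fin n → Bool) → Fin r → ℝ := fun ε l => ∑ i, rsign (ε i) * w i l with hF
  set Q : (Fin n → Bool) → ℝ := fun ε => ∏ l, ‖sinePoly M (θ * F ε l)‖ ^ 2 with hQ
  set G := Finset.univ.filter fun ε : Fin n → Bool => ∀ l, |F ε l| ≤ 6 * (d : ℝ) ^ 2 with hG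
  change ∑ ε, Q ε ≤ G.card * ((10 * d + 1) * (profileMass M ^ 2) ^ r)
  have hQ0 : ∀ ε, 0 ≤ Q ε := fun ε => Finset.prod_nonneg fun l _ => by positivity
  have hQ1 : ∀ ε, Q ε ≤ (profileMass M ^ 2) ^ r := by
    intro ε
    calc Q ε ≤ ∏ _l : Fin r, profileMass M ^ 2 := by
          refine Finset.prod_le_prod (fun l _ => by positivity) fun l _ => ?_
          gcongr
          exact norm_sinePoly_le _ _
      _ = _ := by simp
  set c : (Fin n → Bool) → ℝ := fun ε =>
    ∑ j, (2 * Real.cos (θ * F ε j) - 2 * Real.cos (Real.pi / M)) with hc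
  have hpos : 0 ≤ ∑ ε, c ε * Q ε := by
    simp only [hc, Finset.sum_mul]
    rw [Finset.sum_comm]
    exact Finset.sum_nonneg fun j _ => energy_weighted hd hr hM w hw j
  have hφ : 2 - 2 * Real.cos (Real.pi / M) ≤ 10 / (M : ℝ) ^ 2 := by
    have h1 := Real.one_sub_sq_div_two_le_cos (x := Real.pi / M)
    have h2 : (Real.pi / M) ^ 2 ≤ 10 / (M : ℝ) ^ 2 := by
      rw [div_pow]
      gcongr
      nlinarith [Real.pi_lt_d2, Real.pi_gt_three]
    linarith
  have hsum : ∀ ε, c ε = r * (2 - 2 * Real.cos (Real.pi / M))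
      - ∑ j, (2 - 2 * Real.cos (θ * F ε j)) := by
    intro ε
    simp only [hc, Finset.sum_sub_distrib, Finset.sum_const, Finset.card_univ, Fintype.card_fin,
      nsmul_eq_mul]
    ring
  have hr' : (r : ℝ) ≤ d := by exact_mod_cast hr
  have hrφ : r * (2 - 2 * Real.cos (Real.pi / M)) ≤ 10 * d / (M : ℝ) ^ 2 := by
    calc r * (2 - 2 * Real.cos (Real.pi / M)) ≤ d * (10 / (M : ℝ) ^ 2) := by
          gcongr
          linarith [Real.cos_le_one (Real.pi / M)]
      _ = _ := by ring
  have hnn : ∀ t : ℝ, 0 ≤ 2 - 2 * Real.cos t := fun t => by linarith [Real.cos_le_one t]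
  have hgood : ∀ ε, c ε + 1 / (M : ℝ) ^ 2 ≤ (10 * d + 1) / (M : ℝ) ^ 2 := by
    intro ε
    have := Finset.sum_nonneg fun j (_ : j ∈ Finset.univ) => hnn (θ * F ε j)
    rw [hsum, add_div]
    linarith
  have hbad : ∀ ε, ε ∉ G → c ε + 1 / (M : ℝ) ^ 2 ≤ 0 := by
    intro ε hε
    simp only [hG, Finset.mem_filter, Finset.mem_univ, true_and, not_forall, not_le] at hε
    obtain ⟨j, hj⟩ := hε
    have h1 := Finset.single_le_sum (fun j _ => hnn (θ * F ε j)) (Finset.mem_univ j)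
    have hFn : |F ε j| ≤ n := by
      calc |F ε j| ≤ ∑ i, |rsign (ε i) * w i j| := Finset.abs_sum_le_sum_abs _ _
        _ ≤ ∑ _i : Fin n, (1 : ℝ) := by
          refine Finset.sum_le_sum fun i _ => ?_
          rw [abs_mul]
          have : |rsign (ε i)| = 1 := by unfold rsign; split_ifs <;> simp
          rw [this, one_mul]
          exact hw i j
        _ = n := by simp
    have hθ0 : 0 < θ := by positivity
    have hθF : |θ * F ε j| ≤ Real.pi := by
      rw [abs_mul, abs_of_pos hθ0]
      have hnM' : (n : ℝ) ≤ M := by exact_mod_cast hnM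
      calc θ * |F ε j| ≤ θ * M := by gcongr; linarith
        _ = 1 / d := by rw [hθ]; field_simp
        _ ≤ 1 := by rw [div_le_one (by linarith)]; exact hd'
        _ ≤ Real.pi := by linarith [Real.pi_gt_three]
    have h2 := Real.cos_le_one_sub_mul_cos_sq hθF
    have hπ : (2 : ℝ) / 10 ≤ 2 / Real.pi ^ 2 := by
      gcongr
      nlinarith [Real.pi_lt_d2, Real.pi_gt_three]
    have hF2 : 36 * (d : ℝ) ^ 4 ≤ F ε j ^ 2 := by
      rw [← sq_abs (F ε j)]
      calc 36 * (d : ℝ) ^ 4 = (6 * (d : ℝ) ^ 2) ^ 2 := by ring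
        _ ≤ _ := by gcongr
    have h3 : (10 * d + 1) / (M : ℝ) ^ 2 ≤ 2 - 2 * Real.cos (θ * F ε j) := by
      have h4 : 2 / 10 * (θ * F ε j) ^ 2 ≤ 2 / Real.pi ^ 2 * (θ * F ε j) ^ 2 := by gcongr
      have h5 : (10 * d + 1) / (M : ℝ) ^ 2 ≤ 2 * (2 / 10 * (θ * F ε j) ^ 2) := by
        have e : 2 * (2 / 10 * (θ * F ε j) ^ 2) = (4 / 10 * (F ε j ^ 2 / (d : ℝ) ^ 2)) / (M : ℝ) ^ 2 := by
          rw [hθ]; field_simp; ring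
        rw [e]
        gcongr
        have : 36 * (d : ℝ) ^ 2 ≤ F ε j ^ 2 / (d : ℝ) ^ 2 := by
          rw [le_div_iff₀ (by positivity)]
          calc _ = 36 * (d : ℝ) ^ 4 := by ring
            _ ≤ _ := hF2
        nlinarith
      linarith
    rw [hsum]
    rw [add_div] at h3
    linarith
  have hMs : 0 < 1 / (M : ℝ) ^ 2 := by positivity
  have hfin : 1 / (M : ℝ) ^ 2 * ∑ ε, Q ε ≤
      1 / (M : ℝ) ^ 2 * (G.card * ((10 * d + 1) * (profileMass M ^ 2) ^ r)) := by
    calc 1 / (M : ℝ) ^ 2 * ∑ ε, Q ε ≤ ∑ ε, (c ε + 1 / (M : ℝ) ^ 2) * Q ε := by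
          simp only [add_mul, Finset.sum_add_distrib, ← Finset.mul_sum]
          linarith
      _ ≤ ∑ ε ∈ G, (10 * d + 1) / (M : ℝ) ^ 2 * (profileMass M ^ 2) ^ r := by
          rw [← Finset.sum_filter_add_sum_filter_not Finset.univ
            (fun ε => ∀ l, |F ε l| ≤ 6 * (d : ℝ) ^ 2)]
          have hb : ∑ ε ∈ Finset.univ.filter (fun ε => ¬ ∀ l, |F ε l| ≤ 6 * (d : ℝ) ^ 2),
              (c ε + 1 / (M : ℝ) ^ 2) * Q ε ≤ 0 := by
            refine Finset.sum_nonpos fun ε hε => mul_nonpos_of_nonpos_of_nonneg (hbad ε ?_) (hQ0 ε)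
            simpa [hG] using hε
          have hg : ∑ ε ∈ G, (c ε + 1 / (M : ℝ) ^ 2) * Q ε
              ≤ ∑ ε ∈ G, (10 * d + 1) / (M : ℝ) ^ 2 * (profileMass M ^ 2) ^ r := by
            refine Finset.sum_le_sum fun ε _ => ?_
            exact mul_le_mul (hgood ε) (hQ1 ε) (hQ0 ε) (by positivity)
          linarith
      _ = _ := by
          rw [Finset.sum_const, nsmul_eq_mul]
          ring
  exact le_of_mul_le_mul_left hfin hMs

/-- Signed sums of `n` vectors of `[-1, 1] ^ r` lie in a box of constant size with probability at
least a constant times `n ^ (-d / 2)`, when `K` is of order `√n`. -/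
lemma small_ball {d n r K : ℕ} (hd : 1 ≤ d) (hn : 1 ≤ n) (hr : r ≤ d) (hK : n ≤ K ^ 2)
    (w : Fin n → Fin r → ℝ) (hw : ∀ i l, |w i l| ≤ 1) :
    (2 : ℝ) ^ n ≤ (Finset.univ.filter fun ε : Fin n → Bool =>
        ∀ l, |∑ i, rsign (ε i) * w i l| ≤ 6 * (d : ℝ) ^ 2).card *
        (2 * (10 * d + 1) * (K + 1) ^ d) := by
  -- `M = 2 * n` ensures `2 ≤ M` and `n ≤ M`
  have h1 := (energy_lower (M := 2 * n) hd hn hr (by omega) hK w hw).trans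
    (energy_upper hd hr (by omega) (by omega) w hw)
  set G := (Finset.univ.filter fun ε : Fin n → Bool =>
        ∀ l, |∑ i, rsign (ε i) * w i l| ≤ 6 * (d : ℝ) ^ 2).card
  have hs := profileMass_pos (2 * n) (by omega)
  set s := (profileMass (2 * n) ^ 2) ^ r with hs'
  have hs0 : 0 < s := by positivity
  have hKr : (0 : ℝ) < (K + 1) ^ r := by positivity
  rw [div_pow, ← hs'] at h1
  have h2 : (2 : ℝ) ^ n * s ≤ G * (2 * (10 * d + 1) * (K + 1) ^ r) * s := by
    have e : (2 : ℝ) ^ n * (1 / 2 * (s / (K + 1) ^ r)) = 2 ^ n * s / (2 * (K + 1) ^ r) := by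
      field_simp
    rw [e, div_le_iff₀ (by positivity)] at h1
    linarith
  refine (le_of_mul_le_mul_right h2 hs0).trans ?_
  gcongr
  linarith [Nat.cast_nonneg (α := ℝ) K]

end Fourier

/-! ### Combining the two parts -/

/-- If the signs outside `J` put the partial sum into the zonotope of `J`, the signs on `J` can be
chosen so that the full sum has norm at most `√d`. -/
lemma exists_correction {d n : ℕ} (V : Fin n → EuclideanSpace ℝ (Fin d)) (hV : ∀ i, ‖V i‖ = 1)
    (J : Finset (Fin n)) (ε : Fin n → Bool)
    (h : -∑ i ∈ Jᶜ, rsign (ε i) • V i ∈ zonotope V J) :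
    ∃ ε' : Fin n → Bool, (∀ i ∉ J, ε' i = ε i) ∧ ‖signedSum V ε'‖ ≤ Real.sqrt d := by
  obtain ⟨x, hx, hxe⟩ := h
  obtain ⟨ε₀, hε₀⟩ := exists_rounding V (fun i => (hV i).le) J x hx
  refine ⟨J.piecewise ε₀ ε, fun i hi => Finset.piecewise_eq_of_notMem _ _ _ hi, ?_⟩
  have hsum : signedSum V (J.piecewise ε₀ ε)
      = ∑ i ∈ J, rsign (ε₀ i) • V i - ∑ i ∈ J, x i • V i := by
    rw [← hxe, sub_neg_eq_add, signedSum, ← Finset.sum_add_sum_compl J]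
    congr 1
    · exact Finset.sum_congr rfl fun i hi => by rw [Finset.piecewise_eq_of_mem _ _ _ hi]
    · refine Finset.sum_congr rfl fun i hi => ?_
      rw [Finset.piecewise_eq_of_notMem _ _ _ (Finset.mem_compl.1 hi)]
  rw [hsum]
  apply Real.le_sqrt_of_sq_le
  simpa using hε₀

/-- A map on sign vectors that changes only coordinates in `J` is at most `2 ^ |J|` to one. -/
lemma card_le_of_correction {n : ℕ} (J : Finset (Fin n)) (G H : Finset (Fin n → Bool))
    (h : ∀ ε ∈ G, ∃ ε' ∈ H, ∀ i ∉ J, ε' i = ε i) : G.card ≤ H.card * 2 ^ J.card := by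
  choose! Φ hΦ hΦJ using h
  have hcard : (H ×ˢ (Finset.univ : Finset (J → Bool))).card = H.card * 2 ^ J.card := by
    rw [Finset.card_product]
    simp
  rw [← hcard]
  refine Finset.card_le_card_of_injOn (fun ε => (Φ ε, fun i : J => ε i)) ?_ ?_
  · intro ε hε
    simpa using hΦ ε hε
  · intro ε hε ε' hε' he
    simp only [Prod.mk.injEq] at he
    funext i
    by_cases hi : i ∈ J
    · exact congrFun he.2 ⟨i, hi⟩
    · rw [← hΦJ ε hε i hi, he.1, hΦJ ε' hε' i hi]

lemma two_pow_le_card {d n K : ℕ} (hd : 1 ≤ d) (hn : 1 ≤ n) (hK : n ≤ K ^ 2)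
    (V : Fin n → EuclideanSpace ℝ (Fin d)) (hV : ∀ i, ‖V i‖ = 1) :
    (2 : ℝ) ^ n ≤ (Finset.univ.filter fun ε : Fin n → Bool =>
        ‖signedSum V ε‖ ≤ Real.sqrt d).card * 2 ^ (6 * d ^ 3 * d) *
        (2 * (10 * d + 1) * (K + 1) ^ d) := by
  obtain ⟨J, -, hJc, r, hr, b, a, ha, hb⟩ := exists_absorbing_frame V Finset.univ (6 * d ^ 2)
    (6 * d ^ 3) (by rw [finrank_euclideanSpace_fin]; exact le_of_eq (by ring))
  rw [finrank_euclideanSpace_fin] at hJc hr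
  -- vectors with index in `J` do not enter the small ball estimate
  set w : Fin n → Fin r → ℝ := fun i l => if i ∈ J then 0 else a i l with hw
  have hw1 : ∀ i l, |w i l| ≤ 1 := by
    intro i l
    simp only [hw]
    split_ifs with hi
    · simp
    · exact (ha i (by simp [hi])).1 l
  have hball := small_ball hd hn hr hK w hw1
  set G := Finset.univ.filter fun ε : Fin n → Bool =>
    ∀ l, |∑ i, rsign (ε i) * w i l| ≤ 6 * (d : ℝ) ^ 2 with hG
  set H := Finset.univ.filter fun ε : Fin n → Bool => ‖signedSum V ε‖ ≤ Real.sqrt d with hH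
  have hGH : G.card ≤ H.card * 2 ^ J.card := by
    refine card_le_of_correction J G H fun ε hε => ?_
    have hε' : ∀ l, |∑ i, rsign (ε i) * w i l| ≤ 6 * (d : ℝ) ^ 2 := by simpa [hG] using hε
    have hmem := hb (fun l => -∑ i, rsign (ε i) * w i l) (fun l => by
      rw [abs_neg]
      push_cast
      exact hε' l)
    have hF : ∑ l, (-∑ i, rsign (ε i) * w i l) • b l = -∑ i ∈ Jᶜ, rsign (ε i) • V i := by
      simp only [neg_smul, Finset.sum_neg_distrib, Finset.sum_smul]
      rw [Finset.sum_comm, ← Finset.sum_add_sum_compl J]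
      have h0 : ∑ i ∈ J, ∑ l, (rsign (ε i) * w i l) • b l = 0 :=
        Finset.sum_eq_zero fun i hi => Finset.sum_eq_zero fun l _ => by simp [hw, hi]
      rw [h0, zero_add]
      congr 1
      refine Finset.sum_congr rfl fun i hi => ?_
      have hiJ := Finset.mem_compl.1 hi
      conv_rhs => rw [(ha i (by simp [hiJ])).2, Finset.smul_sum]
      refine Finset.sum_congr rfl fun l _ => ?_
      simp [hw, hiJ, mul_smul]
    rw [hF] at hmem
    obtain ⟨ε', h1, h2⟩ := exists_correction V hV J ε hmem
    exact ⟨ε', by simpa [hH] using h2, h1⟩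
  have hGH' : (G.card : ℝ) ≤ H.card * 2 ^ (6 * d ^ 3 * d) := by
    calc (G.card : ℝ) ≤ H.card * 2 ^ J.card := by exact_mod_cast hGH
      _ ≤ H.card * 2 ^ (6 * d ^ 3 * d) := by
        gcongr
        norm_num
  exact hball.trans (by gcongr)

/-- For every `d ≥ 2` there is `c_d > 0` such that for every `n ≥ 1` and all unit vectors
`v₁, …, vₙ ∈ ℝ^d`, the probability over independent Rademacher signs that
`‖ε₁ v₁ + ⋯ + εₙ vₙ‖ ≤ √d` is at least `c_d / n^(d/2)`. -/
theorem stmt_1 :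
    ∀ d : ℕ, 2 ≤ d →
      ∃ c : ℝ, 0 < c ∧
        ∀ n : ℕ, 1 ≤ n → ∀ V : Fin n → EuclideanSpace ℝ (Fin d),
          (∀ i, ‖V i‖ = 1) →
          c / (n : ℝ) ^ ((d : ℝ) / 2) ≤ probLe V (Real.sqrt d) := by
  intro d hd
  refine ⟨1 / (2 ^ (6 * d ^ 3 * d) * (2 * (10 * d + 1)) * 3 ^ d), by positivity,
    fun n hn V hV => ?_⟩
  have hn' : (1 : ℝ) ≤ n := by exact_mod_cast hn
  have hK : n ≤ (Nat.sqrt n + 1) ^ 2 := (Nat.lt_succ_sqrt' n).le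
  have hmain := two_pow_le_card (by omega) hn hK V hV
  have hKs : (((Nat.sqrt n + 1 : ℕ) : ℝ) + 1) ≤ 3 * Real.sqrt n := by
    have h1 : (Nat.sqrt n : ℝ) ≤ Real.sqrt n := Real.nat_sqrt_le_real_sqrt
    have h2 : 1 ≤ Real.sqrt n := Real.one_le_sqrt.2 hn'
    push_cast
    linarith
  have hcard : (Nat.card {ε : Fin n → Bool // ‖signedSum V ε‖ ≤ Real.sqrt d})
      = (Finset.univ.filter fun ε : Fin n → Bool => ‖signedSum V ε‖ ≤ Real.sqrt d).card := by
    rw [Nat.card_eq_fintype_card, Fintype.card_subtype]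
  rw [probLe, hcard, Real.rpow_div_two_eq_sqrt _ (by positivity), Real.rpow_natCast]
  have hs : 0 < Real.sqrt n := Real.sqrt_pos.2 (by linarith)
  rw [div_div, div_le_div_iff₀ (by positivity) (by positivity), one_mul]
  calc (2 : ℝ) ^ n ≤ _ := hmain
    _ ≤ (Finset.univ.filter fun ε : Fin n → Bool => ‖signedSum V ε‖ ≤ Real.sqrt d).card
        * 2 ^ (6 * d ^ 3 * d) * (2 * (10 * d + 1) * (3 * Real.sqrt n) ^ d) := by
      gcongr
    _ = _ := by
      rw [mul_pow]
      ring
end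

section
/- For every integer d ≥ 1 and all reals α, r > 0 there exists a constant c > 0 (depending only on d, α, r) such that the following holds: if n is even and V = (v_1, …, v_n) is a sequence of unit vectors in ℝ^d satisfying r² ≥ α + Σ_{i=1}^{n/2} ‖v_{2i−1} − v_{2i}‖², then Pr[‖σ_V‖ ≤ r] ≥ c · n^{−d/2}. -/
lemma rsign_sq (b : Bool) : rsign b ^ 2 = 1 := by cases b <;> simp [rsign]

/-- A sum of a function over a finite set vanishes if an involution of the set changes its sign. -/
lemma sum_eq_zero_of_flip {P : Type*} (G : Finset P) (φ : P → P) (hφ : ∀ p, φ (φ p) = p)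
    (hG : ∀ p ∈ G, φ p ∈ G) (f : P → ℝ) (hf : ∀ p ∈ G, f (φ p) = -f p) : ∑ p ∈ G, f p = 0 := by
  have h : ∑ p ∈ G, f p = ∑ p ∈ G, f (φ p) :=
    Finset.sum_bij' (fun p _ => φ p) (fun p _ => φ p) hG hG (fun p _ => hφ p) (fun p _ => hφ p)
      (fun p _ => by rw [hφ])
  rw [Finset.sum_congr rfl hf, Finset.sum_neg_distrib] at h
  linarith

/-- Second moment bound for `D + ∑ tᵢ wᵢ` on a finite set `G`: the involutions `φ i`, which flip the
sign of `t i` alone and fix `D`, make all cross terms cancel. -/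
lemma sum_norm_sq_le {P ι E : Type*} [Fintype ι] [NormedAddCommGroup E]
    [InnerProductSpace ℝ E] (G : Finset P) (D : P → E) (t : ι → P → ℝ) (w : ι → E)
    (φ : ι → P → P) (hφ : ∀ i p, φ i (φ i p) = p) (hG : ∀ i, ∀ p ∈ G, φ i p ∈ G)
    (hD : ∀ i p, D (φ i p) = D p) (ht : ∀ i p, t i (φ i p) = -t i p)
    (htj : ∀ i j p, j ≠ i → t j (φ i p) = t j p) (ht1 : ∀ i p, t i p ^ 2 ≤ 1) :
    ∑ p ∈ G, ‖D p + ∑ i, t i p • w i‖ ^ 2 ≤ ∑ p ∈ G, ‖D p‖ ^ 2 + G.card * ∑ i, ‖w i‖ ^ 2 := by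
  classical
  have hexp : ∀ p, ‖D p + ∑ i, t i p • w i‖ ^ 2 = ‖D p‖ ^ 2
      + 2 * ∑ i, t i p * inner ℝ (D p) (w i)
      + ∑ i, ∑ j, t i p * t j p * inner ℝ (w i) (w j) := by
    intro p
    rw [norm_add_sq_real, ← real_inner_self_eq_norm_sq (∑ i, t i p • w i), inner_sum, sum_inner]
    simp only [inner_sum, real_inner_smul_left, real_inner_smul_right]
    congr 1
    exact Finset.sum_congr rfl fun i _ => Finset.sum_congr rfl fun j _ => by ring
  have hcross : ∑ p ∈ G, ∑ i, t i p * inner ℝ (D p) (w i) = 0 := by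
    rw [Finset.sum_comm]
    refine Finset.sum_eq_zero fun i _ => ?_
    refine sum_eq_zero_of_flip G (φ i) (hφ i) (hG i) _ fun p _ => ?_
    rw [ht, hD]; ring
  have hdiag : ∀ i, ∑ j, ∑ p ∈ G, t i p * t j p * inner ℝ (w i) (w j)
      ≤ G.card * ‖w i‖ ^ 2 := by
    intro i
    rw [Finset.sum_eq_single i]
    · rw [← nsmul_eq_mul]
      refine Finset.sum_le_card_nsmul _ _ _ fun p _ => ?_
      rw [real_inner_self_eq_norm_sq, ← sq]
      exact mul_le_of_le_one_left (sq_nonneg _) (ht1 i p)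
    · intro j _ hj
      refine sum_eq_zero_of_flip G (φ i) (hφ i) (hG i) _ fun p _ => ?_
      rw [ht, htj i j p hj]; ring
    · simp
  have hquad : ∑ p ∈ G, ∑ i, ∑ j, t i p * t j p * inner ℝ (w i) (w j)
      ≤ G.card * ∑ i, ‖w i‖ ^ 2 := by
    rw [Finset.sum_comm, Finset.mul_sum]
    refine Finset.sum_le_sum fun i _ => ?_
    rw [Finset.sum_comm]
    exact hdiag i
  simp only [hexp, Finset.sum_add_distrib, ← Finset.mul_sum, hcross]
  linarith

/-- Markov's inequality on a finite set, as a lower bound for the number of points where `f ≤ B`. -/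
lemma markov_card {P : Type*} (G : Finset P) (f : P → ℝ) (hf : ∀ p, 0 ≤ f p) (B M : ℝ)
    (hM : ∑ p ∈ G, f p ≤ G.card * M) :
    (B - M) * G.card ≤ B * (G.filter fun p => f p ≤ B).card := by
  have h1 : ((G.filter fun p => ¬ f p ≤ B).card : ℝ) * B ≤ ∑ p ∈ G, f p := by
    rw [← nsmul_eq_mul]
    refine (Finset.card_nsmul_le_sum _ f B fun p hp => ?_).trans
      (Finset.sum_le_sum_of_subset_of_nonneg (Finset.filter_subset _ _) fun p _ _ => hf p)
    exact (not_le.1 (Finset.mem_filter.1 hp).2).le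
  have h2 : ((G.filter fun p => f p ≤ B).card : ℝ) + (G.filter fun p => ¬ f p ≤ B).card
      = G.card := by
    exact_mod_cast Finset.card_filter_add_card_filter_not (s := G) (fun p => f p ≤ B)
  rw [← h2] at hM ⊢
  nlinarith

/-- Two independent copies of `∑ xᵢ uᵢ`, where `‖uᵢ‖ ≤ 1`, are within distance `δ` of each other
with probability at least a constant times `(2m)^{-d/2}`. -/
lemma card_close_pairs (d : ℕ) (hd : 1 ≤ d) (δ : ℝ) (hδ : 0 < δ) :
    ∃ A : ℝ, 0 < A ∧ ∀ m : ℕ, 1 ≤ m → ∀ u : Fin m → EuclideanSpace ℝ (Fin d),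
      (∀ i, ‖u i‖ ≤ 1) →
      (4 : ℝ) ^ m ≤ A * ((2 * m : ℕ) : ℝ) ^ ((d : ℝ) / 2) *
        ((Finset.univ.filter fun p : (Fin m → Bool) × (Fin m → Bool) =>
          ‖∑ i, (rsign (p.1 i) - rsign (p.2 i)) • u i‖ ≤ δ).card : ℝ) := by
  classical
  have hd0 : (0 : ℝ) < d := by exact_mod_cast hd
  -- the side of a cube of diameter `δ`
  set h : ℝ := δ / √d with hh
  have hh0 : 0 < h := by positivity
  have hdh : (d : ℝ) * h ^ 2 = δ ^ 2 := by
    rw [hh, div_pow, Real.sq_sqrt hd0.le]; field_simp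
  refine ⟨4 * (2 / h + 2) ^ d, by positivity, fun m hm u hu => ?_⟩
  set Z : (Fin m → Bool) → EuclideanSpace ℝ (Fin d) := fun x => ∑ i, rsign (x i) • u i with hZ
  set R : ℝ := √((2 * m : ℕ) : ℝ) with hR
  have hm1 : (1 : ℝ) ≤ m := by exact_mod_cast hm
  have hR2 : R ^ 2 = 2 * m := by rw [hR, Real.sq_sqrt (by positivity)]; push_cast; ring
  have hR0 : 0 ≤ R := Real.sqrt_nonneg _
  have hR1 : 1 ≤ R := by nlinarith
  have hRd : R ^ d = ((2 * m : ℕ) : ℝ) ^ ((d : ℝ) / 2) := by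
    rw [hR, Real.sqrt_eq_rpow, ← Real.rpow_natCast, ← Real.rpow_mul (by positivity)]
    congr 1; ring
  have hmom : ∑ x : Fin m → Bool, ‖Z x‖ ^ 2
      ≤ (Finset.univ : Finset (Fin m → Bool)).card * (m : ℝ) := by
    have key := sum_norm_sq_le (Finset.univ : Finset (Fin m → Bool))
      (fun _ => (0 : EuclideanSpace ℝ (Fin d))) (fun i x => rsign (x i)) u
      (fun i x => Function.update x i (!x i)) (by intro i x; simp) (by simp) (by simp)
      (by intro i x; simp [rsign_not]) (by intro i j x hj; simp [hj])
      (by intro i x; simp [rsign_sq])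
    simp only [zero_add, norm_zero] at key
    have hsum : ∑ i, ‖u i‖ ^ 2 ≤ (m : ℝ) := by
      calc ∑ i, ‖u i‖ ^ 2 ≤ ∑ _i : Fin m, (1 : ℝ) :=
            Finset.sum_le_sum fun i _ => pow_le_one₀ (norm_nonneg _) (hu i)
        _ = m := by simp
    refine key.trans ?_
    simp only [ne_eq, OfNat.ofNat_ne_zero, not_false_eq_true, zero_pow, Finset.sum_const_zero,
      zero_add]
    gcongr
  -- at least half of the sign vectors give `‖Z‖ ≤ R`
  set S : Finset (Fin m → Bool) := Finset.univ.filter fun x => ‖Z x‖ ^ 2 ≤ R ^ 2 with hS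
  have hShalf : (2 : ℝ) ^ m ≤ 2 * S.card := by
    have := markov_card Finset.univ (fun x => ‖Z x‖ ^ 2) (fun _ => sq_nonneg _) (R ^ 2) m hmom
    rw [← hS, hR2] at this
    have hc : ((Finset.univ : Finset (Fin m → Bool)).card : ℝ) = 2 ^ m := by simp
    rw [hc] at this
    nlinarith
  set q : (Fin m → Bool) → Fin d → ℤ := fun x k => ⌊Z x k / h⌋ with hq
  set C : Finset (Fin d → ℤ) :=
    Fintype.piFinset fun _ => Finset.Icc ⌊-R / h⌋ ⌊R / h⌋ with hC
  have hqC : ∀ x ∈ S, q x ∈ C := by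
    intro x hx
    have hx' : ‖Z x‖ ≤ R := by
      have := (Finset.mem_filter.1 hx).2
      exact (sq_le_sq₀ (norm_nonneg _) hR0).1 this
    rw [hC, Fintype.mem_piFinset]
    intro k
    have hk : |Z x k| ≤ R := by
      have := PiLp.norm_apply_le (Z x) k
      rw [Real.norm_eq_abs] at this
      exact this.trans hx'
    rw [abs_le] at hk
    rw [Finset.mem_Icc]
    exact ⟨Int.floor_le_floor (by gcongr; exact hk.1), Int.floor_le_floor (by gcongr; exact hk.2)⟩
  have hCcard : (C.card : ℝ) ≤ (2 / h + 2) ^ d * ((2 * m : ℕ) : ℝ) ^ ((d : ℝ) / 2) := by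
    rw [← hRd, ← mul_pow, hC, Fintype.card_piFinset]
    simp only [Finset.prod_const, Finset.card_univ, Fintype.card_fin, Nat.cast_pow]
    refine pow_le_pow_left₀ (by positivity) ?_ d
    rw [Int.card_Icc]
    have hle : ⌊-R / h⌋ ≤ ⌊R / h⌋ := Int.floor_le_floor (by gcongr; linarith)
    have hcast : (((⌊R / h⌋ + 1 - ⌊-R / h⌋).toNat : ℕ) : ℝ)
        = (⌊R / h⌋ : ℝ) + 1 - (⌊-R / h⌋ : ℝ) := by
      have : (((⌊R / h⌋ + 1 - ⌊-R / h⌋).toNat : ℕ) : ℤ) = ⌊R / h⌋ + 1 - ⌊-R / h⌋ :=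
        Int.toNat_of_nonneg (by omega)
      exact_mod_cast congrArg (Int.cast : ℤ → ℝ) this
    rw [hcast]
    have h1 := Int.floor_le (R / h)
    have h2 := Int.lt_floor_add_one (-R / h)
    have h3 : -R / h = -(R / h) := by ring
    have h4 : (2 / h + 2) * R = 2 * (R / h) + 2 * R := by ring
    rw [h4]; rw [h3] at h2 ⊢
    linarith
  -- points in the same cube are `δ`-close
  have hclose : ∀ x y, q x = q y → ‖∑ i, (rsign (x i) - rsign (y i)) • u i‖ ≤ δ := by
    intro x y hxy
    have hdiff : ∑ i, (rsign (x i) - rsign (y i)) • u i = Z x - Z y := by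
      simp only [hZ, sub_smul, Finset.sum_sub_distrib]
    rw [hdiff, ← sq_le_sq₀ (norm_nonneg _) hδ.le, EuclideanSpace.real_norm_sq_eq, ← hdh]
    calc ∑ k, (Z x - Z y) k ^ 2 ≤ ∑ _k : Fin d, h ^ 2 := by
          refine Finset.sum_le_sum fun k _ => ?_
          have hk := Int.abs_sub_lt_one_of_floor_eq_floor (congrFun hxy k)
          rw [← sub_div, abs_div, abs_of_pos hh0, div_lt_one hh0] at hk
          rw [PiLp.sub_apply, ← sq_abs]
          exact pow_le_pow_left₀ (abs_nonneg _) hk.le 2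
      _ = d * h ^ 2 := by simp
  set G := Finset.univ.filter fun p : (Fin m → Bool) × (Fin m → Bool) =>
          ‖∑ i, (rsign (p.1 i) - rsign (p.2 i)) • u i‖ ≤ δ with hGdef
  have hfib : S.card = ∑ c ∈ C, (S.filter fun x => q x = c).card :=
    Finset.card_eq_sum_card_fiberwise hqC
  have hpairs : ∑ c ∈ C, (S.filter fun x => q x = c).card ^ 2 ≤ G.card := by
    have : ∀ c ∈ C, (S.filter fun x => q x = c).card ^ 2
        ≤ (G.filter fun p => q p.1 = c).card := by
      intro c _
      rw [sq, ← Finset.card_product]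
      refine Finset.card_le_card fun p hp => ?_
      simp only [Finset.mem_product, Finset.mem_filter] at hp
      simp only [hGdef, Finset.mem_filter, Finset.mem_univ, true_and]
      exact ⟨hclose _ _ (hp.1.2.trans hp.2.2.symm), hp.1.2⟩
    refine (Finset.sum_le_sum this).trans ?_
    rw [← Finset.card_biUnion]
    · exact Finset.card_le_card (Finset.biUnion_subset.2 fun c _ => Finset.filter_subset _ _)
    · intro c _ c' _ hcc
      refine Finset.disjoint_left.2 fun p hp hp' => hcc ?_
      exact (Finset.mem_filter.1 hp).2.symm.trans (Finset.mem_filter.1 hp').2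
  have hCS : (S.card : ℝ) ^ 2 ≤ C.card * G.card := by
    have h1 : S.card ^ 2 ≤ C.card * ∑ c ∈ C, (S.filter fun x => q x = c).card ^ 2 := by
      rw [hfib]; exact sq_sum_le_card_mul_sum_sq
    exact_mod_cast h1.trans (Nat.mul_le_mul_left _ hpairs)
  have h4 : (4 : ℝ) ^ m = (2 ^ m) ^ 2 := by rw [← pow_mul, mul_comm, pow_mul]; norm_num
  calc (4 : ℝ) ^ m = (2 ^ m) ^ 2 := h4
    _ ≤ (2 * S.card) ^ 2 := pow_le_pow_left₀ (by positivity) hShalf 2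
    _ = 4 * (S.card : ℝ) ^ 2 := by ring
    _ ≤ 4 * (C.card * G.card) := by gcongr
    _ ≤ 4 * (((2 / h + 2) ^ d * ((2 * m : ℕ) : ℝ) ^ ((d : ℝ) / 2)) * G.card) := by gcongr
    _ = _ := by ring

/-- Sign vectors of length `2m` correspond to pairs of sign vectors of length `m`, the signs in the
positions `2i + 1` being negated. -/
lemma card_pairs_le {d m : ℕ} (V : Fin (2 * m) → EuclideanSpace ℝ (Fin d)) (r : ℝ)
    (a b : Fin m → EuclideanSpace ℝ (Fin d))
    (ha : ∀ i : Fin m, a i = V ⟨2 * i.1, by have := i.2; omega⟩)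
    (hb : ∀ i : Fin m, b i = V ⟨2 * i.1 + 1, by have := i.2; omega⟩)
    (T : Finset ((Fin m → Bool) × (Fin m → Bool)))
    (hT : ∀ p ∈ T, ‖∑ i, (rsign (p.1 i) • a i - rsign (p.2 i) • b i)‖ ≤ r) :
    T.card ≤ Nat.card {ε : Fin (2 * m) → Bool // ‖signedSum V ε‖ ≤ r} := by
  classical
  let f : Fin m ⊕ Fin m → Fin (2 * m) :=
    Sum.elim (fun i => ⟨2 * i.1, by have := i.2; omega⟩) (fun i => ⟨2 * i.1 + 1, by have := i.2; omega⟩)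
  have hf : Function.Bijective f := by
    rw [Fintype.bijective_iff_injective_and_card]
    refine ⟨?_, by simp; omega⟩
    rintro (i | i) (j | j) hij <;> simp [f, Fin.ext_iff] at hij ⊢ <;> omega
  let e := Equiv.ofBijective f hf
  let g : (Fin m → Bool) × (Fin m → Bool) → (Fin (2 * m) → Bool) :=
    fun p k => Sum.elim p.1 (fun i => !p.2 i) (e.symm k)
  have hge : ∀ p k, g p (f k) = Sum.elim p.1 (fun i => !p.2 i) k := fun p k => by
    have : e.symm (f k) = k := e.symm_apply_apply k
    simp only [g, this]
  have hsum : ∀ p, signedSum V (g p) = ∑ i, (rsign (p.1 i) • a i - rsign (p.2 i) • b i) := by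
    intro p
    rw [signedSum, ← hf.sum_comp, Fintype.sum_sum_type, ← Finset.sum_add_distrib]
    refine Finset.sum_congr rfl fun i _ => ?_
    rw [hge, hge, ha, hb]
    simp only [Sum.elim_inl, Sum.elim_inr, rsign_not, f, neg_smul, sub_eq_add_neg]
  have hinj : Function.Injective g := by
    intro p p' hpp
    refine Prod.ext (funext fun i => ?_) (funext fun i => ?_)
    · have := congrFun hpp (f (Sum.inl i))
      simpa only [hge, Sum.elim_inl] using this
    · have := congrFun hpp (f (Sum.inr i))
      simpa only [hge, Sum.elim_inr, Bool.not_inj_iff] using this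
  rw [Nat.card_eq_fintype_card, Fintype.card_subtype]
  refine Finset.card_le_card_of_injOn g (fun p hp => ?_) hinj.injOn
  simpa [hsum] using hT p hp

/-- For every `d ≥ 1` and reals `α, r > 0` there is `c > 0` (depending only on `d, α, r`)
such that: if `n = 2m` is even and `V = (v₁, …, vₙ)` is a sequence of unit vectors in `ℝ^d`
with `r² ≥ α + Σ_{i=1}^{n/2} ‖v_{2i−1} − v_{2i}‖²`, then `Pr[‖σ_V‖ ≤ r] ≥ c · n^{−d/2}`. -/
theorem stmt_2 (d : ℕ) (hd : 1 ≤ d) (α r : ℝ) (hα : 0 < α) (hr : 0 < r) :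
    ∃ c : ℝ, 0 < c ∧
      ∀ m : ℕ, ∀ V : Fin (2 * m) → EuclideanSpace ℝ (Fin d),
        (∀ i, ‖V i‖ = 1) →
        α + ∑ i : Fin m,
            ‖V ⟨2 * i.1, by have := i.2; omega⟩ - V ⟨2 * i.1 + 1, by have := i.2; omega⟩‖ ^ 2
          ≤ r ^ 2 →
        c / ((2 * m : ℕ) : ℝ) ^ ((d : ℝ) / 2) ≤ probLe V r := by
  classical
  obtain ⟨A, hA, hclose⟩ := card_close_pairs d hd (√(α / 2)) (by positivity)
  refine ⟨α / (2 * r ^ 2) / A, by positivity, fun m V hV hsum => ?_⟩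
  rcases Nat.eq_zero_or_pos m with rfl | hm
  · -- here the left side is `c / 0 = 0`
    have hd' : (d : ℝ) / 2 ≠ 0 := by
      have : (0 : ℝ) < d := by exact_mod_cast hd
      positivity
    rw [show ((2 * 0 : ℕ) : ℝ) = 0 by simp, Real.zero_rpow hd', div_zero, probLe]
    positivity
  set a : Fin m → EuclideanSpace ℝ (Fin d) := fun i => V ⟨2 * i.1, by have := i.2; omega⟩ with ha
  set b : Fin m → EuclideanSpace ℝ (Fin d) :=
    fun i => V ⟨2 * i.1 + 1, by have := i.2; omega⟩ with hb
  set u : Fin m → EuclideanSpace ℝ (Fin d) := fun i => (2⁻¹ : ℝ) • (a i + b i) with hu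
  have hu1 : ∀ i, ‖u i‖ ≤ 1 := by
    intro i
    have h1 : ‖a i + b i‖ ≤ 2 := by
      refine (norm_add_le _ _).trans ?_
      simp only [ha, hb, hV]; norm_num
    simp only [hu, norm_smul, norm_inv, Real.norm_ofNat]
    linarith
  have hG := hclose m hm u hu1
  set D : (Fin m → Bool) × (Fin m → Bool) → EuclideanSpace ℝ (Fin d) :=
    fun p => ∑ i, (rsign (p.1 i) - rsign (p.2 i)) • u i with hD
  set G := Finset.univ.filter fun p => ‖D p‖ ≤ √(α / 2) with hGdef
  set t : Fin m → (Fin m → Bool) × (Fin m → Bool) → ℝ :=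
    fun i p => (rsign (p.1 i) + rsign (p.2 i)) / 2 with ht
  -- the involution `(xᵢ, yᵢ) ↦ (-yᵢ, -xᵢ)`
  set φ : Fin m → (Fin m → Bool) × (Fin m → Bool) → (Fin m → Bool) × (Fin m → Bool) :=
    fun i p => (Function.update p.1 i (!p.2 i), Function.update p.2 i (!p.1 i)) with hφ
  have hDφ : ∀ i p, D (φ i p) = D p := by
    intro i p
    refine Finset.sum_congr rfl fun j _ => ?_
    by_cases hj : j = i
    · subst hj
      simp only [hφ, Function.update_self, rsign_not]
      congr 1; ring
    · simp only [hφ, Function.update_of_ne hj]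
  have hsplit : ∀ p, ∑ i, (rsign (p.1 i) • a i - rsign (p.2 i) • b i)
      = D p + ∑ i, t i p • (a i - b i) := by
    intro p
    simp only [hD, ht, hu]
    rw [← Finset.sum_add_distrib]
    refine Finset.sum_congr rfl fun i _ => ?_
    module
  have hmom := sum_norm_sq_le G D t (fun i => a i - b i) φ
    (by intro i p; simp [hφ])
    (by
      intro i p hp
      simp only [hGdef, Finset.mem_filter, Finset.mem_univ, true_and] at hp ⊢
      rwa [hDφ])
    hDφ
    (by intro i p; simp only [ht, hφ, Function.update_self, rsign_not]; ring)
    (by intro i j p hj; simp only [ht, hφ, Function.update_of_ne hj])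
    (by
      intro i p
      have h1 := rsign_sq (p.1 i)
      have h2 := rsign_sq (p.2 i)
      simp only [ht]
      nlinarith [sq_nonneg (rsign (p.1 i) - rsign (p.2 i))])
  have hDG : ∑ p ∈ G, ‖D p‖ ^ 2 ≤ G.card * (α / 2) := by
    rw [← nsmul_eq_mul]
    refine Finset.sum_le_card_nsmul _ _ _ fun p hp => ?_
    have h1 := pow_le_pow_left₀ (norm_nonneg _) (Finset.mem_filter.1 hp).2 2
    rwa [Real.sq_sqrt (by positivity)] at h1
  have hM : ∑ p ∈ G, ‖D p + ∑ i, t i p • (a i - b i)‖ ^ 2 ≤ G.card * (r ^ 2 - α / 2) := by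
    have hle : ∑ i, ‖a i - b i‖ ^ 2 ≤ r ^ 2 - α := by linarith
    have := mul_le_mul_of_nonneg_left hle (Nat.cast_nonneg (α := ℝ) G.card)
    nlinarith
  have hmark := markov_card G (fun p => ‖D p + ∑ i, t i p • (a i - b i)‖ ^ 2)
    (fun _ => sq_nonneg _) (r ^ 2) (r ^ 2 - α / 2) hM
  have hcount := card_pairs_le V r a b (fun _ => rfl) (fun _ => rfl)
    (G.filter fun p => ‖D p + ∑ i, t i p • (a i - b i)‖ ^ 2 ≤ r ^ 2) (by
      intro p hp
      rw [hsplit]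
      exact (sq_le_sq₀ (norm_nonneg _) hr.le).1 (Finset.mem_filter.1 hp).2)
  have hcount' : ((G.filter fun p => ‖D p + ∑ i, t i p • (a i - b i)‖ ^ 2 ≤ r ^ 2).card : ℝ)
      ≤ (Nat.card {ε : Fin (2 * m) → Bool // ‖signedSum V ε‖ ≤ r} : ℝ) := by exact_mod_cast hcount
  set N : ℝ := (Nat.card {ε : Fin (2 * m) → Bool // ‖signedSum V ε‖ ≤ r} : ℝ) with hN
  have hGN : α / 2 * G.card ≤ r ^ 2 * N := by
    have := mul_le_mul_of_nonneg_left hcount' (sq_nonneg r)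
    linarith
  have hB : (0 : ℝ) < ((2 * m : ℕ) : ℝ) ^ ((d : ℝ) / 2) := by
    apply Real.rpow_pos_of_pos
    exact_mod_cast (by omega : 0 < 2 * m)
  set B : ℝ := ((2 * m : ℕ) : ℝ) ^ ((d : ℝ) / 2) with hBdef
  rw [probLe, ← hN, pow_mul, show (2 : ℝ) ^ 2 = 4 by norm_num, div_div, div_div,
    div_le_div_iff₀ (by positivity) (by positivity)]
  calc α * 4 ^ m ≤ α * (A * B * G.card) := by gcongr
    _ = 2 * (A * B) * (α / 2 * G.card) := by ring
    _ ≤ 2 * (A * B) * (r ^ 2 * N) := by gcongr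
    _ = _ := by ring
end

section
/- Let V = (v_1, …, v_n) be a sequence of vectors in ℝ^d with n odd, each of norm at most K, let a, b > 0 be reals, and let V̄ = (½(v_1+v_2), ½(v_3+v_4), …, ½(v_{n−2}+v_{n−1})). Then p_{a+b+K}(V) ≥ q_a(V̄) · min_{D ⊆ δ(V)} p_b(D), where D ranges over all subsequences of the difference sequence δ(V) = (v_1−v_2, v_3−v_4, …, v_{n−2}−v_{n−1}). -/
/-- `probDiffLe V r` is the probability that two independent samples `X, X'` of the random
signed sum `σ_V` satisfy `‖X − X'‖ ≤ r`; this is `q_r(V)`. -/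
noncomputable def probDiffLe {d n : ℕ} (V : Fin n → EuclideanSpace ℝ (Fin d)) (r : ℝ) : ℝ :=
  (Nat.card {p : (Fin n → Bool) × (Fin n → Bool) //
      ‖signedSum V p.1 - signedSum V p.2‖ ≤ r} : ℝ) / 4 ^ n

/-- `probSubLe W S r` is `p_r(D)` for the subsequence `D` of `W` given by the index set `S`:
the probability over independent Rademacher signs that `‖Σ_{i ∈ S} εᵢ wᵢ‖ ≤ r`. -/
noncomputable def probSubLe {d n : ℕ} (W : Fin n → EuclideanSpace ℝ (Fin d))
    (S : Finset (Fin n)) (r : ℝ) : ℝ :=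
  (Nat.card {ε : Fin n → Bool // ‖∑ i ∈ S, rsign (ε i) • W i‖ ≤ r} : ℝ) / 2 ^ n

/-- The set of indices at which the two sign vectors agree. -/
def agreeSet {m : ℕ} (p : (Fin m → Bool) × (Fin m → Bool)) : Finset (Fin m) :=
  Finset.univ.filter fun i => p.1 i = p.2 i

/-- Exchange, on the indices where the first two sign vectors agree, their common value with the
value of the third one. -/
def swapOn {m : ℕ} (q : ((Fin m → Bool) × (Fin m → Bool)) × (Fin m → Bool)) :
    ((Fin m → Bool) × (Fin m → Bool)) × (Fin m → Bool) :=
  ((fun i => if q.1.1 i = q.1.2 i then q.2 i else q.1.1 i,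
    fun i => if q.1.1 i = q.1.2 i then q.2 i else q.1.2 i),
    fun i => if q.1.1 i = q.1.2 i then q.1.1 i else q.2 i)

lemma swapOn_swapOn {m : ℕ} (q : ((Fin m → Bool) × (Fin m → Bool)) × (Fin m → Bool)) :
    swapOn (swapOn q) = q := by
  obtain ⟨⟨s, t⟩, e⟩ := q
  simp only [swapOn, Prod.mk.injEq]
  refine ⟨⟨?_, ?_⟩, ?_⟩ <;> funext i <;> by_cases h : s i = t i <;> simp [h]

lemma agreeSet_swapOn {m : ℕ} (q : ((Fin m → Bool) × (Fin m → Bool)) × (Fin m → Bool)) :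
    agreeSet (swapOn q).1 = agreeSet q.1 := by
  ext i
  simp only [agreeSet, Finset.mem_filter, Finset.mem_univ, true_and]
  by_cases h : q.1.1 i = q.1.2 i <;> simp [swapOn, h]

open Classical in
/-- If `A` is invariant under resampling the common signs and `B S e` depends only on `e` restricted
to `S`, then among the pairs satisfying `A` the proportion satisfying `B` is at least any lower
bound `c` for the probabilities of `B S`. -/
lemma count_resample {m : ℕ} (A : (Fin m → Bool) × (Fin m → Bool) → Prop)
    (B : Finset (Fin m) → (Fin m → Bool) → Prop)
    (hA : ∀ q, A (swapOn q).1 ↔ A q.1)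
    (hB : ∀ S e e', (∀ i ∈ S, e i = e' i) → (B S e ↔ B S e'))
    (c : ℝ) (hc : ∀ S, c * 2 ^ m ≤ ((Finset.univ.filter (B S)).card : ℝ)) :
    ((Finset.univ.filter A).card : ℝ) * c ≤
      ((Finset.univ.filter fun p => A p ∧ B (agreeSet p) p.1).card : ℝ) := by
  set T₁ := Finset.univ.filter
    fun q : ((Fin m → Bool) × (Fin m → Bool)) × (Fin m → Bool) =>
      A q.1 ∧ B (agreeSet q.1) q.2 with hT₁
  set T₂ := Finset.univ.filter
    fun q : ((Fin m → Bool) × (Fin m → Bool)) × (Fin m → Bool) =>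
      A q.1 ∧ B (agreeSet q.1) q.1.1 with hT₂
  have hcard : T₁.card = T₂.card := by
    refine Finset.card_nbij' swapOn swapOn ?_ ?_
      (fun q _ => swapOn_swapOn q) (fun q _ => swapOn_swapOn q)
    · intro q hq
      simp only [hT₁, hT₂, Finset.coe_filter, Finset.mem_univ, true_and, Set.mem_ofPred_eq,
        agreeSet_swapOn, hA] at hq ⊢
      refine ⟨hq.1, (hB _ _ _ ?_).1 hq.2⟩
      intro i hi
      have : q.1.1 i = q.1.2 i := by simpa [agreeSet] using hi
      simp [swapOn, this]
    · intro q hq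
      simp only [hT₁, hT₂, Finset.coe_filter, Finset.mem_univ, true_and, Set.mem_ofPred_eq,
        agreeSet_swapOn, hA] at hq ⊢
      refine ⟨hq.1, (hB _ _ _ ?_).1 hq.2⟩
      intro i hi
      have : q.1.1 i = q.1.2 i := by simpa [agreeSet] using hi
      simp [swapOn, this]
  have h₁ : T₁.card = ∑ p ∈ Finset.univ.filter A,
      (Finset.univ.filter (B (agreeSet p))).card := by
    rw [hT₁, Finset.card_filter, Fintype.sum_prod_type, Finset.sum_filter]
    refine Finset.sum_congr rfl fun p _ => ?_
    by_cases h : A p <;> simp [h]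
  have h₂ : T₂.card = (Finset.univ.filter fun p => A p ∧ B (agreeSet p) p.1).card * 2 ^ m := by
    have : T₂ = (Finset.univ.filter fun p : (Fin m → Bool) × (Fin m → Bool) =>
        A p ∧ B (agreeSet p) p.1) ×ˢ (Finset.univ : Finset (Fin m → Bool)) := by
      ext q
      simp [hT₂]
    rw [this, Finset.card_product]
    simp
  have h₃ : ((Finset.univ.filter A).card : ℝ) * (c * 2 ^ m) ≤ (T₁.card : ℝ) := by
    rw [h₁, Nat.cast_sum, ← nsmul_eq_mul]
    exact Finset.card_nsmul_le_sum _ _ _ fun p _ => hc _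
  rw [hcard, h₂] at h₃
  push_cast at h₃
  have hpos : (0 : ℝ) < 2 ^ m := by positivity
  nlinarith

lemma sum_range_pairs {E : Type*} [AddCommMonoid E] (g : ℕ → E) (m : ℕ) :
    ∑ j ∈ Finset.range (2 * m), g j = ∑ i ∈ Finset.range m, (g (2 * i) + g (2 * i + 1)) := by
  induction m with
  | zero => simp
  | succ k ih =>
    rw [show 2 * (k + 1) = 2 * k + 1 + 1 by ring, Finset.sum_range_succ, Finset.sum_range_succ,
      Finset.sum_range_succ, ih, add_assoc]

lemma sum_fin_pairs {E : Type*} [AddCommMonoid E] {m : ℕ} (f : Fin (2 * m + 1) → E) :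
    ∑ j, f j = ∑ i : Fin m, (f ⟨2 * i.1, by omega⟩ + f ⟨2 * i.1 + 1, by omega⟩)
      + f ⟨2 * m, by omega⟩ := by
  have h' := Finset.sum_range (n := 2 * m + 1)
    fun j : ℕ => if h : j < 2 * m + 1 then f ⟨j, h⟩ else 0
  simp only [Fin.is_lt, dif_pos, Fin.eta] at h'
  rw [← h', Finset.sum_range_succ, sum_range_pairs, Finset.sum_range]
  congr 1
  · refine Finset.sum_congr rfl fun i _ => ?_
    rw [dif_pos, dif_pos]
  · rw [dif_pos]

/-- The sign vector of length `2m + 1` with signs `sᵢ, -tᵢ` on the `i`-th pair and last sign `l`.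
The negation makes `s - t` collect exactly the pairs with equal signs. -/
def interleave {m : ℕ} (s t : Fin m → Bool) (l : Bool) (j : Fin (2 * m + 1)) : Bool :=
  if h : j.1 < 2 * m then
    if j.1 % 2 = 0 then s ⟨j.1 / 2, by omega⟩ else !t ⟨j.1 / 2, by omega⟩
  else l

lemma interleave_even {m : ℕ} (s t : Fin m → Bool) (l : Bool) (i : Fin m) :
    interleave s t l ⟨2 * i.1, by omega⟩ = s i := by
  have := i.2
  simp [interleave]

lemma interleave_odd {m : ℕ} (s t : Fin m → Bool) (l : Bool) (i : Fin m) :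
    interleave s t l ⟨2 * i.1 + 1, by omega⟩ = !t i := by
  have h1 : 2 * i.1 + 1 < 2 * m := by omega
  have h2 : (2 * i.1 + 1) / 2 = i.1 := by omega
  have h3 : (2 * i.1 + 1) % 2 = 1 := by omega
  simp [interleave, h1, h2, h3]

lemma interleave_last {m : ℕ} (s t : Fin m → Bool) (l : Bool) :
    interleave s t l ⟨2 * m, by omega⟩ = l := by
  simp [interleave]

lemma interleave_injective {m : ℕ} :
    Function.Injective fun q : ((Fin m → Bool) × (Fin m → Bool)) × Bool =>
      interleave q.1.1 q.1.2 q.2 := by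
  rintro ⟨⟨s, t⟩, l⟩ ⟨⟨s', t'⟩, l'⟩ h
  simp only [Prod.mk.injEq]
  refine ⟨⟨?_, ?_⟩, ?_⟩
  · funext i
    have := congrFun h ⟨2 * i.1, by omega⟩
    simpa only [interleave_even] using this
  · funext i
    have := congrFun h ⟨2 * i.1 + 1, by omega⟩
    simpa [interleave_odd] using this
  · have := congrFun h ⟨2 * m, by omega⟩
    simpa only [interleave_last] using this

lemma signedSum_interleave {d m : ℕ} (V : Fin (2 * m + 1) → EuclideanSpace ℝ (Fin d))
    (s t : Fin m → Bool) (l : Bool) :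
    signedSum V (interleave s t l) =
      (signedSum (fun i : Fin m => (1 / 2 : ℝ) • (V ⟨2 * i.1, by omega⟩
          + V ⟨2 * i.1 + 1, by omega⟩)) s
        - signedSum (fun i : Fin m => (1 / 2 : ℝ) • (V ⟨2 * i.1, by omega⟩
          + V ⟨2 * i.1 + 1, by omega⟩)) t)
      + ∑ i ∈ agreeSet (s, t), rsign (s i) • (V ⟨2 * i.1, by omega⟩ - V ⟨2 * i.1 + 1, by omega⟩)
      + rsign l • V ⟨2 * m, by omega⟩ := by
  rw [signedSum, sum_fin_pairs, interleave_last]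
  congr 1
  rw [signedSum, signedSum, agreeSet, Finset.sum_filter, ← Finset.sum_sub_distrib,
    ← Finset.sum_add_distrib]
  refine Finset.sum_congr rfl fun i _ => ?_
  rw [interleave_even, interleave_odd]
  dsimp only
  obtain hs | hs := Bool.eq_false_or_eq_true (s i) <;>
    obtain ht | ht := Bool.eq_false_or_eq_true (t i) <;>
    simp [rsign, hs, ht] <;> module

lemma signedSum_sub_swapOn {d m : ℕ} (W : Fin m → EuclideanSpace ℝ (Fin d))
    (q : ((Fin m → Bool) × (Fin m → Bool)) × (Fin m → Bool)) :
    signedSum W (swapOn q).1.1 - signedSum W (swapOn q).1.2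
      = signedSum W q.1.1 - signedSum W q.1.2 := by
  simp only [signedSum, ← Finset.sum_sub_distrib]
  refine Finset.sum_congr rfl fun i _ => ?_
  by_cases h : q.1.1 i = q.1.2 i <;> simp [swapOn, h]

lemma norm_rsign_smul {d : ℕ} (l : Bool) (v : EuclideanSpace ℝ (Fin d)) :
    ‖rsign l • v‖ = ‖v‖ := by
  cases l <;> simp [rsign]

/-- Lemma 2.2 (odd case): for a sequence `V` of `n = 2m + 1` vectors in `ℝ^d`, each of norm
at most `K`, and reals `a, b > 0`, letting `V̄ = (½(v₁+v₂), …, ½(v_{n−2}+v_{n−1}))` and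
`δ(V) = (v₁−v₂, …, v_{n−2}−v_{n−1})`, we have
`p_{a+b+K}(V) ≥ q_a(V̄) · min_{D ⊆ δ(V)} p_b(D)`. -/
theorem stmt_4 (d m : ℕ) (a b K : ℝ) (ha : 0 < a) (hb : 0 < b)
    (V : Fin (2 * m + 1) → EuclideanSpace ℝ (Fin d))
    (hK : ∀ i, ‖V i‖ ≤ K) :
    probDiffLe (fun i : Fin m =>
        (1 / 2 : ℝ) • (V ⟨2 * i.1, by have := i.2; omega⟩
          + V ⟨2 * i.1 + 1, by have := i.2; omega⟩)) a *
      (Finset.univ.inf' Finset.univ_nonempty fun S : Finset (Fin m) =>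
        probSubLe (fun i : Fin m =>
          V ⟨2 * i.1, by have := i.2; omega⟩ - V ⟨2 * i.1 + 1, by have := i.2; omega⟩) S b)
    ≤ probLe V (a + b + K) := by
  classical
  set W : Fin m → EuclideanSpace ℝ (Fin d) := fun i =>
    (1 / 2 : ℝ) • (V ⟨2 * i.1, by omega⟩ + V ⟨2 * i.1 + 1, by omega⟩) with hW
  set δ : Fin m → EuclideanSpace ℝ (Fin d) := fun i =>
    V ⟨2 * i.1, by omega⟩ - V ⟨2 * i.1 + 1, by omega⟩ with hδ
  set c := Finset.univ.inf' Finset.univ_nonempty fun S : Finset (Fin m) => probSubLe δ S b with hc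
  have hcount := count_resample (m := m)
    (fun p => ‖signedSum W p.1 - signedSum W p.2‖ ≤ a)
    (fun S e => ‖∑ i ∈ S, rsign (e i) • δ i‖ ≤ b)
    (fun q => by rw [signedSum_sub_swapOn])
    (fun S e e' h => by
      rw [Finset.sum_congr rfl fun i hi => by rw [h i hi]])
    c
    (fun S => by
      have h : c ≤ probSubLe δ S b := Finset.inf'_le _ (Finset.mem_univ S)
      rw [probSubLe, le_div_iff₀ (by positivity), Nat.card_eq_fintype_card,
        Fintype.card_subtype] at h
      exact h)
  -- Both signs of the last vector are allowed, which accounts for the factor two.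
  have hinj : ((Finset.univ.filter fun p : (Fin m → Bool) × (Fin m → Bool) =>
      ‖signedSum W p.1 - signedSum W p.2‖ ≤ a ∧
        ‖∑ i ∈ agreeSet p, rsign (p.1 i) • δ i‖ ≤ b) ×ˢ (Finset.univ : Finset Bool)).card ≤
      (Finset.univ.filter fun ε => ‖signedSum V ε‖ ≤ a + b + K).card := by
    refine Finset.card_le_card_of_injOn (fun q => interleave q.1.1 q.1.2 q.2) ?_
      interleave_injective.injOn
    rintro ⟨⟨s, t⟩, l⟩ hq
    simp only [Finset.coe_product, Finset.coe_filter, Finset.mem_univ, true_and, Finset.coe_univ,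
      Set.mem_prod, Set.mem_ofPred_eq, Set.mem_univ, and_true] at hq ⊢
    rw [signedSum_interleave]
    refine (norm_add₃_le).trans ?_
    rw [norm_rsign_smul]
    exact add_le_add (add_le_add hq.1 hq.2) (hK _)
  rw [Finset.card_product, Finset.card_univ, Fintype.card_bool] at hinj
  rw [probDiffLe, probLe, Nat.card_eq_fintype_card, Fintype.card_subtype,
    Nat.card_eq_fintype_card, Fintype.card_subtype, div_mul_eq_mul_div,
    div_le_div_iff₀ (by positivity) (by positivity)]
  have hinj' : ((Finset.univ.filter fun p : (Fin m → Bool) × (Fin m → Bool) =>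
      ‖signedSum W p.1 - signedSum W p.2‖ ≤ a ∧
        ‖∑ i ∈ agreeSet p, rsign (p.1 i) • δ i‖ ≤ b).card : ℝ) * 2 ≤
      ((Finset.univ.filter fun ε => ‖signedSum V ε‖ ≤ a + b + K).card : ℝ) := by
    exact_mod_cast hinj
  have hpow : (2 : ℝ) ^ (2 * m + 1) = 2 * 4 ^ m := by
    rw [pow_succ, pow_mul]
    norm_num [mul_comm]
  rw [hpow, ← mul_assoc]
  refine mul_le_mul_of_nonneg_right ?_ (by positivity)
  linarith
end

section
/- For every integer d ≥ 1 and all reals a, K > 0 there exists a constant c > 0 (depending only on d, a, K) such that for every sequence W = (w_1, …, w_n) of n vectors in ℝ^d each of norm at most K, we have q_a(W) ≥ c · n^{−d/2}. -/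
lemma signedSum_cons {d n : ℕ} (V : Fin (n + 1) → EuclideanSpace ℝ (Fin d)) (b : Bool)
    (ε : Fin n → Bool) :
    signedSum V (Fin.cons b ε) = signedSum (fun i => V i.succ) ε + rsign b • V 0 := by
  simp [signedSum, Fin.sum_univ_succ, add_comm]

/-- The second moment of the signed sum, without the normalisation by `2 ^ n`. -/
lemma sum_norm_sq_signedSum {d n : ℕ} (V : Fin n → EuclideanSpace ℝ (Fin d)) :
    ∑ ε : Fin n → Bool, ‖signedSum V ε‖ ^ 2 = 2 ^ n * ∑ i, ‖V i‖ ^ 2 := by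
  induction n with
  | zero => simp [signedSum]
  | succ n ih =>
    rw [← (Fin.consEquiv (fun _ : Fin (n + 1) => Bool)).sum_comp, Fintype.sum_prod_type_right]
    have key : ∀ ε : Fin n → Bool,
        ∑ b : Bool, ‖signedSum V (Fin.consEquiv (fun _ : Fin (n + 1) => Bool) (b, ε))‖ ^ 2
          = 2 * (‖signedSum (fun i => V i.succ) ε‖ ^ 2 + ‖V 0‖ ^ 2) := by
      intro ε
      have h := parallelogram_law_with_norm ℝ (signedSum (fun i => V i.succ) ε) (V 0)
      simp only [Fin.consEquiv, Equiv.coe_fn_mk, Fintype.sum_bool, signedSum_cons]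
      simp only [rsign, if_true, Bool.false_eq_true, if_false, one_smul, neg_smul,
        ← sub_eq_add_neg]
      nlinarith [h]
    rw [Finset.sum_congr rfl (fun ε _ => key ε), ← Finset.mul_sum, Finset.sum_add_distrib,
      ih, Fin.sum_univ_succ]
    simp
    ring

/-- Markov's inequality: at least half of the sign vectors give a signed sum whose squared norm
is at most twice the bound `n K²` on the second moment. -/
lemma half_le_card_good {d n : ℕ} (hn : 0 < n) {K : ℝ} (hK : 0 < K)
    (V : Fin n → EuclideanSpace ℝ (Fin d)) (hV : ∀ i, ‖V i‖ ≤ K) :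
    (2 : ℝ) ^ n / 2 ≤
      ((Finset.univ.filter fun ε : Fin n → Bool => ‖signedSum V ε‖ ^ 2 ≤ 2 * n * K ^ 2).card : ℝ)
      := by
  classical
  set G := Finset.univ.filter fun ε : Fin n → Bool => ‖signedSum V ε‖ ^ 2 ≤ 2 * n * K ^ 2
    with hG
  set B := Finset.univ.filter fun ε : Fin n → Bool => ¬ ‖signedSum V ε‖ ^ 2 ≤ 2 * n * K ^ 2
    with hB
  have hcard : (G.card : ℝ) + B.card = 2 ^ n := by
    have := Finset.card_filter_add_card_filter_not (s := (Finset.univ : Finset (Fin n → Bool)))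
      (fun ε => ‖signedSum V ε‖ ^ 2 ≤ 2 * n * K ^ 2)
    rw [← hG, ← hB] at this
    have h2 : G.card + B.card = 2 ^ n := by simpa using this
    exact_mod_cast h2
  have hpos : (0 : ℝ) < n * K ^ 2 := by positivity
  have h1 : (B.card : ℝ) * (2 * n * K ^ 2) ≤ ∑ ε ∈ B, ‖signedSum V ε‖ ^ 2 := by
    rw [← nsmul_eq_mul]
    apply Finset.card_nsmul_le_sum
    intro ε hε
    exact (not_le.mp (Finset.mem_filter.mp hε).2).le
  have h2 : ∑ ε ∈ B, ‖signedSum V ε‖ ^ 2 ≤ ∑ ε : Fin n → Bool, ‖signedSum V ε‖ ^ 2 :=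
    Finset.sum_le_sum_of_subset_of_nonneg (Finset.subset_univ _) (fun _ _ _ => by positivity)
  have h3 : ∑ i, ‖V i‖ ^ 2 ≤ n * K ^ 2 := by
    calc ∑ i, ‖V i‖ ^ 2 ≤ ∑ _i : Fin n, K ^ 2 :=
          Finset.sum_le_sum fun i _ => pow_le_pow_left₀ (norm_nonneg _) (hV i) 2
      _ = n * K ^ 2 := by simp
  rw [sum_norm_sq_signedSum] at h2
  have h4 : (2 : ℝ) ^ n * ∑ i, ‖V i‖ ^ 2 ≤ 2 ^ n * (n * K ^ 2) := by gcongr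
  have h5 : (B.card : ℝ) * 2 ≤ 2 ^ n := by
    refine le_of_mul_le_mul_right ?_ hpos
    linarith
  linarith

/-- Collision form of Cauchy–Schwarz: a map from `G` to `T` has at least `|G|² / |T|` pairs of
points with the same image. -/
lemma sq_card_le_card_mul_card_pairs {α β : Type*} [DecidableEq α] [DecidableEq β]
    (G : Finset α) (T : Finset β) (f : α → β) (hf : ∀ x ∈ G, f x ∈ T) :
    (G.card : ℝ) ^ 2 ≤
      T.card * (((G ×ˢ G).filter fun p => f p.1 = f p.2).card : ℝ) := by
  have h1 : G.card = ∑ t ∈ T, (G.filter fun x => f x = t).card :=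
    Finset.card_eq_sum_card_fiberwise hf
  have h2 : ((G ×ˢ G).filter fun p => f p.1 = f p.2).card
      = ∑ t ∈ T, (G.filter fun x => f x = t).card ^ 2 := by
    rw [Finset.card_eq_sum_card_fiberwise (f := fun p => f p.1) (t := T)]
    · refine Finset.sum_congr rfl fun t _ => ?_
      rw [sq, ← Finset.card_product]
      congr 1
      ext p
      simp only [Finset.mem_filter, Finset.mem_product]
      grind
    · intro p hp
      simp only [Finset.coe_filter, Finset.mem_product, Set.mem_ofPred_eq] at hp
      exact hf _ hp.1.1
  rw [h2, h1]
  push_cast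
  exact sq_sum_le_card_mul_sum_sq

/-- Index of the half-open cube of side `s` containing `x`. -/
noncomputable def cubeIndex {d : ℕ} (s : ℝ) (x : EuclideanSpace ℝ (Fin d)) : Fin d → ℤ :=
  fun j => ⌊x j / s⌋

lemma norm_sub_le_of_cubeIndex_eq {d : ℕ} (hd : 1 ≤ d) {a : ℝ} (ha : 0 < a)
    {x y : EuclideanSpace ℝ (Fin d)}
    (h : cubeIndex (a / √d) x = cubeIndex (a / √d) y) : ‖x - y‖ ≤ a := by
  have hd0 : (0 : ℝ) < d := by exact_mod_cast hd
  have hs : 0 < a / √(d : ℝ) := by positivity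
  have hcoord : ∀ j, ‖(x - y) j‖ ^ 2 ≤ a ^ 2 / d := by
    intro j
    have h1 := Int.abs_sub_lt_one_of_floor_eq_floor (congrFun h j)
    rw [← sub_div, abs_div, abs_of_pos hs, div_lt_one hs] at h1
    calc ‖(x - y) j‖ ^ 2 = |x j - y j| ^ 2 := by simp
      _ ≤ (a / √d) ^ 2 := by gcongr
      _ = a ^ 2 / d := by rw [div_pow, Real.sq_sqrt hd0.le]
  refine le_of_sq_le_sq ?_ ha.le
  rw [EuclideanSpace.norm_sq_eq]
  calc ∑ j, ‖(x - y) j‖ ^ 2 ≤ ∑ _j : Fin d, a ^ 2 / d := Finset.sum_le_sum fun j _ => hcoord j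
    _ = a ^ 2 := by simp; field_simp

lemma cubeIndex_mem {d : ℕ} {s R : ℝ} (hs : 0 < s) {x : EuclideanSpace ℝ (Fin d)}
    (hx : ‖x‖ ≤ R) :
    cubeIndex s x ∈ Fintype.piFinset fun _ : Fin d => Finset.Icc (-⌈R / s⌉) ⌈R / s⌉ := by
  rw [Fintype.mem_piFinset]
  intro j
  have h1 : |x j| ≤ R := (by simpa using PiLp.norm_apply_le x j : |x j| ≤ ‖x‖).trans hx
  obtain ⟨h2, h3⟩ := abs_le.mp h1
  have hceil := Int.le_ceil (R / s)
  rw [Finset.mem_Icc]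
  constructor
  · rw [cubeIndex, Int.le_floor]
    push_cast
    have : -(R / s) ≤ x j / s := by rw [← neg_div]; gcongr
    linarith
  · have h4 : x j / s ≤ R / s := by gcongr
    have h5 : ((⌊x j / s⌋ : ℤ) : ℝ) ≤ (⌈R / s⌉ : ℤ) := (Int.floor_le _).trans (h4.trans hceil)
    exact_mod_cast h5

lemma card_cubes_le {d : ℕ} {s R : ℝ} (hs : 0 < s) (hR : 0 ≤ R) :
    ((Fintype.piFinset fun _ : Fin d => Finset.Icc (-⌈R / s⌉) ⌈R / s⌉).card : ℝ)
      ≤ (2 * (R / s) + 3) ^ d := by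
  have h0 : 0 ≤ ⌈R / s⌉ := Int.ceil_nonneg (by positivity)
  rw [Fintype.card_piFinset]
  simp only [Finset.prod_const, Finset.card_univ, Fintype.card_fin, Int.card_Icc]
  push_cast
  gcongr
  have h1 : (((⌈R / s⌉ + 1 - -⌈R / s⌉).toNat : ℤ) : ℝ) = 2 * ⌈R / s⌉ + 1 := by
    rw [Int.toNat_of_nonneg (by omega)]
    push_cast
    ring
  have h2 := Int.ceil_lt_add_one (R / s)
  have h3 : (((⌈R / s⌉ + 1 - -⌈R / s⌉).toNat : ℕ) : ℝ) = 2 * ⌈R / s⌉ + 1 := by exact_mod_cast h1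
  linarith

/-- Lemma 2.3: for every `d ≥ 1` and reals `a, K > 0` there is `c > 0` (depending only on
`d, a, K`) such that for every sequence `W` of `n` vectors in `ℝ^d` of norm at most `K`,
we have `q_a(W) ≥ c · n^{−d/2}`. -/
theorem stmt_5 (d : ℕ) (hd : 1 ≤ d) (a K : ℝ) (ha : 0 < a) (hK : 0 < K) :
    ∃ c : ℝ, 0 < c ∧
      ∀ n : ℕ, ∀ W : Fin n → EuclideanSpace ℝ (Fin d),
        (∀ i, ‖W i‖ ≤ K) →
        c / (n : ℝ) ^ ((d : ℝ) / 2) ≤ probDiffLe W a := by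
  classical
  have hd0 : (0 : ℝ) < d := by exact_mod_cast hd
  set s : ℝ := a / √(d : ℝ) with hs_def
  have hs : 0 < s := by positivity
  set C : ℝ := 2 * (K * √2 / s) + 3 with hC_def
  have hC : 0 < C := by positivity
  refine ⟨1 / (4 * C ^ d), by positivity, ?_⟩
  intro n W hW
  rcases Nat.eq_zero_or_pos n with rfl | hn
  -- For `n = 0` the left-hand side is a division by `0 ^ (d / 2) = 0`, hence `0`.
  · rw [Nat.cast_zero, Real.zero_rpow (by positivity), div_zero]
    unfold probDiffLe
    positivity
  have hn1 : (1 : ℝ) ≤ n := by exact_mod_cast hn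
  have hsn : 1 ≤ √(n : ℝ) := Real.one_le_sqrt.mpr hn1
  set R : ℝ := K * √2 * √n with hR_def
  have hR : 0 ≤ R := by positivity
  set G := Finset.univ.filter fun ε : Fin n → Bool => ‖signedSum W ε‖ ^ 2 ≤ 2 * n * K ^ 2
    with hG
  set T := Fintype.piFinset fun _ : Fin d => Finset.Icc (-⌈R / s⌉) ⌈R / s⌉ with hT
  have hGcard : (2 : ℝ) ^ n / 2 ≤ G.card := half_le_card_good hn hK W hW
  have hmem : ∀ ε ∈ G, cubeIndex s (signedSum W ε) ∈ T := by
    intro ε hε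
    refine cubeIndex_mem hs (le_of_sq_le_sq ?_ hR)
    refine (Finset.mem_filter.mp hε).2.trans_eq ?_
    rw [hR_def, mul_pow, mul_pow, Real.sq_sqrt (by norm_num), Real.sq_sqrt (by positivity)]
    ring
  have hCS := sq_card_le_card_mul_card_pairs G T (fun ε => cubeIndex s (signedSum W ε)) hmem
  set P := (G ×ˢ G).filter fun p =>
    cubeIndex s (signedSum W p.1) = cubeIndex s (signedSum W p.2) with hP
  have hTcard : (T.card : ℝ) ≤ C ^ d * (n : ℝ) ^ ((d : ℝ) / 2) := by
    have hpow : (n : ℝ) ^ ((d : ℝ) / 2) = √n ^ d := by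
      rw [Real.sqrt_eq_rpow, ← Real.rpow_natCast, ← Real.rpow_mul (by positivity)]
      congr 1
      ring
    rw [hpow, ← mul_pow]
    refine (card_cubes_le hs hR).trans ?_
    have : 2 * (R / s) + 3 ≤ C * √n := by
      have : 2 * (R / s) = 2 * (K * √2 / s) * √n := by rw [hR_def]; ring
      rw [this, hC_def, add_mul]
      linarith
    gcongr
  have hPcard : (P.card : ℝ) ≤ Nat.card {p : (Fin n → Bool) × (Fin n → Bool) //
      ‖signedSum W p.1 - signedSum W p.2‖ ≤ a} := by
    rw [Nat.card_eq_fintype_card, Fintype.card_subtype]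
    norm_cast
    refine Finset.card_le_card fun p hp => ?_
    rw [Finset.mem_filter]
    exact ⟨Finset.mem_univ _, norm_sub_le_of_cubeIndex_eq hd ha (Finset.mem_filter.mp hp).2⟩
  have hnpos : (0 : ℝ) < (n : ℝ) ^ ((d : ℝ) / 2) := by positivity
  unfold probDiffLe
  rw [div_div, div_le_div_iff₀ (by positivity) (by positivity)]
  have h4 : (4 : ℝ) ^ n = (2 ^ n) ^ 2 := by rw [← pow_mul, mul_comm, pow_mul]; norm_num
  have hsq : ((2 : ℝ) ^ n / 2) ^ 2 ≤ (G.card : ℝ) ^ 2 := by gcongr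
  have hfin : (T.card : ℝ) * P.card ≤ (C ^ d * (n : ℝ) ^ ((d : ℝ) / 2)) *
      Nat.card {p : (Fin n → Bool) × (Fin n → Bool) //
        ‖signedSum W p.1 - signedSum W p.2‖ ≤ a} := by gcongr
  rw [h4]
  linarith
end

section
/- For every integer d ≥ 1 and all reals a, K > 0 there exists a constant c > 0 (depending only on d, a, K) such that for every sequence W = (w_1, …, w_n) of n vectors in ℝ^d each of norm at most K, the sequence W̄ = (½(w_1+w_2), ½(w_3+w_4), …, ½(w_{2⌊n/2⌋−1}+w_{2⌊n/2⌋})) satisfies q_a(W̄) ≥ c · n^{−d/2}. -/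
/-- The second moment bound `E‖σ_V‖² ≤ m K²`, multiplied by the number `2 ^ m` of sign patterns.
The induction step is the parallelogram law. -/
lemma sum_norm_sq_signedSum_le {d : ℕ} (K : ℝ) : ∀ (m : ℕ) (V : Fin m → EuclideanSpace ℝ (Fin d)),
    (∀ i, ‖V i‖ ≤ K) → ∑ ε : Fin m → Bool, ‖signedSum V ε‖ ^ 2 ≤ 2 ^ m * (m * K ^ 2) := by
  intro m
  induction m with
  | zero => intro V _; simp [signedSum]
  | succ m ih =>
    intro V hV
    have h1 := ih (fun i => V i.succ) (fun i => hV _)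
    have h0 : ‖V 0‖ ^ 2 ≤ K ^ 2 := pow_le_pow_left₀ (norm_nonneg _) (hV 0) 2
    have hs : ∑ ε : Fin (m + 1) → Bool, ‖signedSum V ε‖ ^ 2
        = ∑ ε : Fin m → Bool, 2 * (‖V 0‖ ^ 2 + ‖signedSum (fun i => V i.succ) ε‖ ^ 2) := by
      rw [← (Fin.consEquiv (fun _ : Fin (m + 1) => Bool)).sum_comp, Fintype.sum_prod_type,
        Fintype.sum_bool, ← Finset.sum_add_distrib]
      refine Finset.sum_congr rfl fun ε _ => ?_
      have hp := parallelogram_law_with_norm ℝ (signedSum (fun i => V i.succ) ε) (V 0)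
      have e1 : signedSum V (Fin.cons true ε) = signedSum (fun i => V i.succ) ε + V 0 := by
        simp [signedSum, Fin.sum_univ_succ, rsign, add_comm]
      have e2 : signedSum V (Fin.cons false ε) = signedSum (fun i => V i.succ) ε - V 0 := by
        simp [signedSum, Fin.sum_univ_succ, rsign, sub_eq_add_neg, add_comm]
      simp only [Fin.consEquiv, Equiv.coe_fn_mk]
      rw [e1, e2]
      linarith
    rw [hs, ← Finset.mul_sum, Finset.sum_add_distrib]
    simp only [Finset.sum_const, Finset.card_univ, Fintype.card_fun, Fintype.card_bool,
      Fintype.card_fin, nsmul_eq_mul]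
    push_cast
    have : (2 : ℝ) ^ m * ‖V 0‖ ^ 2 ≤ 2 ^ m * K ^ 2 := by gcongr
    have e : (2 : ℝ) ^ (m + 1) * ((m + 1) * K ^ 2)
        = 2 * (2 ^ m * K ^ 2 + 2 ^ m * (m * K ^ 2)) := by ring
    rw [e]
    linarith

open Classical in
/-- Markov's inequality for `‖σ_V‖²`. -/
lemma half_le_card_small {d m : ℕ} (K R : ℝ) (V : Fin m → EuclideanSpace ℝ (Fin d))
    (hV : ∀ i, ‖V i‖ ≤ K) (hR : 0 < R) (hmR : 2 * (m * K ^ 2) ≤ R ^ 2) :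
    (2 : ℝ) ^ m / 2 ≤ ((Finset.univ.filter fun ε : Fin m → Bool => ‖signedSum V ε‖ ≤ R).card : ℝ) := by
  set S := Finset.univ.filter fun ε : Fin m → Bool => ‖signedSum V ε‖ ≤ R
  have h1 := sum_norm_sq_signedSum_le K m V hV
  have h2 : ((Sᶜ.card : ℕ) : ℝ) * R ^ 2 ≤ ∑ ε : Fin m → Bool, ‖signedSum V ε‖ ^ 2 := by
    calc ((Sᶜ.card : ℕ) : ℝ) * R ^ 2 = ∑ ε ∈ Sᶜ, R ^ 2 := by simp
      _ ≤ ∑ ε ∈ Sᶜ, ‖signedSum V ε‖ ^ 2 := by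
        refine Finset.sum_le_sum fun ε hε => ?_
        have : R < ‖signedSum V ε‖ := by simpa [S] using hε
        gcongr
      _ ≤ _ := Finset.sum_le_univ_sum_of_nonneg fun _ => by positivity
  have h3 : (S.card : ℝ) + (Sᶜ.card : ℝ) = 2 ^ m := by
    have := Finset.card_add_card_compl S
    simp only [Fintype.card_fun, Fintype.card_bool, Fintype.card_fin] at this
    exact_mod_cast this
  have h4 : (2 : ℝ) ^ m * (m * K ^ 2) ≤ 2 ^ m / 2 * R ^ 2 := by
    have : (0 : ℝ) < 2 ^ m := by positivity
    nlinarith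
  have h5 : (Sᶜ.card : ℝ) ≤ 2 ^ m / 2 :=
    le_of_mul_le_mul_right (h2.trans (h1.trans h4)) (by positivity)
  linarith

/-- Points in a common cell of the cubic grid of side `s` are at distance at most `s√d`. -/
lemma norm_sub_le_of_floor_eq {d : ℕ} {s a : ℝ} (hs : 0 < s) (ha : 0 < a)
    (hsa : d * s ^ 2 ≤ a ^ 2) (x y : EuclideanSpace ℝ (Fin d))
    (h : ∀ i, ⌊x i / s⌋ = ⌊y i / s⌋) : ‖x - y‖ ≤ a := by
  refine le_of_sq_le_sq ?_ ha.le
  rw [EuclideanSpace.real_norm_sq_eq]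
  refine le_trans ?_ hsa
  calc ∑ i, (x - y) i ^ 2 ≤ ∑ _i : Fin d, s ^ 2 := by
        refine Finset.sum_le_sum fun i _ => ?_
        have h1 := Int.abs_sub_lt_one_of_floor_eq_floor (h i)
        rw [← sub_div, abs_div, abs_of_pos hs, div_lt_one hs] at h1
        rw [PiLp.sub_apply, ← sq_abs]
        gcongr
    _ = d * s ^ 2 := by simp

/-- Quantitative pigeonhole: the number of ordered pairs in `S` with equal image is the sum of the
squared fibre sizes, so Cauchy–Schwarz bounds it below by `|S|² / |T|`. -/
lemma card_sq_le_card_mul_collisions {α β : Type*} [DecidableEq β]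
    (S : Finset α) (T : Finset β) (f : α → β) (hf : ∀ x ∈ S, f x ∈ T) :
    (S.card : ℝ) ^ 2 ≤ T.card * (((S ×ˢ S).filter fun p => f p.1 = f p.2).card : ℝ) := by
  have h1 : S.card = ∑ t ∈ T, (S.filter fun x => f x = t).card :=
    Finset.card_eq_sum_card_fiberwise hf
  have h2 : ((S ×ˢ S).filter fun p => f p.1 = f p.2).card
      = ∑ t ∈ T, (S.filter fun x => f x = t).card ^ 2 := by
    rw [Finset.card_eq_sum_card_fiberwise (f := fun p => f p.1) (t := T)]
    · refine Finset.sum_congr rfl fun t _ => ?_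
      rw [sq, ← Finset.card_product]
      congr 1
      ext p
      simp only [Finset.mem_filter, Finset.mem_product]
      grind
    · intro p hp
      simp only [Finset.coe_filter, Finset.mem_product, Set.mem_ofPred_eq] at hp
      exact hf _ hp.1.1
  rw [h2, h1]
  exact_mod_cast sq_sum_le_card_mul_sum_sq

/-- Bounds the number of unit grid intervals meeting `[-B, B]`. -/
lemma card_Icc_floor_le {B : ℝ} (hB : 0 ≤ B) :
    ((Finset.Icc ⌊-B⌋ ⌊B⌋).card : ℝ) ≤ 2 * B + 2 := by
  have h0 : ⌊-B⌋ ≤ ⌊B⌋ := Int.floor_mono (by linarith)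
  have h : ((Finset.Icc ⌊-B⌋ ⌊B⌋).card : ℤ) = ⌊B⌋ + 1 - ⌊-B⌋ := by
    rw [Int.card_Icc]; omega
  have h' : ((Finset.Icc ⌊-B⌋ ⌊B⌋).card : ℝ) = ⌊B⌋ + 1 - ⌊-B⌋ := by exact_mod_cast h
  rw [h']
  linarith [Int.floor_le B, Int.lt_floor_add_one (-B)]

open Classical in
/-- The quantitative form of the theorem, for an arbitrary sequence of at most `n` vectors. -/
lemma probDiffLe_lower {d m n : ℕ} (hd : 1 ≤ d) (hn : 1 ≤ n) (hmn : m ≤ n) {a K : ℝ}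
    (ha : 0 < a) (hK : 0 < K) (V : Fin m → EuclideanSpace ℝ (Fin d)) (hV : ∀ i, ‖V i‖ ≤ K) :
    1 / 4 ≤ ((4 * K * √d / a + 2) * √n) ^ d * probDiffLe V a := by
  have hd0 : (0 : ℝ) < d := by exact_mod_cast hd
  have hn1 : (1 : ℝ) ≤ √n := Real.one_le_sqrt.2 (by exact_mod_cast hn)
  have hsd : 0 < √(d : ℝ) := Real.sqrt_pos.2 hd0
  set R := 2 * K * √n with hRdef
  have hR : 0 < R := by positivity
  set s := a / √d with hsdef
  have hs : 0 < s := by positivity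
  have hmn' : (m : ℝ) ≤ n := by exact_mod_cast hmn
  have hmR : 2 * (m * K ^ 2) ≤ R ^ 2 := by
    have : R ^ 2 = 4 * K ^ 2 * n := by
      rw [hRdef, mul_pow, Real.sq_sqrt (by positivity)]; ring
    rw [this]
    have : (m : ℝ) * K ^ 2 ≤ n * K ^ 2 := by gcongr
    have : 0 ≤ (n : ℝ) * K ^ 2 := by positivity
    linarith
  have hS := half_le_card_small K R V hV hR hmR
  set S := Finset.univ.filter fun ε : Fin m → Bool => ‖signedSum V ε‖ ≤ R with hSdef
  let T : Finset (Fin d → ℤ) := Fintype.piFinset fun _ => Finset.Icc ⌊-(R / s)⌋ ⌊R / s⌋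
  let f : (Fin m → Bool) → (Fin d → ℤ) := fun ε i => ⌊signedSum V ε i / s⌋
  have hf : ∀ ε ∈ S, f ε ∈ T := by
    intro ε hε
    have hε' : ‖signedSum V ε‖ ≤ R := by simpa [hSdef] using hε
    rw [Fintype.mem_piFinset]
    intro i
    have hi := abs_le.1 ((PiLp.norm_apply_le (signedSum V ε) i).trans hε')
    rw [Finset.mem_Icc]
    refine ⟨Int.floor_mono ?_, Int.floor_mono ?_⟩
    · rw [← neg_div]; gcongr; exact hi.1
    · gcongr; exact hi.2
  have hcs := card_sq_le_card_mul_collisions S T f hf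
  have hT : (T.card : ℝ) ≤ ((4 * K * √d / a + 2) * √n) ^ d := by
    have hc : T.card = (Finset.Icc ⌊-(R / s)⌋ ⌊R / s⌋).card ^ d := by
      simp [T, Fintype.card_piFinset]
    rw [hc]
    push_cast
    gcongr
    refine (card_Icc_floor_le (by positivity)).trans ?_
    have : R / s = 2 * K * √d / a * √n := by rw [hRdef, hsdef]; field_simp
    rw [this]
    have e : (4 * K * √d / a + 2) * √n = 2 * (2 * K * √d / a * √n) + 2 * √n := by ring
    rw [e]
    linarith
  have hcol : (((S ×ˢ S).filter fun p => f p.1 = f p.2).card : ℝ) ≤ 4 ^ m * probDiffLe V a := by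
    rw [probDiffLe, mul_div_cancel₀ _ (by positivity), Nat.card_eq_fintype_card,
      Fintype.card_subtype]
    norm_cast
    refine Finset.card_le_card fun p hp => ?_
    rw [Finset.mem_filter] at hp ⊢
    refine ⟨Finset.mem_univ _, norm_sub_le_of_floor_eq hs ha ?_ _ _ fun i => congrFun hp.2 i⟩
    rw [hsdef, div_pow, Real.sq_sqrt hd0.le]
    exact (mul_div_cancel₀ _ hd0.ne').le
  have hS2 : (2 ^ m / 2 : ℝ) ^ 2 ≤ (S.card : ℝ) ^ 2 := by gcongr
  have h4 : ((2 : ℝ) ^ m / 2) ^ 2 = 4 ^ m * (1 / 4) := by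
    rw [div_pow, ← pow_mul, mul_comm m 2, pow_mul]; norm_num; ring
  have hfin : (4 : ℝ) ^ m * (1 / 4)
      ≤ 4 ^ m * (((4 * K * √d / a + 2) * √n) ^ d * probDiffLe V a) := by
    rw [← h4]
    refine hS2.trans (hcs.trans ?_)
    calc _ ≤ ((4 * K * √d / a + 2) * √n) ^ d * (4 ^ m * probDiffLe V a) := by gcongr
      _ = _ := by ring
  exact le_of_mul_le_mul_left hfin (by positivity)

/-- Corollary 2.4: for every `d ≥ 1` and reals `a, K > 0` there is `c > 0` (depending only
on `d, a, K`) such that for every sequence `W` of `n` vectors in `ℝ^d` of norm at most `K`,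
the averaged sequence `W̄ = (½(w₁+w₂), ½(w₃+w₄), …, ½(w_{2⌊n/2⌋−1}+w_{2⌊n/2⌋}))`
satisfies `q_a(W̄) ≥ c · n^{−d/2}`. -/
theorem stmt_6 (d : ℕ) (hd : 1 ≤ d) (a K : ℝ) (ha : 0 < a) (hK : 0 < K) :
    ∃ c : ℝ, 0 < c ∧
      ∀ n : ℕ, ∀ W : Fin n → EuclideanSpace ℝ (Fin d),
        (∀ i, ‖W i‖ ≤ K) →
        c / (n : ℝ) ^ ((d : ℝ) / 2) ≤
          probDiffLe (fun i : Fin (n / 2) =>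
            (1 / 2 : ℝ) • (W ⟨2 * i.1, by have := i.2; omega⟩
              + W ⟨2 * i.1 + 1, by have := i.2; omega⟩)) a := by
  set C : ℝ := 4 * K * √d / a + 2 with hC
  have hC0 : 0 < C := by positivity
  refine ⟨1 / (4 * C ^ d), by positivity, fun n W hW => ?_⟩
  have hd0 : (d : ℝ) / 2 ≠ 0 := by positivity
  rcases Nat.eq_zero_or_pos n with rfl | hn
  -- Here `0 ^ (d / 2) = 0`, so the left-hand side is a division by zero, with value `0`.
  · rw [Nat.cast_zero, Real.zero_rpow hd0, div_zero, probDiffLe]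
    positivity
  · have hn0 : (0 : ℝ) < n := by exact_mod_cast hn
    have hpow : (n : ℝ) ^ ((d : ℝ) / 2) = √n ^ d := by
      rw [Real.sqrt_eq_rpow, ← Real.rpow_natCast, ← Real.rpow_mul hn0.le]
      congr 1; ring
    have hsn : 0 < √(n : ℝ) := Real.sqrt_pos.2 hn0
    have key := probDiffLe_lower hd hn (Nat.div_le_self n 2) ha hK
      (fun i : Fin (n / 2) =>
            (1 / 2 : ℝ) • (W ⟨2 * i.1, by have := i.2; omega⟩
              + W ⟨2 * i.1 + 1, by have := i.2; omega⟩)) (fun i => by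
        rw [norm_smul, Real.norm_of_nonneg (by norm_num)]
        have h1 := norm_add_le (W ⟨2 * i.1, by have := i.2; omega⟩)
          (W ⟨2 * i.1 + 1, by have := i.2; omega⟩)
        have h2 := hW ⟨2 * i.1, by have := i.2; omega⟩
        have h3 := hW ⟨2 * i.1 + 1, by have := i.2; omega⟩
        linarith)
    rw [← hC, mul_pow] at key
    rw [hpow, div_div, div_le_iff₀ (by positivity)]
    linarith
end
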